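/- arXiv:1206.1472 — 3 statements merged into one kernel-verified Lean document; each statement's English description precedes it below -/
import Mathlib

section
/- (Restriction under the h-process.) Assume the block-diagonal hypothesis (H1'), fix j ∈ {1,…,N}, and let (ρ_n, X_n)_{n≥0} be the quantum trajectory process under ℙ_ρ started from a density matrix ρ with p_0^{(j)} = Tr(P_j ρ) > 0. The processes p_n^{(j)} = Tr(P_j ρ_n) form a bounded martingale converging a.s. and in L¹ to a limit p_∞^{(j)}; define the tilted probability measure ℙ_ρ^{(j)} = (p_∞^{(j)} / p_0^{(j)}) ℙ_ρ (equivalently, its restriction to F_n has density p_n^{(j)}/p_0^{(j)} with respect to ℙ_ρ). Then under ℙ_ρ^{(j)}, the process ( ρ_n^{(j)} / Tr(ρ_n^{(j)}), X_n )_{n≥0}, where ρ_n^{(j)} = P_j ρ_n P_j, is the quantum trajectory process associated to the family of operators A_i^{(j)} = A_i P_j on E_j, started from the state ρ^{(j)}/Tr(ρ^{(j)}): that is, for every n and every i ∈ {1,…,2d}, ℙ_ρ^{(j)}(X_{n+1} = X_n + e_i | F_n) = Tr( A_i^{(j)} ρ̃_n^{(j)} A_i^{(j)*} ) where ρ̃_n^{(j)}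 = ρ_n^{(j)}/Tr(ρ_n^{(j)}), and on that event ρ̃_{n+1}^{(j)} = A_i^{(j)} ρ̃_n^{(j)} A_i^{(j)*} / Tr( A_i^{(j)} ρ̃_n^{(j)} A_i^{(j)*} ) almost surely. -/
open MeasureTheory Filter Matrix Finset
open scoped ComplexOrder

noncomputable section

/-- The direction vectors `e_1, …, e_{2d}` in `ℤ^d`, with `e_{d+j} = -e_j`. -/
def dir (d : ℕ) (i : Fin (2 * d)) : Fin d → ℤ :=
  fun j => if (i : ℕ) < d then (if (j : ℕ) = (i : ℕ) then 1 else 0)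
           else (if (j : ℕ) = (i : ℕ) - d then -1 else 0)

/-- The direction vectors viewed in `ℝ^d`. -/
def dirR (d : ℕ) (i : Fin (2 * d)) : Fin d → ℝ := fun j => (dir d i j : ℝ)

instance {k : ℕ} : MeasurableSpace (Matrix (Fin k) (Fin k) ℂ) := MeasurableSpace.pi

/-- A density matrix: positive semidefinite with trace one. -/
def IsDensity {k : ℕ} (ρ : Matrix (Fin k) (Fin k) ℂ) : Prop := ρ.PosSemidef ∧ ρ.trace = 1

/-- The quantum trajectory process of the open quantum random walk. -/
structure IsQTraj {k d : ℕ} {Ω : Type} {mΩ : MeasurableSpace Ω}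
    (A : Fin (2 * d) → Matrix (Fin k) (Fin k) ℂ)
    (μ : Measure Ω) (ℱ : Filtration ℕ mΩ)
    (ρ : ℕ → Ω → Matrix (Fin k) (Fin k) ℂ)
    (X : ℕ → Ω → Fin d → ℤ) : Prop where
  density : ∀ n, ∀ᵐ ω ∂μ, IsDensity (ρ n ω)
  adapted_ρ : ∀ n, Measurable[ℱ n] (ρ n)
  adapted_X : ∀ n, Measurable[ℱ n] (X n)
  prob : ∀ (n : ℕ) (j : Fin (2 * d)),
    μ[(fun ω => if X (n + 1) ω = X n ω + dir d j then (1 : ℝ) else 0) | ℱ n]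
      =ᵐ[μ] fun ω => ((A j * ρ n ω * (A j)ᴴ).trace).re
  update : ∀ (n : ℕ) (j : Fin (2 * d)), ∀ᵐ ω ∂μ,
    X (n + 1) ω = X n ω + dir d j →
      ρ (n + 1) ω = ((A j * ρ n ω * (A j)ᴴ).trace)⁻¹ • (A j * ρ n ω * (A j)ᴴ)

instance instBorelMatAux {k : ℕ} : BorelSpace (Matrix (Fin k) (Fin k) ℂ) :=
  inferInstanceAs (BorelSpace (Fin k → Fin k → ℂ))

lemma aux_trace_re {k : ℕ} {M : Matrix (Fin k) (Fin k) ℂ} (hM : M.PosSemidef) :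
    M.trace = ((M.trace.re : ℝ) : ℂ) := by
  have h := hM.trace_nonneg
  rw [Complex.le_def] at h
  apply Complex.ext
  · simp
  · simpa using h.2.symm

lemma aux_re_nonneg {k : ℕ} {M : Matrix (Fin k) (Fin k) ℂ} (hM : M.PosSemidef) :
    0 ≤ M.trace.re := by
  have h := hM.trace_nonneg
  rw [Complex.le_def] at h
  simpa using h.1

lemma aux_trace_proj {k : ℕ} {P : Matrix (Fin k) (Fin k) ℂ} (hid : P * P = P)
    (M : Matrix (Fin k) (Fin k) ℂ) : (P * M * P).trace = (P * M).trace := by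
  rw [Matrix.trace_mul_comm, ← Matrix.mul_assoc, hid]

lemma aux_psd_proj {k : ℕ} {P : Matrix (Fin k) (Fin k) ℂ} (hsa : Pᴴ = P)
    {M : Matrix (Fin k) (Fin k) ℂ} (hM : M.PosSemidef) : (P * M * P).PosSemidef := by
  have := hM.mul_mul_conjTranspose_same P
  rwa [hsa] at this

lemma aux_proj_nonneg {k : ℕ} {P : Matrix (Fin k) (Fin k) ℂ} (hsa : Pᴴ = P) (hid : P * P = P)
    {M : Matrix (Fin k) (Fin k) ℂ} (hM : M.PosSemidef) : 0 ≤ (P * M).trace.re := by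
  rw [← aux_trace_proj hid]
  exact aux_re_nonneg (aux_psd_proj hsa hM)

lemma aux_proj_le {k : ℕ} {P : Matrix (Fin k) (Fin k) ℂ} (hsa : Pᴴ = P) (hid : P * P = P)
    {M : Matrix (Fin k) (Fin k) ℂ} (hM : M.PosSemidef) : (P * M).trace.re ≤ M.trace.re := by
  have h := aux_proj_nonneg (P := 1 - P) (by simp [hsa])
    (by simp [Matrix.sub_mul, Matrix.mul_sub, hid]) hM
  simp [Matrix.sub_mul] at h
  linarith

lemma aux_kraus_le {k m : ℕ} (A : Fin m → Matrix (Fin k) (Fin k) ℂ)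
    (hA : ∑ j, (A j)ᴴ * A j = 1) {M : Matrix (Fin k) (Fin k) ℂ} (hM : M.PosSemidef) (i : Fin m) :
    (A i * M * (A i)ᴴ).trace.re ≤ M.trace.re := by
  have h : ∑ i, (A i * M * (A i)ᴴ).trace.re = M.trace.re := by
    have : ∀ i, (A i * M * (A i)ᴴ).trace = ((A i)ᴴ * A i * M).trace := by
      intro i
      rw [Matrix.trace_mul_comm, ← Matrix.mul_assoc]
    simp_rw [this]
    rw [← Complex.re_sum, ← Matrix.trace_sum, ← Finset.sum_mul, hA, Matrix.one_mul]
  rw [← h]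
  exact Finset.single_le_sum (f := fun i => (A i * M * (A i)ᴴ).trace.re)
    (fun i _ => aux_re_nonneg (hM.mul_mul_conjTranspose_same (A i))) (Finset.mem_univ i)

lemma aux_block {k : ℕ} {P A : Matrix (Fin k) (Fin k) ℂ} (hsa : Pᴴ = P)
    (hcomm : P * A = A * P) (M : Matrix (Fin k) (Fin k) ℂ) :
    A * (P * M * P) * Aᴴ = P * (A * M * Aᴴ) * P := by
  have h2 : Aᴴ * P = P * Aᴴ := by
    have := congrArg conjTranspose hcomm
    simpa [hsa] using this
  calc A * (P * M * P) * Aᴴ = (A * P) * M * (P * Aᴴ) := by simp only [Matrix.mul_assoc]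
    _ = _ := by rw [← hcomm, ← h2]; simp only [Matrix.mul_assoc]

lemma aux_block2 {k : ℕ} {P A : Matrix (Fin k) (Fin k) ℂ} (hsa : Pᴴ = P) (hid : P * P = P)
    (hcomm : P * A = A * P) (M : Matrix (Fin k) (Fin k) ℂ) :
    (A * P) * (P * M * P) * (A * P)ᴴ = P * (A * M * Aᴴ) * P := by
  rw [← aux_block hsa hcomm, conjTranspose_mul, hsa]
  calc A * P * (P * M * P) * (P * Aᴴ) = A * ((P * P) * M * (P * P)) * Aᴴ := by
        simp only [Matrix.mul_assoc]
    _ = _ := by rw [hid]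

lemma aux_norm {k : ℕ} (M : Matrix (Fin k) (Fin k) ℂ) {a : ℂ} (ha : a ≠ 0) :
    ((a • M).trace)⁻¹ • (a • M) = (M.trace)⁻¹ • M := by
  rw [Matrix.trace_smul, smul_smul, smul_eq_mul, mul_inv]
  congr 1
  field_simp

lemma aux_condExp_mul {Ω : Type} {m mΩ : MeasurableSpace Ω} (hm : m ≤ mΩ) {μ : Measure Ω}
    [IsProbabilityMeasure μ] {f g g' : Ω → ℝ} (hf : StronglyMeasurable[m] f)
    (hb : ∀ᵐ ω ∂μ, |f ω| ≤ 1) (hg : Integrable g μ) (hg' : μ[g | m] =ᵐ[μ] g') :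
    ∫ ω, f ω * g ω ∂μ = ∫ ω, f ω * g' ω ∂μ := by
  have hfg : Integrable (f * g) μ := by
    refine hg.bdd_mul (c := 1) (hf.mono hm).aestronglyMeasurable ?_
    simpa [Real.norm_eq_abs] using hb
  have h := condExp_mul_of_stronglyMeasurable_left hf hfg hg
  have h2 : ∫ ω, (μ[f * g | m]) ω ∂μ = ∫ ω, (f * g) ω ∂μ := integral_condExp hm
  calc ∫ ω, f ω * g ω ∂μ = ∫ ω, (μ[f * g | m]) ω ∂μ := h2.symm
    _ = _ := by
      apply integral_congr_ae
      filter_upwards [h, hg'] with ω h1 h2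
      rw [h1, Pi.mul_apply, h2]

/-- Abstract tilting: `p` is the bounded martingale closed by `pinf`. -/
lemma aux_closed {Ω : Type} {mΩ : MeasurableSpace Ω} {μ : Measure Ω} [IsProbabilityMeasure μ]
    {ℱ : Filtration ℕ mΩ} {p : ℕ → Ω → ℝ} {pinf : Ω → ℝ} (hmart : Martingale p ℱ μ)
    (hp0 : ∀ n, ∀ᵐ ω ∂μ, 0 ≤ p n ω) (hp1 : ∀ n, ∀ᵐ ω ∂μ, p n ω ≤ 1)
    (has : ∀ᵐ ω ∂μ, Tendsto (fun n => p n ω) atTop (nhds (pinf ω))) :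
    Integrable pinf μ ∧ (∀ᵐ ω ∂μ, 0 ≤ pinf ω) ∧ ∀ n, μ[pinf | ℱ n] =ᵐ[μ] p n := by
  have hpm : ∀ n, AEStronglyMeasurable (p n) μ := fun n => (hmart.integrable n).1
  have hm : AEStronglyMeasurable pinf μ := aestronglyMeasurable_of_tendsto_ae atTop hpm has
  have h0 : ∀ᵐ ω ∂μ, 0 ≤ pinf ω := by
    filter_upwards [has, ae_all_iff.2 hp0] with ω h1 h2
    exact ge_of_tendsto' h1 h2
  have h1 : ∀ᵐ ω ∂μ, pinf ω ≤ 1 := by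
    filter_upwards [has, ae_all_iff.2 hp1] with ω h1 h2
    exact le_of_tendsto' h1 h2
  have hint : Integrable pinf μ := by
    refine Integrable.of_bound hm 1 ?_
    filter_upwards [h0, h1] with ω a b
    rw [Real.norm_eq_abs, abs_of_nonneg a]; exact b
  refine ⟨hint, h0, fun n => ?_⟩
  symm
  refine ae_eq_condExp_of_forall_setIntegral_eq (ℱ.le n) hint
    (fun s _ _ => (hmart.integrable n).integrableOn) ?_
    (hmart.stronglyMeasurable n).aestronglyMeasurable
  intro s hs _
  have ht : Tendsto (fun m => ∫ ω in s, p m ω ∂μ) atTop (nhds (∫ ω in s, pinf ω ∂μ)) := by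
    refine tendsto_integral_of_dominated_convergence (fun _ => 1) (fun m => (hpm m).restrict)
      (integrable_const _) (fun m => ?_) (ae_restrict_of_ae has)
    apply ae_restrict_of_ae
    filter_upwards [hp0 m, hp1 m] with ω a b
    rw [Real.norm_eq_abs, abs_of_nonneg a]; exact b
  have hc : Tendsto (fun m => ∫ ω in s, p m ω ∂μ) atTop (nhds (∫ ω in s, p n ω ∂μ)) := by
    refine tendsto_const_nhds.congr' ?_
    filter_upwards [eventually_ge_atTop n] with m hm
    exact hmart.setIntegral_eq hm hs
  exact tendsto_nhds_unique hc ht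

lemma aux_int {Ω : Type} {mΩ : MeasurableSpace Ω} {μ : Measure Ω}
    {pinf : Ω → ℝ} (hint : Integrable pinf μ) (h0 : ∀ᵐ ω ∂μ, 0 ≤ pinf ω) {c : ℝ} (hc : 0 < c)
    (f : Ω → ℝ) :
    ∫ ω, f ω ∂(μ.withDensity (fun ω => ENNReal.ofReal (pinf ω / c))) =
      c⁻¹ * ∫ ω, f ω * pinf ω ∂μ := by
  rw [integral_withDensity_eq_integral_toReal_smul₀]
  · rw [← integral_const_mul]
    apply integral_congr_ae
    filter_upwards [h0] with ω h
    rw [ENNReal.toReal_ofReal (by positivity), smul_eq_mul]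
    ring
  · exact (hint.1.aemeasurable.div_const c).ennreal_ofReal
  · exact ae_of_all _ fun _ => ENNReal.ofReal_lt_top

lemma aux_tilt {Ω : Type} {mΩ : MeasurableSpace Ω} {μ : Measure Ω} [IsProbabilityMeasure μ]
    {ℱ : Filtration ℕ mΩ} {p : ℕ → Ω → ℝ} {pinf : Ω → ℝ} (hmart : Martingale p ℱ μ)
    (hp0 : ∀ n, ∀ᵐ ω ∂μ, 0 ≤ p n ω)
    (hint : Integrable pinf μ) (h0 : ∀ᵐ ω ∂μ, 0 ≤ pinf ω)
    (hcl : ∀ n, μ[pinf | ℱ n] =ᵐ[μ] p n)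
    {c : ℝ} (hc : 0 < c) (hpc : ∀ ω, p 0 ω = c)
    {μj : Measure Ω} (hμj : μj = μ.withDensity (fun ω => ENNReal.ofReal (pinf ω / c))) :
    IsProbabilityMeasure μj ∧ (∀ n, ∀ᵐ ω ∂μj, p n ω ≠ 0) ∧
    ∀ (n : ℕ) (D t y : Ω → ℝ), StronglyMeasurable[ℱ (n+1)] D → (∀ ω, D ω = 0 ∨ D ω = 1) →
      StronglyMeasurable[ℱ n] t → StronglyMeasurable[ℱ n] y →
      μ[D | ℱ n] =ᵐ[μ] t → (∀ᵐ ω ∂μ, 0 ≤ y ω ∧ y ω ≤ t ω ∧ y ω ≤ p n ω) →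
      (∀ᵐ ω ∂μ, D ω = 1 → p (n+1) ω = (t ω)⁻¹ * y ω) →
      μj[D | ℱ n] =ᵐ[μj] fun ω => (p n ω)⁻¹ * y ω := by
  have hI : ∀ f : Ω → ℝ, ∫ ω, f ω ∂μj = c⁻¹ * ∫ ω, f ω * pinf ω ∂μ := by
    intro f; rw [hμj]; exact aux_int hint h0 hc f
  have hac : μj ≪ μ := by rw [hμj]; exact withDensity_absolutelyContinuous _ _
  have hfin : IsFiniteMeasure μj := by
    rw [hμj]
    exact isFiniteMeasure_withDensity_ofReal (hint.div_const c).2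
  have hprob : IsProbabilityMeasure μj := by
    have h1 := hI (fun _ => 1)
    have h2 := aux_condExp_mul (ℱ.le 0) (f := fun _ => (1:ℝ)) stronglyMeasurable_const
      (by simp) hint (hcl 0)
    rw [h2] at h1
    simp only [hpc, integral_const, probReal_univ, smul_eq_mul, mul_one, one_mul,
      inv_mul_cancel₀ hc.ne'] at h1
    refine ⟨?_⟩
    rw [Measure.real, ENNReal.toReal_eq_one_iff] at h1
    exact h1
  refine ⟨hprob, ?_, ?_⟩
  · intro n
    have hs : MeasurableSet[ℱ n] {ω | p n ω = 0} :=
      (hmart.stronglyMeasurable n).measurable (measurableSet_singleton 0)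
    have hf : StronglyMeasurable[ℱ n] (Set.indicator {ω | p n ω = 0} (fun _ => (1:ℝ))) :=
      stronglyMeasurable_const.indicator hs
    have h1 := hI (Set.indicator {ω | p n ω = 0} (fun _ => (1:ℝ)))
    rw [aux_condExp_mul (ℱ.le n) hf (ae_of_all _ fun ω => ?_) hint (hcl n)] at h1
    · have : ∀ ω, Set.indicator {ω | p n ω = 0} (fun _ => (1:ℝ)) ω * p n ω = 0 := by
        intro ω
        by_cases h : p n ω = 0 <;> simp [h]
      simp only [this, integral_zero, mul_zero] at h1
      rw [integral_indicator_const _ (ℱ.le n _ hs), smul_eq_mul, mul_one,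
        measureReal_eq_zero_iff] at h1
      rw [ae_iff]
      simpa using h1
    · by_cases h : p n ω = 0 <;> simp [h]
  · intro n D t y hD hD01 ht hy hcond hyb hup
    have hDb : ∀ ω, |D ω| ≤ 1 := fun ω => by rcases hD01 ω with h | h <;> simp [h]
    have hpn := hmart.stronglyMeasurable n
    have hq : StronglyMeasurable[ℱ n] fun ω => (p n ω)⁻¹ * y ω :=
      (hpn.measurable.inv.mul hy.measurable).stronglyMeasurable
    have hr : StronglyMeasurable[ℱ n] fun ω => (t ω)⁻¹ * y ω :=
      (ht.measurable.inv.mul hy.measurable).stronglyMeasurable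
    have hle : ∀ a b : ℝ, 0 ≤ b → b ≤ a → |a⁻¹ * b| ≤ 1 := by
      intro a b hb hba
      rw [abs_of_nonneg (mul_nonneg (inv_nonneg.2 (hb.trans hba)) hb), mul_comm]
      exact div_le_one_of_le₀ hba (hb.trans hba)
    have hqb : ∀ᵐ ω ∂μ, |(p n ω)⁻¹ * y ω| ≤ 1 := by
      filter_upwards [hyb] with ω h using hle _ _ h.1 h.2.2
    have hrb : ∀ᵐ ω ∂μ, |(t ω)⁻¹ * y ω| ≤ 1 := by
      filter_upwards [hyb] with ω h using hle _ _ h.1 h.2.1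
    have hDint : ∀ ν : Measure Ω, IsFiniteMeasure ν → Integrable D ν := by
      intro ν _
      exact Integrable.of_bound (hD.mono (ℱ.le _)).aestronglyMeasurable 1
        (ae_of_all _ fun ω => by simpa [Real.norm_eq_abs] using hDb ω)
    have hqint : Integrable (fun ω => (p n ω)⁻¹ * y ω) μj := by
      refine Integrable.of_bound (hq.mono (ℱ.le _)).aestronglyMeasurable 1 (hac.ae_le ?_)
      filter_upwards [hqb] with ω h
      rwa [Real.norm_eq_abs]
    symm
    refine ae_eq_condExp_of_forall_setIntegral_eq (ℱ.le n) (hDint μj hfin)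
      (fun s _ _ => hqint.integrableOn) ?_ hq.aestronglyMeasurable
    intro s hs _
    have hib : ∀ (f : Ω → ℝ) ω, |f ω| ≤ 1 → |s.indicator f ω| ≤ 1 := by
      intro f ω h
      by_cases hω : ω ∈ s <;> simp [hω, h]
    rw [← integral_indicator (ℱ.le n _ hs), ← integral_indicator (ℱ.le n _ hs), hI, hI]
    congr 1
    rw [aux_condExp_mul (ℱ.le n) (hq.indicator hs)
        (by filter_upwards [hqb] with ω h using hib _ _ h) hint (hcl n),
      aux_condExp_mul (ℱ.le (n+1)) (hD.indicator (ℱ.mono (Nat.le_succ n) _ hs))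
        (ae_of_all _ fun ω => hib _ _ (hDb ω)) hint (hcl (n+1))]
    have e := aux_condExp_mul (ℱ.le n) (hr.indicator hs)
        (by filter_upwards [hrb] with ω h using hib _ _ h) (hDint μ inferInstance) hcond
    trans ∫ ω, s.indicator (fun ω => (t ω)⁻¹ * y ω) ω * t ω ∂μ
    · apply integral_congr_ae
      filter_upwards [hyb] with ω h
      by_cases hω : ω ∈ s
      · simp only [Set.indicator_of_mem hω]
        have : ∀ a : ℝ, y ω ≤ a → a⁻¹ * y ω * a = y ω := by
          intro a ha
          by_cases ha0 : a = 0
          · have : y ω = 0 := le_antisymm (ha0 ▸ ha) h.1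
            simp [this]
          · field_simp
        rw [this _ h.2.1, this _ h.2.2]
      · simp [hω]
    · rw [← e]
      apply integral_congr_ae
      filter_upwards [hup] with ω h
      by_cases hω : ω ∈ s
      · simp only [Set.indicator_of_mem hω]
        rcases hD01 ω with h' | h'
        · simp [h']
        · rw [h h', h']; ring
      · simp [hω]

/-- (Restriction under the h-process.) Under (H1'), if
`ℙ_ρ^{(j)} = (p_∞^{(j)}/p_0^{(j)}) ℙ_ρ` is the tilted measure associated to the bounded
martingale `p_n^{(j)} = Tr(P_j ρ_n)` (converging a.s. and in `L¹` to `p_∞^{(j)}`), then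
under `ℙ_ρ^{(j)}` the process `(ρ_n^{(j)}/Tr(ρ_n^{(j)}), X_n)`, with
`ρ_n^{(j)} = P_j ρ_n P_j`, is the quantum trajectory process associated to the operators
`A_i^{(j)} = A_i P_j`, started from `ρ^{(j)}/Tr(ρ^{(j)})`. -/
theorem stmt16 {k d N : ℕ} (hd : 1 ≤ d)
    (A : Fin (2 * d) → Matrix (Fin k) (Fin k) ℂ)
    (hA : ∑ j, (A j)ᴴ * A j = 1)
    (P : Fin N → Matrix (Fin k) (Fin k) ℂ)
    (hsa : ∀ j, (P j)ᴴ = P j) (hidem : ∀ j, P j * P j = P j)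
    (horth : ∀ j j', j ≠ j' → P j * P j' = 0)
    (hsum : ∑ j, P j = 1)
    (hcomm : ∀ (i : Fin (2 * d)) (j : Fin N), P j * A i = A i * P j)
    {Ω : Type} {mΩ : MeasurableSpace Ω} (μ : Measure Ω) [IsProbabilityMeasure μ]
    (ℱ : Filtration ℕ mΩ)
    (ρ : ℕ → Ω → Matrix (Fin k) (Fin k) ℂ) (X : ℕ → Ω → Fin d → ℤ)
    (hQT : IsQTraj A μ ℱ ρ X)
    (ρ₀ : Matrix (Fin k) (Fin k) ℂ) (hρ₀ : IsDensity ρ₀)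
    (hinit : ∀ ω, ρ 0 ω = ρ₀)
    (j : Fin N) (hp₀ : 0 < ((P j * ρ₀).trace).re)
    (pinf : Ω → ℝ)
    (hmart : Martingale (fun n ω => ((P j * ρ n ω).trace).re) ℱ μ)
    (has : ∀ᵐ ω ∂μ, Tendsto (fun n => ((P j * ρ n ω).trace).re) atTop (nhds (pinf ω)))
    (hL1 : Tendsto (fun n => ∫ ω, |((P j * ρ n ω).trace).re - pinf ω| ∂μ) atTop (nhds 0))
    (μj : Measure Ω)
    (hμj : μj = μ.withDensity (fun ω => ENNReal.ofReal (pinf ω / ((P j * ρ₀).trace).re)))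
    (ρt : ℕ → Ω → Matrix (Fin k) (Fin k) ℂ)
    (hρt : ∀ n ω, ρt n ω = ((P j * ρ n ω * P j).trace)⁻¹ • (P j * ρ n ω * P j)) :
    IsProbabilityMeasure μj ∧
    (∀ ω, ρt 0 ω = ((P j * ρ₀ * P j).trace)⁻¹ • (P j * ρ₀ * P j)) ∧
    (∀ (n : ℕ) (i : Fin (2 * d)),
      μj[(fun ω => if X (n + 1) ω = X n ω + dir d i then (1 : ℝ) else 0) | ℱ n]
        =ᵐ[μj] fun ω =>
          (((A i * P j) * ρt n ω * (A i * P j)ᴴ).trace).re) ∧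
    (∀ (n : ℕ) (i : Fin (2 * d)), ∀ᵐ ω ∂μj,
      X (n + 1) ω = X n ω + dir d i →
        ρt (n + 1) ω =
          (((A i * P j) * ρt n ω * (A i * P j)ᴴ).trace)⁻¹ •
            ((A i * P j) * ρt n ω * (A i * P j)ᴴ)) := by
  have hP := hsa j
  have hI := hidem j
  have hp0 : ∀ n, ∀ᵐ ω ∂μ, 0 ≤ ((P j * ρ n ω).trace).re := by
    intro n
    filter_upwards [hQT.density n] with ω h using aux_proj_nonneg hP hI h.1
  have hp1 : ∀ n, ∀ᵐ ω ∂μ, ((P j * ρ n ω).trace).re ≤ 1 := by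
    intro n
    filter_upwards [hQT.density n] with ω h
    have := aux_proj_le hP hI h.1
    rwa [h.2, Complex.one_re] at this
  obtain ⟨hint, h0, hcl⟩ := aux_closed hmart hp0 hp1 has
  obtain ⟨hprob, hne, hmain⟩ := aux_tilt hmart hp0 hint h0 hcl hp₀
    (fun ω => by rw [hinit]) hμj
  have hac : μj ≪ μ := by rw [hμj]; exact withDensity_absolutelyContinuous _ _
  refine ⟨hprob, fun ω => by rw [hρt, hinit], ?_, ?_⟩
  · intro n i
    have hset : MeasurableSet[ℱ (n+1)] {ω | X (n + 1) ω = X n ω + dir d i} := by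
      have h1 := hQT.adapted_X (n+1)
      have h2 := (hQT.adapted_X n).mono (ℱ.mono (Nat.le_succ n)) le_rfl
      have h3 : Measurable[ℱ (n+1)] fun ω => X n ω + dir d i :=
        (measurable_of_countable (fun x : Fin d → ℤ => x + dir d i)).comp h2
      exact measurableSet_eq_fun h1 h3
    have hcont : ∀ g : Matrix (Fin k) (Fin k) ℂ → ℝ, Continuous g →
        StronglyMeasurable[ℱ n] fun ω => g (ρ n ω) := fun g hg =>
      (hg.measurable.comp (hQT.adapted_ρ n)).stronglyMeasurable
    have key := hmain n (fun ω => if X (n + 1) ω = X n ω + dir d i then (1 : ℝ) else 0)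
      (fun ω => ((A i * ρ n ω * (A i)ᴴ).trace).re)
      (fun ω => ((P j * (A i * ρ n ω * (A i)ᴴ)).trace).re)
      (StronglyMeasurable.ite hset stronglyMeasurable_const stronglyMeasurable_const)
      (fun ω => by by_cases h : X (n + 1) ω = X n ω + dir d i <;> simp [h])
      (hcont (fun M => ((A i * M * (A i)ᴴ).trace).re) (by fun_prop))
      (hcont (fun M => ((P j * (A i * M * (A i)ᴴ)).trace).re) (by fun_prop))
      (hQT.prob n i) ?_ ?_
    · refine key.trans (hac.ae_le ?_)
      filter_upwards [hQT.density n] with ω h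
      rw [hρt, Matrix.mul_smul, Matrix.smul_mul, aux_block2 hP hI (hcomm i j), trace_smul,
        aux_trace_re (aux_psd_proj hP h.1), aux_trace_proj hI, aux_trace_proj hI,
        ← Complex.ofReal_inv, smul_eq_mul, Complex.re_ofReal_mul]
    · filter_upwards [hQT.density n] with ω h
      have hM := h.1.mul_mul_conjTranspose_same (A i)
      refine ⟨aux_proj_nonneg hP hI hM, aux_proj_le hP hI hM, ?_⟩
      rw [← aux_trace_proj hI, ← aux_trace_proj hI, ← aux_block hP (hcomm i j)]
      exact aux_kraus_le A hA (aux_psd_proj hP h.1) i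
    · filter_upwards [hQT.density n, hQT.update n i] with ω h hu hX
      have hX' : X (n + 1) ω = X n ω + dir d i := by
        by_contra hc
        simp [hc] at hX
      have hM := h.1.mul_mul_conjTranspose_same (A i)
      rw [hu hX', Matrix.mul_smul, trace_smul, aux_trace_re hM, ← Complex.ofReal_inv,
        smul_eq_mul, Complex.re_ofReal_mul]
      simp
  · intro n i
    filter_upwards [hac.ae_le (hQT.density n), hac.ae_le (hQT.density (n+1)),
      hac.ae_le (hQT.update n i), hne n] with ω h h' hu hp hX
    have hc : (P j * ρ n ω * P j).trace ≠ 0 := by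
      intro hz
      apply hp
      rw [← aux_trace_proj hI, hz, Complex.zero_re]
    have ht : (A i * ρ n ω * (A i)ᴴ).trace ≠ 0 := by
      intro hz
      have h2 := h'.2
      rw [hu hX, hz] at h2
      simp at h2
    rw [hρt, hρt, hu hX]
    simp only [Matrix.mul_smul, Matrix.smul_mul]
    rw [aux_block2 hP hI (hcomm i j), aux_norm _ (inv_ne_zero ht), aux_norm _ (inv_ne_zero hc)]
end
end

section
/- Assume the block-diagonal hypothesis (H1'), hypothesis (H2): for each j ∈ {1,…,N} the map L^{(j)}(ρ) = Σ_{i=1}^{2d} A_i^{(j)} ρ A_i^{(j)*} on E_j admits a unique invariant state ρ_∞^{(j)}, and hypothesis (H3): the vectors m^{(j)} = ( Tr(A_1 ρ_∞^{(j)} A_1^*), …, Tr(A_{2d} ρ_∞^{(j)} A_{2d}^*) ), j = 1,…,N, are pairwise distinct. Let (ρ_n, X_n)_{n≥0} be the quantum trajectory process under ℙ_ρ started from a density matrix ρ, and let p_∞^{(j)} be the a.s. limit of the martingale p_n^{(j)} = Tr(P_j ρ_n). Then almost surely the vector (p_∞^{(1)},…,p_∞^{(N)}) has exactly one coordinate equal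 to 1 and all others equal to 0, and for every j, ℙ_ρ[ p_∞^{(j)} = 1 ] = p_0^{(j)} = 1 − ℙ_ρ[ p_∞^{(j)} = 0 ]. -/
open MeasureTheory Filter Matrix Finset
open scoped ComplexOrder

noncomputable section

section QHelpers

open Topology

local notation "Mat" k => Matrix (Fin k) (Fin k) ℂ

instance q_borel {k : ℕ} : BorelSpace (Matrix (Fin k) (Fin k) ℂ) :=
  inferInstanceAs (BorelSpace (Fin k → Fin k → ℂ))

instance q_sct {k : ℕ} : SecondCountableTopology (Matrix (Fin k) (Fin k) ℂ) :=
  inferInstanceAs (SecondCountableTopology (Fin k → Fin k → ℂ))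

open scoped MatrixOrder in
lemma q_psd_iff {k : ℕ} (ρ : Mat k) : ρ.PosSemidef ↔ ∃ B : Mat k, ρ = Bᴴ * B := by
  rw [← Matrix.nonneg_iff_posSemidef]
  exact CStarAlgebra.nonneg_iff_eq_star_mul_self

lemma q_dens_compact (k : ℕ) : IsCompact {ρ : Mat k | IsDensity ρ} := by
  have h1 : IsCompact {B : Mat k | ∀ i j, B i j ∈ Metric.closedBall (0:ℂ) 1} := by
    have := isCompact_pi_infinite (X := fun _ : Fin k => Fin k → ℂ)
      (s := fun _ => {g : Fin k → ℂ | ∀ j, g j ∈ Metric.closedBall (0:ℂ) 1})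
      (fun i => isCompact_pi_infinite (fun j => isCompact_closedBall (0:ℂ) 1))
    exact this
  have hc : Continuous (fun B : Mat k => Bᴴ * B) := by fun_prop
  have h2 : IsClosed {B : Mat k | (Bᴴ * B).trace = 1} :=
    isClosed_eq (by fun_prop) continuous_const
  have h3 := (h1.inter_right h2).image hc
  convert h3 using 1
  ext ρ
  simp only [Set.mem_ofPred_eq, IsDensity, Set.mem_image, Set.mem_inter_iff]
  constructor
  · rintro ⟨hp, ht⟩
    obtain ⟨B, rfl⟩ := (q_psd_iff ρ).1 hp
    refine ⟨B, ⟨fun i j => ?_, ht⟩, rfl⟩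
    have : (Bᴴ * B).trace = ((∑ j, ∑ i, ‖B i j‖ ^ 2 : ℝ) : ℂ) := by
      simp [Matrix.trace, Matrix.mul_apply, Complex.conj_mul']
    rw [this] at ht
    have ht' : ∑ j, ∑ i, ‖B i j‖ ^ 2 = 1 := by exact_mod_cast ht
    have h4 : ‖B i j‖ ^ 2 ≤ 1 := by
      rw [← ht']
      refine le_trans ?_ (Finset.single_le_sum (f := fun j => ∑ i, ‖B i j‖ ^ 2)
        (fun _ _ => by positivity) (Finset.mem_univ j))
      exact Finset.single_le_sum (f := fun i => ‖B i j‖ ^ 2)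
        (fun _ _ => by positivity) (Finset.mem_univ i)
    simp only [Metric.mem_closedBall, dist_zero_right]
    nlinarith [norm_nonneg (B i j)]
  · rintro ⟨B, ⟨_, ht⟩, rfl⟩
    exact ⟨Matrix.posSemidef_conjTranspose_mul_self B, ht⟩

/-- the channel -/
def qL {k d : ℕ} (A : Fin (2 * d) → Mat k) : (Mat k) →ₗ[ℝ] (Mat k) where
  toFun ρ := ∑ i, A i * ρ * (A i)ᴴ
  map_add' x y := by simp [mul_add, add_mul, Finset.sum_add_distrib]
  map_smul' r x := by simp [Finset.smul_sum]

/-- functional `Re Tr (Q ρ)` -/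
def qF {k : ℕ} (Q : Mat k) : (Mat k) →ₗ[ℝ] ℝ where
  toFun ρ := ((Q * ρ).trace).re
  map_add' x y := by simp [mul_add]
  map_smul' r x := by simp

lemma qF_cont {k : ℕ} (Q : Mat k) : Continuous (qF Q) := by
  show Continuous fun ρ => ((Q * ρ).trace).re
  fun_prop

lemma qL_cont {k d : ℕ} (A : Fin (2 * d) → Mat k) : Continuous (qL A) := by
  show Continuous fun ρ => ∑ i, A i * ρ * (A i)ᴴ
  fun_prop

lemma q_trace_comm {k : ℕ} {a P ρ : Mat k} (h : P * a = a * P) :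
    (P * (a * ρ * aᴴ)).trace = (aᴴ * a * (P * ρ)).trace := by
  rw [← mul_assoc, ← mul_assoc, h, Matrix.trace_mul_comm]
  simp only [mul_assoc]

lemma qF_qL {k d : ℕ} {A : Fin (2 * d) → Mat k} (hA : ∑ j, (A j)ᴴ * A j = 1) {P : Mat k}
    (h : ∀ i, P * A i = A i * P) (ρ : Mat k) : 
    (P * (∑ i, A i * ρ * (A i)ᴴ)).trace = (P * ρ).trace := by
  rw [Finset.mul_sum, Matrix.trace_sum]
  simp_rw [q_trace_comm (h _)]
  rw [← Matrix.trace_sum, ← Finset.sum_mul, hA, one_mul]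

lemma qL_dens {k d : ℕ} {A : Fin (2 * d) → Mat k} (hA : ∑ j, (A j)ᴴ * A j = 1) {ρ : Mat k}
    (hρ : IsDensity ρ) : IsDensity (qL A ρ) := by
  refine ⟨Matrix.posSemidef_sum _ fun i _ => hρ.1.mul_mul_conjTranspose_same _, ?_⟩
  have := qF_qL hA (P := 1) (by simp) ρ
  rw [one_mul, one_mul] at this
  exact this.trans hρ.2

lemma qL_iter_dens {k d : ℕ} {A : Fin (2 * d) → Mat k} (hA : ∑ j, (A j)ᴴ * A j = 1) {ρ : Mat k}
    (hρ : IsDensity ρ) (l : ℕ) : IsDensity ((qL A)^[l] ρ) := by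
  induction l with
  | zero => exact hρ
  | succ l ih => rw [Function.iterate_succ_apply']; exact qL_dens hA ih

/-- Cesaro means -/
def qC {k d : ℕ} (A : Fin (2 * d) → Mat k) (σ : Mat k) (M : ℕ) : Mat k :=
  ((M : ℝ) + 1)⁻¹ • ∑ l ∈ Finset.range (M + 1), (qL A)^[l] σ

lemma qC_F {k d : ℕ} (A : Fin (2 * d) → Mat k) (σ : Mat k) (M : ℕ) (g : (Mat k) →ₗ[ℝ] ℝ) (c : ℝ)
    (h : ∀ l, g ((qL A)^[l] σ) = c) : g (qC A σ M) = c := by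
  unfold qC
  rw [map_smul, map_sum]
  simp only [h]
  simp
  field_simp

lemma qC_dens {k d : ℕ} {A : Fin (2 * d) → Mat k} (hA : ∑ j, (A j)ᴴ * A j = 1) {σ : Mat k}
    (hσ : IsDensity σ) (M : ℕ) : IsDensity (qC A σ M) := by
  constructor
  · refine Matrix.PosSemidef.smul (Matrix.posSemidef_sum _ fun l _ => (qL_iter_dens hA hσ l).1) ?_
    positivity
  · unfold qC
    rw [Matrix.trace_smul, Matrix.trace_sum, Finset.sum_congr rfl
      (fun l _ => (qL_iter_dens hA hσ l).2)]
    have : (M : ℂ) + 1 ≠ 0 := by exact_mod_cast Nat.succ_ne_zero M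
    simp
    rw [← mul_add_one, inv_mul_cancel₀ this]

lemma qC_L {k d : ℕ} (A : Fin (2 * d) → Mat k) (σ : Mat k) (M : ℕ) :
    qL A (qC A σ M) = qC A σ M + ((M : ℝ) + 1)⁻¹ • ((qL A)^[M+1] σ - σ) := by
  unfold qC
  rw [map_smul, map_sum, ← smul_add]
  congr 1
  simp_rw [← Function.iterate_succ_apply' (qL A)]
  have := Finset.sum_range_sub (fun l => (qL A)^[l] σ) (M+1)
  rw [Finset.sum_sub_distrib] at this
  rw [← sub_eq_iff_eq_add', this]
  simp

lemma q_cluster {k d : ℕ} {A : Fin (2 * d) → Mat k} (hA : ∑ j, (A j)ᴴ * A j = 1) {σ : Mat k}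
    (hσ : IsDensity σ) : ∃ η, IsDensity η ∧ qL A η = η ∧
      ∀ (g : (Mat k) →ₗ[ℝ] ℝ) (c : ℝ), Continuous g → (∀ l, g ((qL A)^[l] σ) = c) → g η = c := by
  obtain ⟨⟨η, ξ⟩, hmem, φ, hφ, hlim⟩ := ((q_dens_compact k).prod (q_dens_compact k)).tendsto_subseq
    (x := fun M => (qC A σ M, (qL A)^[M+1] σ))
    (fun M => ⟨qC_dens hA hσ M, qL_iter_dens hA hσ _⟩)
  have h1 : Tendsto (fun M => qC A σ (φ M)) atTop (𝓝 η) := (continuous_fst.tendsto _).comp hlim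
  have h2 : Tendsto (fun M => (qL A)^[φ M + 1] σ) atTop (𝓝 ξ) :=
    (continuous_snd.tendsto _).comp hlim
  refine ⟨η, hmem.1, ?_, ?_⟩
  · have h3 : Tendsto (fun M => qL A (qC A σ (φ M))) atTop (𝓝 (qL A η)) :=
      ((qL_cont A).tendsto _).comp h1
    have h4 : Tendsto (fun M => ((φ M : ℝ) + 1)⁻¹) atTop (𝓝 0) := by
      have := (tendsto_one_div_add_atTop_nhds_zero_nat (𝕜 := ℝ)).comp hφ.tendsto_atTop
      simpa [Function.comp_def] using this
    have h5 := h1.add (h4.smul (h2.sub_const σ))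
    simp only [← qC_L, zero_smul, add_zero] at h5
    exact tendsto_nhds_unique h3 h5
  · intro g c hg h
    have h3 : Tendsto (fun M => g (qC A σ (φ M))) atTop (𝓝 (g η)) := (hg.tendsto _).comp h1
    simp only [qC_F A σ _ g c h] at h3
    exact tendsto_nhds_unique h3 tendsto_const_nhds |>.symm ▸ rfl

lemma q_det {k d N : ℕ} {A : Fin (2 * d) → Mat k}
    (hA : ∑ j, (A j)ᴴ * A j = 1)
    (P : Fin N → Mat k)
    (hsa : ∀ j, (P j)ᴴ = P j) (hidem : ∀ j, P j * P j = P j)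
    (hcomm : ∀ (i : Fin (2 * d)) (j : Fin N), P j * A i = A i * P j)
    (ρinfj : Fin N → Mat k)
    (huniqj : ∀ j σ, IsDensity σ → P j * σ * P j = σ →
      (∑ i, (A i * P j) * σ * (A i * P j)ᴴ) = σ → σ = ρinfj j)
    (hm : ∀ j j', j ≠ j' →
      (fun i : Fin (2 * d) => ((A i * ρinfj j * (A i)ᴴ).trace).re) ≠
        (fun i : Fin (2 * d) => ((A i * ρinfj j' * (A i)ᴴ).trace).re))
    (σ : Mat k) (hσ : IsDensity σ) (c : Fin N → ℝ) (hc : ∀ j, ((P j * σ).trace).re = c j)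
    (h : ∀ j i l, ((P j * (A i * (qL A)^[l] σ * (A i)ᴴ)).trace).re =
      c j * ((A i * (qL A)^[l] σ * (A i)ᴴ).trace).re)
    (j j' : Fin N) (hjj : j ≠ j') : c j = 0 ∨ c j' = 0 := by
  by_contra! hcc
  obtain ⟨η, hη, hLη, hg⟩ := q_cluster hA hσ
  have h1 : ∀ j, ((P j * η).trace).re = c j := fun j => by
    refine hg (qF (P j)) (c j) (qF_cont _) fun l => ?_
    induction l with
    | zero => exact hc j
    | succ l ih =>
      rw [Function.iterate_succ_apply', ← ih]
      exact congrArg Complex.re (qF_qL hA (fun i => hcomm i j) _)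
  have h2 : ∀ j i, ((P j * (A i * η * (A i)ᴴ)).trace).re = c j * ((A i * η * (A i)ᴴ).trace).re := by
    intro j i
    have e0 : ∀ τ, (qF ((A i)ᴴ * P j * A i) - (c j) • qF ((A i)ᴴ * A i)) τ =
        ((P j * (A i * τ * (A i)ᴴ)).trace).re - c j * ((A i * τ * (A i)ᴴ).trace).re := by
      intro τ
      show (((A i)ᴴ * P j * A i * τ).trace).re - c j * (((A i)ᴴ * A i * τ).trace).re = _
      rw [mul_assoc, mul_assoc, Matrix.trace_mul_comm, mul_assoc (A i)ᴴ,
        Matrix.trace_mul_comm (A i)ᴴ]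
      simp only [mul_assoc]
    have := hg (qF ((A i)ᴴ * P j * A i) - (c j) • qF ((A i)ᴴ * A i)) 0
      (by
        have e := (qF_cont ((A i)ᴴ * P j * A i)).sub ((qF_cont ((A i)ᴴ * A i)).const_smul (c j))
        exact e) ?_
    · rw [e0] at this; linarith
    · intro l; rw [e0, h]; ring
  have h3 : ∀ j, c j ≠ 0 → ∀ i, ((A i * ρinfj j * (A i)ᴴ).trace).re = ((A i * η * (A i)ᴴ).trace).re := by
    intro j hj i
    have htr : (P j * η * P j).trace = (P j * η).trace := by
      rw [Matrix.trace_mul_comm, ← mul_assoc, hidem]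
    have hpsd : (P j * η * P j).PosSemidef := by
      have := hη.1.mul_mul_conjTranspose_same (P j)
      rwa [hsa] at this
    have hcj : (P j * η * P j).trace = (c j : ℂ) := by
      have := hpsd.trace_nonneg
      rw [Complex.nonneg_iff] at this
      apply Complex.ext
      · rw [htr, h1]; simp
      · simpa using this.2.symm
    have hc0 : 0 ≤ c j := by
      have := hpsd.trace_nonneg
      rw [hcj] at this
      exact_mod_cast this
    have hloc : ∀ i, (A i * P j) * (P j * η * P j) * (A i * P j)ᴴ = P j * (A i * η * (A i)ᴴ) * P j := by
      intro i
      rw [Matrix.conjTranspose_mul, hsa]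
      have e2 : P j * (A i)ᴴ = (A i)ᴴ * P j := by
        have := congrArg Matrix.conjTranspose (hcomm i j)
        simpa [hsa] using this.symm
      calc A i * P j * (P j * η * P j) * (P j * (A i)ᴴ) 
          = A i * (P j * P j) * η * (P j * P j) * (A i)ᴴ := by simp only [mul_assoc]
        _ = (A i * P j) * η * (P j * (A i)ᴴ) := by rw [hidem]; simp only [mul_assoc]
        _ = _ := by rw [e2, ← hcomm]; simp only [mul_assoc]
    have key := huniqj j ((c j)⁻¹ • (P j * η * P j)) ⟨hpsd.smul (by positivity), by
        rw [Matrix.trace_smul, hcj]; simp [hj]⟩ (by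
        rw [mul_smul_comm, smul_mul_assoc]
        congr 1
        calc P j * (P j * η * P j) * P j = (P j * P j) * η * (P j * P j) := by simp only [mul_assoc]
          _ = _ := by rw [hidem]) (by
        simp only [mul_smul_comm, smul_mul_assoc]
        rw [← Finset.smul_sum]
        congr 1
        simp_rw [hloc]
        rw [← Finset.sum_mul, ← Finset.mul_sum]
        have : ∑ i, A i * η * (A i)ᴴ = η := hLη
        rw [this])
    rw [← key]
    have e3 : (A i * (P j * η * P j) * (A i)ᴴ).trace = (P j * (A i * η * (A i)ᴴ)).trace := by
      have : P j * (A i * η * (A i)ᴴ) = A i * (P j * η) * (A i)ᴴ := by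
        rw [← mul_assoc, ← mul_assoc, hcomm]; simp only [mul_assoc]
      rw [q_trace_comm (hcomm i j), Matrix.trace_mul_comm, ← mul_assoc, ← mul_assoc, ← mul_assoc,
        Matrix.trace_mul_comm (_ * P j * η), ← mul_assoc, ← mul_assoc]
      have e2 : P j * (A i)ᴴ = (A i)ᴴ * P j := by
        have := congrArg Matrix.conjTranspose (hcomm i j)
        simpa [hsa] using this.symm
      rw [← mul_assoc, e2, mul_assoc _ (P j) (A i), hcomm, ← mul_assoc, mul_assoc _ (P j) (P j), hidem]
    rw [mul_smul_comm, smul_mul_assoc, Matrix.trace_smul, e3, Complex.smul_re, h2]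
    simp [hj]
  exact hm j j' hjj (by funext i; rw [h3 j hcc.1, h3 j' hcc.2])

lemma q_dir_inj {d : ℕ} {i i' : Fin (2 * d)} (h : dir d i = dir d i') : i = i' := by
  have hi := i.2
  have hi' := i'.2
  have e : ∀ j : Fin d, dir d i j = dir d i' j := fun j => by rw [h]
  unfold dir at e
  ext
  by_cases h1 : (i : ℕ) < d
  · have := e ⟨i, h1⟩
    simp only [h1, if_true] at this
    split_ifs at this with h2 h3 <;> first | exact h3 | omega
  · have := e ⟨i - d, by omega⟩
    simp only [h1, if_false, if_true] at this
    split_ifs at this with h2 h3 <;> omega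

structure QGood {k : ℕ} (f : (Mat k) → ℝ → ℝ) : Prop where
  cont : Continuous (fun p : (Mat k) × ℝ => f p.1 p.2)
  hom : ∀ r : ℝ, 0 ≤ r → ∀ ρ c, f (r • ρ) c = r * f ρ c

/-- transfer operator -/
def qT {k d : ℕ} (A : Fin (2 * d) → Mat k) (f : (Mat k) → ℝ → ℝ) : (Mat k) → ℝ → ℝ :=
  fun ρ c => ∑ i, f (A i * ρ * (A i)ᴴ) c

lemma QGood.T {k d : ℕ} (A : Fin (2 * d) → Mat k) {f : (Mat k) → ℝ → ℝ} (hf : QGood f) :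
    QGood (qT A f) := by
  constructor
  · unfold qT
    refine continuous_finsetSum _ fun i _ => ?_
    exact hf.cont.comp (f := fun p : (Mat k) × ℝ => (A i * p.1 * (A i)ᴴ, p.2)) (by fun_prop)
  · intro r hr ρ c
    unfold qT
    rw [Finset.mul_sum]
    refine Finset.sum_congr rfl fun i _ => ?_
    rw [mul_smul_comm, smul_mul_assoc, hf.hom r hr]

lemma QGood.iter {k d : ℕ} (A : Fin (2 * d) → Mat k) {f : (Mat k) → ℝ → ℝ} (hf : QGood f) (m : ℕ) :
    QGood ((qT A)^[m] f) := by
  induction m with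
  | zero => exact hf
  | succ m ih => rw [Function.iterate_succ_apply']; exact ih.T A

lemma QGood.zero {k : ℕ} {f : (Mat k) → ℝ → ℝ} (hf : QGood f) (c : ℝ) : f 0 c = 0 := by
  have := hf.hom 0 le_rfl 0 c
  simpa using this

lemma QGood.bound {k : ℕ} {f : (Mat k) → ℝ → ℝ} (hf : QGood f) :
    ∃ B : ℝ, 0 ≤ B ∧ ∀ ρ c, (IsDensity ρ ∨ ρ = 0) → c ∈ Set.Icc (0:ℝ) 1 → |f ρ c| ≤ B := by
  obtain ⟨B, hB⟩ := ((q_dens_compact k).prod (isCompact_Icc (a := (0:ℝ)) (b := 1))).exists_bound_of_continuousOn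
    (f := fun p : (Mat k) × ℝ => f p.1 p.2) hf.cont.continuousOn
  refine ⟨max B 0, le_max_right _ _, ?_⟩
  rintro ρ c (h | rfl) hc
  · exact (hB (ρ, c) ⟨h, hc⟩).trans (le_max_left _ _)
  · rw [hf.zero]; simp

/-- normalised update -/
def qU {k : ℕ} (a ρ : Mat k) : Mat k := ((a * ρ * aᴴ).trace)⁻¹ • (a * ρ * aᴴ)

lemma qU_meas {k : ℕ} (a : Mat k) : Measurable (qU a) := by
  have h1 : Measurable fun ρ : Mat k => (a * ρ * aᴴ).trace :=
    (by fun_prop : Continuous fun ρ : Mat k => (a * ρ * aᴴ).trace).measurable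
  refine measurable_pi_lambda _ fun i => measurable_pi_lambda _ fun j => ?_
  have h2 : Measurable fun ρ : Mat k => (a * ρ * aᴴ) i j :=
    (by fun_prop : Continuous fun ρ : Mat k => (a * ρ * aᴴ) i j).measurable
  exact h1.inv.mul h2

lemma q_tr_real {k : ℕ} {τ : Mat k} (h : τ.PosSemidef) : 0 ≤ τ.trace.re ∧ τ.trace = (τ.trace.re : ℂ) := by
  have := h.trace_nonneg
  rw [Complex.nonneg_iff] at this
  exact ⟨this.1, Complex.ext (by simp) (by simpa using this.2.symm)⟩

lemma qU_eq {k : ℕ} {a ρ : Mat k} (h : ρ.PosSemidef) :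
    qU a ρ = ((a * ρ * aᴴ).trace.re)⁻¹ • (a * ρ * aᴴ) := by
  unfold qU
  rw [(q_tr_real (h.mul_mul_conjTranspose_same a)).2, ← Complex.ofReal_inv, Complex.ofReal_re]
  ext i j
  simp

lemma qU_dens {k : ℕ} {a ρ : Mat k} (h : ρ.PosSemidef) : IsDensity (qU a ρ) ∨ qU a ρ = 0 := by
  have hp := h.mul_mul_conjTranspose_same a
  obtain ⟨h0, h1⟩ := q_tr_real hp
  by_cases hz : (a * ρ * aᴴ).trace = 0
  · right; unfold qU; rw [hz]; simp
  · left
    refine ⟨?_, ?_⟩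
    · rw [qU_eq h]; exact hp.smul (by positivity)
    · unfold qU; rw [Matrix.trace_smul, smul_eq_mul, inv_mul_cancel₀ hz]

lemma qU_hom {k : ℕ} {a ρ : Mat k} (h : ρ.PosSemidef) {f : (Mat k) → ℝ → ℝ} (hf : QGood f) (c : ℝ) :
    (a * ρ * aᴴ).trace.re * f (qU a ρ) c = f (a * ρ * aᴴ) c := by
  have hp := h.mul_mul_conjTranspose_same a
  obtain ⟨h0, h1⟩ := q_tr_real hp
  rw [← hf.hom _ h0, qU_eq h]
  by_cases hz : (a * ρ * aᴴ).trace.re = 0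
  · have : a * ρ * aᴴ = 0 := by
      rw [← hp.trace_eq_zero_iff, h1, hz]; simp
    simp [this]
  · rw [smul_smul, mul_inv_cancel₀ hz, one_smul]

variable {k d : ℕ} {Ω : Type} {mΩ : MeasurableSpace Ω}
    {A : Fin (2 * d) → Matrix (Fin k) (Fin k) ℂ}
    {μ : Measure Ω} [IsProbabilityMeasure μ] {ℱ : Filtration ℕ mΩ}
    {ρ : ℕ → Ω → Matrix (Fin k) (Fin k) ℂ}
    {X : ℕ → Ω → Fin d → ℤ}

lemma q_chi_int (hQT : IsQTraj A μ ℱ ρ X) (n : ℕ) (j : Fin (2 * d)) :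
    Integrable (fun ω => if X (n + 1) ω = X n ω + dir d j then (1 : ℝ) else 0) μ := by
  have h1 : Measurable (X (n+1)) := (hQT.adapted_X (n+1)).mono (ℱ.le _) le_rfl
  have h2 : Measurable (X n) := (hQT.adapted_X n).mono (ℱ.le _) le_rfl
  have h3 : MeasurableSet {ω | X (n + 1) ω = X n ω + dir d j} :=
    measurableSet_eq_fun h1 (h2.add_const _)
  refine Integrable.of_bound (C := 1)
    (Measurable.ite h3 measurable_const measurable_const).aestronglyMeasurable ?_
  refine Eventually.of_forall fun ω => ?_
  split_ifs <;> simp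

lemma q_tr_sum (hA : ∑ j, (A j)ᴴ * A j = 1) {τ : Matrix (Fin k) (Fin k) ℂ} (hτ : IsDensity τ) :
    ∑ i, (A i * τ * (A i)ᴴ).trace.re = 1 := by
  have := (qL_dens hA hτ).2
  rw [← Complex.re_sum, ← Matrix.trace_sum]
  exact (congrArg Complex.re this).trans (by simp)

lemma q_chi_sum (hA : ∑ j, (A j)ᴴ * A j = 1) (hQT : IsQTraj A μ ℱ ρ X) (n : ℕ) :
    ∀ᵐ ω ∂μ, ∑ j, (if X (n + 1) ω = X n ω + dir d j then (1 : ℝ) else 0) = 1 := by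
  have hle : ∀ ω, ∑ j, (if X (n + 1) ω = X n ω + dir d j then (1 : ℝ) else 0) ≤ 1 := by
    intro ω
    by_cases h : ∃ j, X (n + 1) ω = X n ω + dir d j
    · obtain ⟨j, hj⟩ := h
      rw [Finset.sum_eq_single j]
      · split_ifs <;> simp
      · intro b _ hb
        rw [if_neg]
        intro h'
        exact hb (q_dir_inj (add_left_cancel (h'.symm.trans hj)))
      · simp
    · push Not at h
      simp [h]
  have hint : ∫ ω, (∑ j, (if X (n + 1) ω = X n ω + dir d j then (1 : ℝ) else 0)) ∂μ = 1 := by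
    rw [integral_finsetSum _ (fun j _ => q_chi_int hQT n j)]
    have : ∀ j, ∫ ω, (if X (n + 1) ω = X n ω + dir d j then (1 : ℝ) else 0) ∂μ =
        ∫ ω, ((A j * ρ n ω * (A j)ᴴ).trace).re ∂μ := by
      intro j
      rw [← integral_condExp (ℱ.le n)]
      exact integral_congr_ae (hQT.prob n j)
    simp_rw [this]
    rw [← integral_finsetSum _ (fun j _ => (integrable_congr (hQT.prob n j)).1 integrable_condExp)]
    rw [integral_congr_ae (g := fun _ => 1)]
    · simp
    · filter_upwards [hQT.density n] with ω hω
      exact q_tr_sum hA hω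
  have hI : Integrable (fun ω => ∑ j, (if X (n + 1) ω = X n ω + dir d j then (1 : ℝ) else 0)) μ :=
    integrable_finsetSum _ (fun j _ => q_chi_int hQT n j)
  have h0 : ∫ ω, (1 - ∑ j, (if X (n + 1) ω = X n ω + dir d j then (1 : ℝ) else 0)) ∂μ = 0 := by
    rw [integral_sub (integrable_const _) hI, hint]; simp
  rw [integral_eq_zero_iff_of_nonneg (fun ω => sub_nonneg.2 (hle ω)) ((integrable_const _).sub hI)] at h0
  filter_upwards [h0] with ω hω
  simp only [Pi.zero_apply] at hω
  linarith

lemma q_one_step (hA : ∑ j, (A j)ᴴ * A j = 1) (hQT : IsQTraj A μ ℱ ρ X) (n : ℕ)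
    {f : (Mat k) → ℝ → ℝ} (hf : QGood f) {Y : Ω → ℝ} (hY : Measurable[ℱ n] Y)
    (hY1 : ∀ᵐ ω ∂μ, Y ω ∈ Set.Icc (0:ℝ) 1) :
    ∫ ω, f (ρ (n+1) ω) (Y ω) ∂μ = ∫ ω, qT A f (ρ n ω) (Y ω) ∂μ := by
  obtain ⟨B, hB0, hB⟩ := hf.bound
  have hZm : ∀ i, Measurable[ℱ n] (fun ω => f (qU (A i) (ρ n ω)) (Y ω)) := by
    intro i
    exact hf.cont.measurable.comp (((qU_meas (A i)).comp (hQT.adapted_ρ n)).prodMk hY)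
  have hZb : ∀ i, ∀ᵐ ω ∂μ, ‖f (qU (A i) (ρ n ω)) (Y ω)‖ ≤ B := by
    intro i
    filter_upwards [hQT.density n, hY1] with ω h1 h2
    exact hB _ _ (qU_dens h1.1) h2
  have hpull : ∀ i, μ[(fun ω => f (qU (A i) (ρ n ω)) (Y ω)) *
      (fun ω => if X (n + 1) ω = X n ω + dir d i then (1 : ℝ) else 0) | ℱ n] =ᵐ[μ]
      fun ω => f (A i * ρ n ω * (A i)ᴴ) (Y ω) := by
    intro i
    have := condExp_stronglyMeasurable_mul_of_bound (ℱ.le n) (hZm i).stronglyMeasurable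
      (q_chi_int hQT n i) B (hZb i)
    filter_upwards [this, hQT.prob n i, hQT.density n] with ω h1 h2 h3
    rw [h1, Pi.mul_apply, h2, mul_comm, qU_hom h3.1 hf]
  have hZi : ∀ i, Integrable ((fun ω => f (qU (A i) (ρ n ω)) (Y ω)) *
      (fun ω => if X (n + 1) ω = X n ω + dir d i then (1 : ℝ) else 0)) μ := by
    intro i
    exact (q_chi_int hQT n i).bdd_mul
      (((hZm i).mono (ℱ.le n) le_rfl).aestronglyMeasurable) (hZb i)
  calc ∫ ω, f (ρ (n+1) ω) (Y ω) ∂μ = ∫ ω, ∑ i, ((fun ω => f (qU (A i) (ρ n ω)) (Y ω)) *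
      (fun ω => if X (n + 1) ω = X n ω + dir d i then (1 : ℝ) else 0)) ω ∂μ := by
        refine integral_congr_ae ?_
        filter_upwards [q_chi_sum hA hQT n, ae_all_iff.2 (hQT.update n)] with ω h1 h2
        have e : f (ρ (n+1) ω) (Y ω) = f (ρ (n+1) ω) (Y ω) *
          ∑ j, (if X (n + 1) ω = X n ω + dir d j then (1 : ℝ) else 0) := by rw [h1, mul_one]
        refine e.trans ?_
        rw [Finset.mul_sum]
        refine Finset.sum_congr rfl fun i _ => ?_
        simp only [Pi.mul_apply]
        split_ifs with h3
        · rw [h2 i h3]; rfl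
        · simp
    _ = ∑ i, ∫ ω, ((fun ω => f (qU (A i) (ρ n ω)) (Y ω)) *
      (fun ω => if X (n + 1) ω = X n ω + dir d i then (1 : ℝ) else 0)) ω ∂μ :=
        integral_finsetSum _ (fun i _ => hZi i)
    _ = ∑ i, ∫ ω, f (A i * ρ n ω * (A i)ᴴ) (Y ω) ∂μ := by
        refine Finset.sum_congr rfl fun i _ => ?_
        rw [← integral_condExp (ℱ.le n)]
        exact integral_congr_ae (hpull i)
    _ = ∫ ω, qT A f (ρ n ω) (Y ω) ∂μ := by
        unfold qT
        rw [integral_finsetSum _ (fun i _ => (integrable_congr (hpull i)).1 integrable_condExp)]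

lemma q_multi_step (hA : ∑ j, (A j)ᴴ * A j = 1) (hQT : IsQTraj A μ ℱ ρ X) (n m : ℕ)
    {f : (Mat k) → ℝ → ℝ} (hf : QGood f) {Y : Ω → ℝ} (hY : Measurable[ℱ n] Y)
    (hY1 : ∀ᵐ ω ∂μ, Y ω ∈ Set.Icc (0:ℝ) 1) :
    ∫ ω, f (ρ (n+m) ω) (Y ω) ∂μ = ∫ ω, (qT A)^[m] f (ρ n ω) (Y ω) ∂μ := by
  induction m generalizing f with
  | zero => rfl
  | succ m ih =>
    rw [← add_assoc, q_one_step hA hQT (n+m) hf (hY.mono (ℱ.mono (by omega)) le_rfl) hY1,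
      ih (hf.T A), Function.iterate_succ_apply]

lemma q_psum {N : ℕ} {P : Fin N → Mat k} (hsum : ∑ j, P j = 1) {τ : Mat k} (hτ : IsDensity τ) :
    ∑ j, ((P j * τ).trace).re = 1 := by
  rw [← Complex.re_sum, ← Matrix.trace_sum, ← Finset.sum_mul, hsum, one_mul, hτ.2]
  simp

lemma q_p01 {N : ℕ} {P : Fin N → Mat k} (hsa : ∀ j, (P j)ᴴ = P j) (hidem : ∀ j, P j * P j = P j)
    (hsum : ∑ j, P j = 1) {τ : Mat k} (hτ : IsDensity τ) (j : Fin N) :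
    ((P j * τ).trace).re ∈ Set.Icc (0:ℝ) 1 := by
  have h0 : ∀ j, 0 ≤ ((P j * τ).trace).re := by
    intro j
    have h := (q_tr_real (hτ.1.mul_mul_conjTranspose_same (P j))).1
    rwa [hsa, Matrix.trace_mul_comm, ← mul_assoc, hidem] at h
  refine ⟨h0 j, ?_⟩
  rw [← q_psum hsum hτ]
  exact Finset.single_le_sum (f := fun j => ((P j * τ).trace).re) (fun i _ => h0 i) (Finset.mem_univ j)

lemma q_good_lin (Q : Mat k) : QGood (fun τ (_ : ℝ) => ((Q * τ).trace).re) := by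
  constructor
  · exact (qF_cont Q).comp continuous_fst
  · intro r _ τ _
    exact (qF Q).map_smul r τ

/-- base functional -/
def qH (Q : Mat k) : (Mat k) → ℝ → ℝ := fun τ c => |((Q * τ).trace).re - c * (τ.trace).re|

lemma q_good_H (Q : Mat k) : QGood (qH Q) := by
  constructor
  · unfold qH; fun_prop
  · intro r hr τ c
    unfold qH
    rw [mul_smul_comm, Matrix.trace_smul, Matrix.trace_smul, Complex.smul_re, Complex.smul_re,
      ← abs_of_nonneg hr, ← abs_mul, abs_of_nonneg hr]
    congr 1
    simp only [smul_eq_mul]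
    ring

lemma q_T_nonneg (f : (Mat k) → ℝ → ℝ) (hf : ∀ τ c, 0 ≤ f τ c) (l : ℕ) (τ : Mat k) (c : ℝ) :
    0 ≤ (qT A)^[l] f τ c := by
  induction l generalizing τ with
  | zero => exact hf _ _
  | succ l ih =>
    rw [Function.iterate_succ_apply']
    exact Finset.sum_nonneg fun i _ => ih _

lemma q_T_lower (f : (Mat k) → ℝ → ℝ) (g : (Mat k) →ₗ[ℝ] ℝ) (c : ℝ) (h : ∀ τ, |g τ| ≤ f τ c)
    (l : ℕ) (τ : Mat k) : |g ((qL A)^[l] τ)| ≤ (qT A)^[l] f τ c := by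
  induction l generalizing τ with
  | zero => exact h τ
  | succ l ih =>
    rw [Function.iterate_succ_apply' (qT A), Function.iterate_succ_apply]
    have e : g ((qL A)^[l] (qL A τ)) = ∑ i, g ((qL A)^[l] (A i * τ * (A i)ᴴ)) := by
      have e1 : (qL A τ) = ∑ i, A i * τ * (A i)ᴴ := rfl
      rw [e1, ← Module.End.coe_pow, map_sum, map_sum]
    rw [e]
    exact (Finset.abs_sum_le_sum_abs _ _).trans (Finset.sum_le_sum fun i _ => ih _)

lemma q_of_zero (Q σ : Mat k) (c : ℝ) (i : Fin (2 * d)) (l : ℕ)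
    (h : (qT A)^[l+1] (qH Q) σ c = 0) :
    ((Q * (A i * (qL A)^[l] σ * (A i)ᴴ)).trace).re =
      c * ((A i * (qL A)^[l] σ * (A i)ᴴ).trace).re := by
  have e0 : ∀ τ, (qF ((A i)ᴴ * Q * A i) - c • qF ((A i)ᴴ * A i)) τ =
      ((Q * (A i * τ * (A i)ᴴ)).trace).re - c * ((A i * τ * (A i)ᴴ).trace).re := by
    intro τ
    show (((A i)ᴴ * Q * A i * τ).trace).re - c * (((A i)ᴴ * A i * τ).trace).re = _
    rw [mul_assoc, mul_assoc, Matrix.trace_mul_comm, mul_assoc (A i)ᴴ,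
      Matrix.trace_mul_comm (A i)ᴴ]
    simp only [mul_assoc]
  have := q_T_lower (A := A) (qT A (qH Q)) (qF ((A i)ᴴ * Q * A i) - c • qF ((A i)ᴴ * A i)) c
    (fun τ => by
      rw [e0]
      exact Finset.single_le_sum (f := fun i => qH Q (A i * τ * (A i)ᴴ) c)
        (fun _ _ => abs_nonneg _) (Finset.mem_univ i)) l σ
  rw [← Function.iterate_succ_apply, h, e0] at this
  have := abs_nonpos_iff.1 this
  linarith

lemma q_subseq {N : ℕ} (hA : ∑ j, (A j)ᴴ * A j = 1)
    (P : Fin N → Mat k)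
    (hsa : ∀ j, (P j)ᴴ = P j) (hidem : ∀ j, P j * P j = P j)
    (hsum : ∑ j, P j = 1)
    (hQT : IsQTraj A μ ℱ ρ X) (pinf : Fin N → Ω → ℝ)
    (has : ∀ j, ∀ᵐ ω ∂μ,
      Tendsto (fun n => ((P j * ρ n ω).trace).re) atTop (nhds (pinf j ω))) :
    ∀ᵐ ω ∂μ, ∃ σ : Mat k, IsDensity σ ∧ (∀ j, ((P j * σ).trace).re = pinf j ω) ∧
      ∀ j l, (qT A)^[l] (qH (P j)) σ (pinf j ω) = 0 := by
  have hp01 : ∀ j n, ∀ᵐ ω ∂μ, ((P j * ρ n ω).trace).re ∈ Set.Icc (0:ℝ) 1 := by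
    intro j n
    filter_upwards [hQT.density n] with ω hω
    exact q_p01 hsa hidem hsum hω j
  have hpm : ∀ j n, Measurable[ℱ n] (fun ω => ((P j * ρ n ω).trace).re) := fun j n =>
    (qF_cont (P j)).measurable.comp (hQT.adapted_ρ n)
  have hpm' : ∀ j n, Measurable (fun ω => ((P j * ρ n ω).trace).re) := fun j n =>
    (hpm j n).mono (ℱ.le n) le_rfl
  have hg : ∀ j l, QGood ((qT A)^[l] (qH (P j))) := fun j l => (q_good_H (P j)).iter A l
  have hnn : ∀ j l τ c, 0 ≤ (qT A)^[l] (qH (P j)) τ c := fun j l τ c =>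
    q_T_nonneg _ (fun _ _ => abs_nonneg _) l τ c
  have hmeas : ∀ j l n, Measurable (fun ω => (qT A)^[l] (qH (P j)) (ρ n ω) ((P j * ρ n ω).trace).re) := by
    intro j l n
    exact (hg j l).cont.measurable.comp
      (((hQT.adapted_ρ n).mono (ℱ.le n) le_rfl).prodMk (hpm' j n))
  have hint : ∀ j l n, Integrable (fun ω => (qT A)^[l] (qH (P j)) (ρ n ω) ((P j * ρ n ω).trace).re) μ := by
    intro j l n
    obtain ⟨B, _, hB⟩ := (hg j l).bound
    refine Integrable.of_bound (C := B) (hmeas j l n).aestronglyMeasurable ?_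
    filter_upwards [hQT.density n, hp01 j n] with ω h1 h2
    exact hB _ _ (Or.inl h1) h2
  have hE : ∀ j l, Tendsto (fun n => ∫ ω, (qT A)^[l] (qH (P j)) (ρ n ω) ((P j * ρ n ω).trace).re ∂μ)
      atTop (𝓝 0) := by
    intro j l
    have e : ∀ n, ∫ ω, (qT A)^[l] (qH (P j)) (ρ n ω) ((P j * ρ n ω).trace).re ∂μ =
        ∫ ω, |((P j * ρ (n+l) ω).trace).re - ((P j * ρ n ω).trace).re| ∂μ := by
      intro n
      rw [← q_multi_step hA hQT n l (q_good_H (P j)) (hpm j n) (hp01 j n)]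
      refine integral_congr_ae ?_
      filter_upwards [hQT.density (n+l)] with ω h
      unfold qH
      rw [h.2]; simp
    simp_rw [e]
    have := tendsto_integral_of_dominated_convergence (μ := μ)
      (F := fun n ω => |((P j * ρ (n+l) ω).trace).re - ((P j * ρ n ω).trace).re|) (f := fun _ => 0)
      (fun _ => 1)
      (fun n => ((hpm' j (n+l)).sub (hpm' j n)).abs.aestronglyMeasurable) (integrable_const _)
      (fun n => by
        filter_upwards [hp01 j n, hp01 j (n+l)] with ω h1 h2
        rw [Real.norm_eq_abs, abs_abs, abs_le]
        exact ⟨by linarith [h1.1, h1.2, h2.1, h2.2], by linarith [h1.1, h1.2, h2.1, h2.2]⟩)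
      (by
        filter_upwards [has j] with ω h
        have h2 := (((tendsto_add_atTop_iff_nat l).2 h).sub h).abs
        simpa using h2)
    simpa using this
  set S : ℕ → ℕ → Ω → ℝ := fun m n ω => ∑ j, ∑ l ∈ Finset.range m,
    (qT A)^[l] (qH (P j)) (ρ n ω) ((P j * ρ n ω).trace).re with hS
  have hSnn : ∀ m n ω, 0 ≤ S m n ω := fun m n ω =>
    Finset.sum_nonneg fun j _ => Finset.sum_nonneg fun l _ => hnn _ _ _ _
  have hSint : ∀ m n, Integrable (S m n) μ := fun m n =>
    integrable_finsetSum _ fun j _ => integrable_finsetSum _ fun l _ => hint j l n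
  have hSm : ∀ m n, Measurable (S m n) := fun m n =>
    Finset.measurable_fun_sum _ fun j _ => Finset.measurable_fun_sum _ fun l _ => hmeas j l n
  have hSE : ∀ m, Tendsto (fun n => ∫ ω, S m n ω ∂μ) atTop (𝓝 0) := by
    intro m
    have e : ∀ n, ∫ ω, S m n ω ∂μ = ∑ j, ∑ l ∈ Finset.range m,
        ∫ ω, (qT A)^[l] (qH (P j)) (ρ n ω) ((P j * ρ n ω).trace).re ∂μ := by
      intro n
      rw [hS, integral_finsetSum _ (fun j _ => integrable_finsetSum _ fun l _ => hint j l n)]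
      refine Finset.sum_congr rfl fun j _ => ?_
      rw [integral_finsetSum _ fun l _ => hint j l n]
    simp_rw [e]
    have := tendsto_finsetSum (Finset.univ : Finset (Fin N)) (fun j _ =>
      tendsto_finsetSum (Finset.range m) (fun l _ => hE j l))
    simpa using this
  have hex : ∀ m : ℕ, ∃ n, m ≤ n ∧ ∫ ω, S m n ω ∂μ ≤ (1/2 : ℝ) ^ m := by
    intro m
    have h1 : ∀ᶠ n in atTop, ∫ ω, S m n ω ∂μ < (1/2 : ℝ) ^ m :=
      (hSE m).eventually_lt_const (by positivity)
    obtain ⟨n, h2, h3⟩ := (h1.and (eventually_ge_atTop m)).exists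
    exact ⟨n, h3, h2.le⟩
  choose ν hν1 hν2 using hex
  have hνt : Tendsto ν atTop atTop := tendsto_atTop_mono hν1 tendsto_id
  have hfin : ∫⁻ ω, ∑' m, ENNReal.ofReal (S m (ν m) ω) ∂μ ≠ ⊤ := by
    rw [lintegral_tsum fun m => (hSm m (ν m)).ennreal_ofReal.aemeasurable]
    refine ne_top_of_le_ne_top (summable_geometric_two.tsum_ofReal_ne_top) (ENNReal.tsum_le_tsum fun m => ?_)
    rw [← ofReal_integral_eq_lintegral_ofReal (hSint _ _) (Eventually.of_forall (hSnn _ _))]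
    exact ENNReal.ofReal_le_ofReal (hν2 m)
  have hae := ae_lt_top (Measurable.ennreal_tsum fun m => (hSm m (ν m)).ennreal_ofReal) hfin
  filter_upwards [hae, ae_all_iff.2 hQT.density, ae_all_iff.2 has] with ω h1 h2 h3
  have hS0 : Tendsto (fun m => S m (ν m) ω) atTop (𝓝 0) := by
    have := ENNReal.tendsto_atTop_zero_of_tsum_ne_top h1.ne
    have := (ENNReal.tendsto_toReal ENNReal.zero_ne_top).comp this
    simpa [Function.comp_def, ENNReal.toReal_ofReal (hSnn _ _ _)] using this
  obtain ⟨σ, hσ, φ, hφ, hlim⟩ := (q_dens_compact k).tendsto_subseq (x := fun m => ρ (ν m) ω)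
    (fun m => h2 _)
  have hp : ∀ j, Tendsto (fun m => ((P j * ρ (ν (φ m)) ω).trace).re) atTop (𝓝 (pinf j ω)) :=
    fun j => (h3 j).comp (hνt.comp hφ.tendsto_atTop)
  refine ⟨σ, hσ, fun j => ?_, fun j l => ?_⟩
  · exact tendsto_nhds_unique (((qF_cont (P j)).tendsto σ).comp hlim) (hp j)
  · have t1 : Tendsto (fun m => (qT A)^[l] (qH (P j)) (ρ (ν (φ m)) ω) ((P j * ρ (ν (φ m)) ω).trace).re)
        atTop (𝓝 ((qT A)^[l] (qH (P j)) σ (pinf j ω))) :=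
      ((hg j l).cont.tendsto (σ, pinf j ω)).comp (hlim.prodMk_nhds (hp j))
    refine tendsto_nhds_unique t1 ?_
    refine tendsto_of_tendsto_of_tendsto_of_le_of_le' tendsto_const_nhds
      (hS0.comp hφ.tendsto_atTop) (Eventually.of_forall fun m => hnn _ _ _ _) ?_
    filter_upwards [hφ.tendsto_atTop.eventually_gt_atTop l] with m hm
    refine le_trans ?_ (Finset.single_le_sum (f := fun j => ∑ l ∈ Finset.range (φ m),
      (qT A)^[l] (qH (P j)) (ρ (ν (φ m)) ω) ((P j * ρ (ν (φ m)) ω).trace).re)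
      (fun j _ => Finset.sum_nonneg fun l _ => hnn _ _ _ _) (Finset.mem_univ j))
    exact Finset.single_le_sum (f := fun l =>
      (qT A)^[l] (qH (P j)) (ρ (ν (φ m)) ω) ((P j * ρ (ν (φ m)) ω).trace).re)
      (fun l _ => hnn _ _ _ _) (Finset.mem_range.2 hm)

end QHelpers

/-- Under (H1'), (H2) and (H3), almost surely the limit vector
`(p_∞^{(1)}, …, p_∞^{(N)})` of the martingales `p_n^{(j)} = Tr(P_j ρ_n)` has exactly one
coordinate equal to `1` and all others equal to `0`, and
`ℙ_ρ[p_∞^{(j)} = 1] = p_0^{(j)} = 1 − ℙ_ρ[p_∞^{(j)} = 0]`. -/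
theorem stmt17 {k d N : ℕ} (hd : 1 ≤ d)
    (A : Fin (2 * d) → Matrix (Fin k) (Fin k) ℂ)
    (hA : ∑ j, (A j)ᴴ * A j = 1)
    (P : Fin N → Matrix (Fin k) (Fin k) ℂ)
    (hsa : ∀ j, (P j)ᴴ = P j) (hidem : ∀ j, P j * P j = P j)
    (horth : ∀ j j', j ≠ j' → P j * P j' = 0)
    (hsum : ∑ j, P j = 1)
    (hcomm : ∀ (i : Fin (2 * d)) (j : Fin N), P j * A i = A i * P j)
    -- (H2): each `L^{(j)}` admits a unique invariant state `ρ_∞^{(j)}` on `E_j`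
    (ρinfj : Fin N → Matrix (Fin k) (Fin k) ℂ)
    (hρinfj : ∀ j, IsDensity (ρinfj j) ∧ P j * ρinfj j * P j = ρinfj j)
    (hinvj : ∀ j, (∑ i, (A i * P j) * ρinfj j * (A i * P j)ᴴ) = ρinfj j)
    (huniqj : ∀ j σ, IsDensity σ → P j * σ * P j = σ →
      (∑ i, (A i * P j) * σ * (A i * P j)ᴴ) = σ → σ = ρinfj j)
    -- (H3): the vectors `m^{(j)}` are pairwise distinct
    (hm : ∀ j j', j ≠ j' →
      (fun i : Fin (2 * d) => ((A i * ρinfj j * (A i)ᴴ).trace).re) ≠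
        (fun i : Fin (2 * d) => ((A i * ρinfj j' * (A i)ᴴ).trace).re))
    {Ω : Type} {mΩ : MeasurableSpace Ω} (μ : Measure Ω) [IsProbabilityMeasure μ]
    (ℱ : Filtration ℕ mΩ)
    (ρ : ℕ → Ω → Matrix (Fin k) (Fin k) ℂ) (X : ℕ → Ω → Fin d → ℤ)
    (hQT : IsQTraj A μ ℱ ρ X)
    (ρ₀ : Matrix (Fin k) (Fin k) ℂ) (hρ₀ : IsDensity ρ₀)
    (hinit : ∀ ω, ρ 0 ω = ρ₀)
    (pinf : Fin N → Ω → ℝ)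
    (has : ∀ j, ∀ᵐ ω ∂μ,
      Tendsto (fun n => ((P j * ρ n ω).trace).re) atTop (nhds (pinf j ω))) :
    (∀ᵐ ω ∂μ, ∃ j, pinf j ω = 1 ∧ ∀ j', j' ≠ j → pinf j' ω = 0) ∧
    (∀ j, (μ {ω | pinf j ω = 1}).toReal = ((P j * ρ₀).trace).re ∧
      (μ {ω | pinf j ω = 0}).toReal = 1 - ((P j * ρ₀).trace).re) := by
  have hp01 : ∀ j n, ∀ᵐ ω ∂μ, ((P j * ρ n ω).trace).re ∈ Set.Icc (0:ℝ) 1 := by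
    intro j n
    filter_upwards [hQT.density n] with ω hω
    exact q_p01 hsa hidem hsum hω j
  have hpm : ∀ j n, Measurable[ℱ n] (fun ω => ((P j * ρ n ω).trace).re) := fun j n =>
    (qF_cont (P j)).measurable.comp (hQT.adapted_ρ n)
  have hsub := q_subseq hA P hsa hidem hsum hQT pinf has
  have hdich : ∀ᵐ ω ∂μ, ∃ j, pinf j ω = 1 ∧ ∀ j', j' ≠ j → pinf j' ω = 0 := by
    filter_upwards [hsub] with ω hω
    obtain ⟨σ, hσ, hc, hH⟩ := hω
    have h1 := q_det hA P hsa hidem hcomm ρinfj huniqj hm σ hσ (fun j => pinf j ω) hc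
      (fun j i l => q_of_zero (P j) σ _ i l (hH j (l+1)))
    have hs : ∑ j, pinf j ω = 1 := by
      simp_rw [← hc]
      exact q_psum hsum hσ
    have : ∃ j, pinf j ω ≠ 0 := by
      by_contra! h
      simp [h] at hs
    obtain ⟨j, hj⟩ := this
    have hz : ∀ j', j' ≠ j → pinf j' ω = 0 := fun j' hj' => (h1 j' j hj').resolve_right hj
    refine ⟨j, ?_, hz⟩
    rw [← hs, Finset.sum_eq_single j (fun b _ hb => hz b hb) (by simp)]
  refine ⟨hdich, fun j => ?_⟩
  have hmart : ∀ n, ∫ ω, ((P j * ρ n ω).trace).re ∂μ = ((P j * ρ₀).trace).re := by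
    intro n
    have := q_multi_step hA hQT 0 n (f := fun τ _ => ((P j * τ).trace).re)
      (q_good_lin (P j)) (Y := fun _ => 0) measurable_const (by simp)
    rw [zero_add] at this
    rw [this]
    have e : (qT A)^[n] (fun τ _ => ((P j * τ).trace).re) = fun τ _ => ((P j * τ).trace).re := by
      refine Function.iterate_fixed ?_ n
      funext τ c
      unfold qT
      rw [← Complex.re_sum, ← Matrix.trace_sum, ← Finset.mul_sum,
        qF_qL hA (fun i => hcomm i j)]
    rw [e]
    simp [hinit]
  have hlim : Tendsto (fun n => ∫ ω, ((P j * ρ n ω).trace).re ∂μ) atTop (nhds (∫ ω, pinf j ω ∂μ)) := by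
    refine tendsto_integral_of_dominated_convergence (fun _ => 1)
      (fun n => ((hpm j n).mono (ℱ.le n) le_rfl).aestronglyMeasurable) (integrable_const _)
      (fun n => ?_) (has j)
    filter_upwards [hp01 j n] with ω hω
    rw [Real.norm_eq_abs, abs_of_nonneg hω.1]; exact hω.2
  simp_rw [hmart] at hlim
  have hmean : ∫ ω, pinf j ω ∂μ = ((P j * ρ₀).trace).re := tendsto_nhds_unique hlim tendsto_const_nhds
  have hpi : AEStronglyMeasurable (pinf j) μ :=
    aestronglyMeasurable_of_tendsto_ae atTop
      (fun n => ((hpm j n).mono (ℱ.le n) le_rfl).aestronglyMeasurable) (has j)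
  have hn1 : NullMeasurableSet {ω | pinf j ω = 1} μ :=
    hpi.aemeasurable.nullMeasurableSet_preimage (measurableSet_singleton (1:ℝ))
  have h01 : ∀ᵐ ω ∂μ, pinf j ω = 0 ∨ pinf j ω = 1 := by
    filter_upwards [hdich] with ω hω
    obtain ⟨i, hi, hi'⟩ := hω
    by_cases h : j = i
    · right; rw [h, hi]
    · left; exact hi' j h
  have hone : (μ {ω | pinf j ω = 1}).toReal = ((P j * ρ₀).trace).re := by
    rw [← hmean]
    have : pinf j =ᵐ[μ] Set.indicator {ω | pinf j ω = 1} (fun _ => (1:ℝ)) := by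
      filter_upwards [h01] with ω hω
      rcases hω with h | h <;> simp [Set.indicator, h]
    rw [integral_congr_ae this, integral_indicator₀ hn1]
    simp [Measure.real]
  refine ⟨hone, ?_⟩
  have hcompl : {ω | pinf j ω = 0} =ᵐ[μ] ({ω | pinf j ω = 1}ᶜ : Set Ω) := by
    filter_upwards [h01] with ω hω
    have : (pinf j ω = 0) = ¬ (pinf j ω = 1) := by
      rcases hω with h | h <;> simp [h]
    exact this
  rw [measure_congr hcompl, ← hone]
  have := prob_compl_eq_one_sub₀ hn1
  rw [this, ENNReal.toReal_sub_of_le prob_le_one (by simp)]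
  simp
end
end

section
/- (Conditional CLT in the block-diagonal case.) Assume (H1'), (H2) and (H3) as above, fix j with p_0^{(j)} = Tr(P_j ρ) > 0, and let (ρ_n, X_n)_{n≥0} be the quantum trajectory process under ℙ_ρ. Set m^{(j)} = Σ_{i=1}^{2d} Tr(A_i ρ_∞^{(j)} A_i^*) e_i ∈ ℝ^d. Then, conditionally on the event {p_∞^{(j)} = 1} (i.e. under ℙ_ρ[ · | p_∞^{(j)} = 1 ]), the process (X_n − n m^{(j)})/√n converges in distribution to the Gaussian N(0, C^{(j)}) on ℝ^d, where C^{(j)} is the covariance matrix of the main Central Limit Theorem computed for the family (A_i^{(j)})_{i=1}^{2d} on E_j with invariant state ρ_∞^{(j)}: C^{(j)}_{rs} = δ_{rs}( Tr(A_r^{(j)} ρ_∞^{(j)} A_r^{(j)*}) + Tr(A_{r+d}^{(j)} ρ_∞^{(j)} A_{r+d}^{(j)*}) ) − m_r^{(j)} m_s^{(j)} + ( Tr(A_r^{(j)} ρ_∞^{(j)} A_r^{(j)*} L_s^{(j)}) + Tr(A_s^{(j)} ρ_∞^{(j)} A_s^{(j)*} L_r^{(j)}) − Tr(A_{r+d}^{(j)}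 ρ_∞^{(j)} A_{r+d}^{(j)*} L_s^{(j)}) − Tr(A_{s+d}^{(j)} ρ_∞^{(j)} A_{s+d}^{(j)*} L_r^{(j)}) ) − ( m_r^{(j)} Tr(ρ_∞^{(j)} L_s^{(j)}) + m_s^{(j)} Tr(ρ_∞^{(j)} L_r^{(j)}) ), with L_r^{(j)} an operator on E_j solving L_r^{(j)} − L^{(j)*}(L_r^{(j)}) = Σ_{i=1}^{2d} (e_i·e_r) A_i^{(j)*} A_i^{(j)} − m_r^{(j)} I_{E_j}. -/
open MeasureTheory Filter Matrix Finset
open scoped ComplexOrder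

noncomputable section

/-- The drift vector `m = Σ_{i=1}^{2d} Tr(A_i ρ_∞ A_i^*) e_i ∈ ℝ^d`. -/
def mvec {k d : ℕ} (A : Fin (2 * d) → Matrix (Fin k) (Fin k) ℂ)
    (ρinf : Matrix (Fin k) (Fin k) ℂ) : Fin d → ℝ :=
  fun j => ∑ i, ((A i * ρinf * (A i)ᴴ).trace).re * dirR d i j

/-- The index `i ∈ {1,…,d}` viewed inside `Fin (2d)` (direction `+e_i`). -/
def lo {d : ℕ} (i : Fin d) : Fin (2 * d) := ⟨i, by have := i.isLt; omega⟩

/-- The index `i + d` viewed inside `Fin (2d)` (direction `-e_i`). -/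
def hi {d : ℕ} (i : Fin d) : Fin (2 * d) := ⟨(i : ℕ) + d, by have := i.isLt; omega⟩

/-- The covariance matrix `C` of the Central Limit Theorem. -/
def Cmat {k d : ℕ} (A : Fin (2 * d) → Matrix (Fin k) (Fin k) ℂ)
    (ρinf : Matrix (Fin k) (Fin k) ℂ) (LL : Fin d → Matrix (Fin k) (Fin k) ℂ)
    (i j : Fin d) : ℝ :=
  (if i = j then ((A (lo i) * ρinf * (A (lo i))ᴴ).trace).re
      + ((A (hi i) * ρinf * (A (hi i))ᴴ).trace).re else 0)
    - mvec A ρinf i * mvec A ρinf j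
    + (((A (lo i) * ρinf * (A (lo i))ᴴ * LL j).trace).re
      + ((A (lo j) * ρinf * (A (lo j))ᴴ * LL i).trace).re
      - ((A (hi i) * ρinf * (A (hi i))ᴴ * LL j).trace).re
      - ((A (hi j) * ρinf * (A (hi j))ᴴ * LL i).trace).re)
    - (mvec A ρinf i * ((ρinf * LL j).trace).re
      + mvec A ρinf j * ((ρinf * LL i).trace).re)

namespace QT

open scoped Topology

variable {k : ℕ} {ι : Type} [Fintype ι]

lemma psd_entry (M : Matrix (Fin k) (Fin k) ℂ) (hM : M.PosSemidef) (a b : Fin k) :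
    ‖M a b‖ ≤ M.trace.re := by
  obtain ⟨B, rfl⟩ : ∃ B : Matrix (Fin k) (Fin k) ℂ, M = Bᴴ * B := by
    open scoped MatrixOrder in
    exact CStarAlgebra.nonneg_iff_eq_star_mul_self.mp hM.nonneg
  have key : (Bᴴ * B).trace.re = ∑ i, ∑ c, ‖B c i‖ ^ 2 := by
    simp only [Matrix.trace, Matrix.diag, Matrix.mul_apply, conjTranspose_apply, Complex.re_sum]
    refine Finset.sum_congr rfl fun i _ => Finset.sum_congr rfl fun c _ => ?_
    rw [RCLike.star_def, ← Complex.normSq_eq_conj_mul_self, Complex.ofReal_re,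
      Complex.normSq_eq_norm_sq]
  rw [key]
  have h1 : ∀ a, ∑ c, ‖B c a‖ ^ 2 ≤ ∑ i, ∑ c, ‖B c i‖ ^ 2 := fun a =>
    Finset.single_le_sum (f := fun i => ∑ c, ‖B c i‖ ^ 2)
      (fun i _ => Finset.sum_nonneg fun c _ => by positivity) (Finset.mem_univ a)
  have h2 : ‖(Bᴴ * B) a b‖ ≤ ∑ c, (‖B c a‖ ^ 2 + ‖B c b‖ ^ 2) / 2 := by
    rw [Matrix.mul_apply]
    refine (norm_sum_le _ _).trans (Finset.sum_le_sum fun c _ => ?_)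
    rw [conjTranspose_apply, norm_mul, norm_star]
    nlinarith [sq_nonneg (‖B c a‖ - ‖B c b‖)]
  rw [← Finset.sum_div, Finset.sum_add_distrib] at h2
  linarith [h1 a, h1 b]

lemma psd_of_tendsto {α : Type*} {F : Filter α} [F.NeBot] {c : α → Matrix (Fin k) (Fin k) ℂ}
    {y : Matrix (Fin k) (Fin k) ℂ} (hc : ∀ n, (c n).PosSemidef) (h : Tendsto c F (𝓝 y)) :
    y.PosSemidef := by
  refine PosSemidef.of_dotProduct_mulVec_nonneg ?_ ?_
  · have h1 : Tendsto (fun n => (c n)ᴴ) F (𝓝 yᴴ) :=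
      ((Continuous.matrix_conjTranspose continuous_id).tendsto y).comp h
    have h2 : (fun n => (c n)ᴴ) = c := by
      funext n; exact (hc n).1
    rw [h2] at h1
    exact tendsto_nhds_unique h1 h
  · intro x
    have h1 : Tendsto (fun n => star x ⬝ᵥ ((c n) *ᵥ x)) F (𝓝 (star x ⬝ᵥ (y *ᵥ x))) :=
      ((by fun_prop : Continuous fun m : Matrix (Fin k) (Fin k) ℂ =>
        star x ⬝ᵥ (m *ᵥ x)).tendsto y).comp h
    exact ge_of_tendsto' h1 fun n => (hc n).dotProduct_mulVec_nonneg x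

/-- The Schroedinger map. -/
def LB (B : ι → Matrix (Fin k) (Fin k) ℂ) :
    Matrix (Fin k) (Fin k) ℂ →ₗ[ℂ] Matrix (Fin k) (Fin k) ℂ where
  toFun σ := ∑ i, B i * σ * (B i)ᴴ
  map_add' x y := by simp [mul_add, add_mul, Finset.sum_add_distrib]
  map_smul' c x := by simp [Finset.smul_sum]

/-- The Heisenberg map. -/
def LA (B : ι → Matrix (Fin k) (Fin k) ℂ) :
    Matrix (Fin k) (Fin k) ℂ →ₗ[ℂ] Matrix (Fin k) (Fin k) ℂ where
  toFun σ := ∑ i, (B i)ᴴ * σ * B i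
  map_add' x y := by simp [mul_add, add_mul, Finset.sum_add_distrib]
  map_smul' c x := by simp [Finset.smul_sum]

lemma LB_apply (B : ι → Matrix (Fin k) (Fin k) ℂ) (σ) : LB B σ = ∑ i, B i * σ * (B i)ᴴ := rfl
lemma LA_apply (B : ι → Matrix (Fin k) (Fin k) ℂ) (σ) : LA B σ = ∑ i, (B i)ᴴ * σ * B i := rfl

/-- block data -/
structure Blk (B : ι → Matrix (Fin k) (Fin k) ℂ) (P ρ : Matrix (Fin k) (Fin k) ℂ) : Prop where
  sa : Pᴴ = P
  idem : P * P = P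
  PB : ∀ i, P * B i = B i
  BP : ∀ i, B i * P = B i
  sum : ∑ i, (B i)ᴴ * B i = P
  dens : IsDensity ρ
  supp : P * ρ * P = ρ
  inv : LB B ρ = ρ
  uniq : ∀ σ, IsDensity σ → P * σ * P = σ → LB B σ = σ → σ = ρ

variable {B : ι → Matrix (Fin k) (Fin k) ℂ} {P ρ : Matrix (Fin k) (Fin k) ℂ}

lemma Blk.BHP (h : Blk B P ρ) (i) : P * (B i)ᴴ = (B i)ᴴ := by
  have := congrArg conjTranspose (h.BP i)
  rwa [conjTranspose_mul, h.sa] at this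

lemma Blk.PBH (h : Blk B P ρ) (i) : (B i)ᴴ * P = (B i)ᴴ := by
  have := congrArg conjTranspose (h.PB i)
  rwa [conjTranspose_mul, h.sa] at this

lemma Blk.LB_supp (h : Blk B P ρ) (σ) : P * LB B σ * P = LB B σ := by
  simp only [LB_apply, Finset.mul_sum, Finset.sum_mul]
  refine Finset.sum_congr rfl fun i _ => ?_
  rw [← Matrix.mul_assoc, ← Matrix.mul_assoc, h.PB, Matrix.mul_assoc _ _ P, h.PBH]

lemma Blk.LA_supp (h : Blk B P ρ) (σ) : P * LA B σ * P = LA B σ := by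
  simp only [LA_apply, Finset.mul_sum, Finset.sum_mul]
  refine Finset.sum_congr rfl fun i _ => ?_
  rw [← Matrix.mul_assoc, ← Matrix.mul_assoc, h.BHP, Matrix.mul_assoc _ _ P, h.BP]

lemma trace_dual (σ M : Matrix (Fin k) (Fin k) ℂ) :
    (LB B σ * M).trace = (σ * LA B M).trace := by
  simp only [LB_apply, LA_apply, Finset.mul_sum, Finset.sum_mul, trace_sum]
  refine Finset.sum_congr rfl fun i _ => ?_
  rw [Matrix.mul_assoc, Matrix.mul_assoc, Matrix.trace_mul_comm]
  simp only [Matrix.mul_assoc]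

lemma Blk.trace_LB (h : Blk B P ρ) (σ) (hσ : P * σ * P = σ) : (LB B σ).trace = σ.trace := by
  have h1 := trace_dual (B := B) σ 1
  rw [Matrix.mul_one] at h1
  rw [h1, LA_apply]
  simp only [Matrix.mul_one]
  rw [h.sum]
  conv_rhs => rw [← hσ]
  conv_lhs => rw [← hσ]
  rw [Matrix.mul_assoc _ P P, h.idem]

lemma psd_LB (σ : Matrix (Fin k) (Fin k) ℂ) (hσ : σ.PosSemidef) : (LB B σ).PosSemidef := by
  rw [LB_apply]
  exact posSemidef_sum _ fun i _ => hσ.mul_mul_conjTranspose_same _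

/-- Cesaro averages -/
def ces (B : ι → Matrix (Fin k) (Fin k) ℂ) (n : ℕ) :
    Matrix (Fin k) (Fin k) ℂ →ₗ[ℂ] Matrix (Fin k) (Fin k) ℂ :=
  ((n : ℂ) + 1)⁻¹ • ∑ m ∈ Finset.range (n + 1), (LB B) ^ m

lemma ces_apply (n : ℕ) (σ : Matrix (Fin k) (Fin k) ℂ) :
    ces B n σ = ((n : ℂ) + 1)⁻¹ • ∑ m ∈ Finset.range (n + 1), ((LB B) ^ m) σ := by
  simp [ces, LinearMap.sum_apply]

lemma Blk.pow_good (h : Blk B P ρ) (σ) (h1 : IsDensity σ) (h2 : P * σ * P = σ) (m : ℕ) :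
    IsDensity (((LB B) ^ m) σ) ∧ P * (((LB B) ^ m) σ) * P = ((LB B) ^ m) σ := by
  induction m with
  | zero => exact ⟨by simpa using h1, by simpa using h2⟩
  | succ m ih =>
    rw [pow_succ', Module.End.mul_apply]
    exact ⟨⟨psd_LB _ ih.1.1, by rw [h.trace_LB _ ih.2, ih.1.2]⟩, h.LB_supp _⟩

lemma Blk.ces_good (h : Blk B P ρ) (σ) (h1 : IsDensity σ) (h2 : P * σ * P = σ) (n : ℕ) :
    IsDensity (ces B n σ) ∧ P * (ces B n σ) * P = ces B n σ := by
  have hn : ((n : ℂ) + 1) ≠ 0 := by exact_mod_cast Nat.succ_ne_zero n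
  rw [ces_apply]
  refine ⟨⟨?_, ?_⟩, ?_⟩
  · refine PosSemidef.smul (posSemidef_sum _ fun i _ => (h.pow_good σ h1 h2 i).1.1) ?_
    have : ((n : ℂ) + 1)⁻¹ = (((n : ℝ) + 1)⁻¹ : ℝ) := by push_cast; rfl
    rw [this]
    exact_mod_cast (by positivity : (0:ℝ) ≤ ((n : ℝ) + 1)⁻¹)
  · rw [trace_smul, trace_sum, Finset.sum_congr rfl fun i _ => (h.pow_good σ h1 h2 i).1.2]
    simp [hn]
  · simp only [Matrix.mul_smul, Matrix.smul_mul, Finset.mul_sum, Finset.sum_mul]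
    rw [Finset.sum_congr rfl fun i _ => (h.pow_good σ h1 h2 i).2]

lemma compact_ball : IsCompact {M : Matrix (Fin k) (Fin k) ℂ | ∀ a b, ‖M a b‖ ≤ 1} := by
  have h := isCompact_univ_pi (X := fun _ : Fin k => Fin k → ℂ)
    (s := fun _ => Set.pi Set.univ fun _ => Metric.closedBall (0:ℂ) 1)
    (fun a => isCompact_univ_pi fun b => isCompact_closedBall 0 1)
  have e : {M : Matrix (Fin k) (Fin k) ℂ | ∀ a b, ‖M a b‖ ≤ 1} =
      (Set.pi Set.univ fun _ : Fin k => Set.pi Set.univ fun _ : Fin k =>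
        Metric.closedBall (0:ℂ) 1 : Set (Fin k → Fin k → ℂ)) := by
    refine Set.ext fun M => ?_
    exact ⟨fun h a _ b _ => mem_closedBall_zero_iff.mpr (h a b),
      fun h a b => mem_closedBall_zero_iff.mp (h a trivial b trivial)⟩
  rw [e]
  exact h

lemma density_entry {M : Matrix (Fin k) (Fin k) ℂ} (h : IsDensity M) (a b) : ‖M a b‖ ≤ 1 := by
  have := psd_entry M h.1 a b
  rwa [h.2, Complex.one_re] at this

lemma Blk.ces_tendsto (h : Blk B P ρ) (U : Ultrafilter ℕ) (hU : (U : Filter ℕ) ≤ atTop)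
    (σ) (h1 : IsDensity σ) (h2 : P * σ * P = σ) :
    Tendsto (fun n => ces B n σ) U (𝓝 ρ) := by
  have hg := h.ces_good σ h1 h2
  obtain ⟨y, -, hy⟩ := compact_ball.ultrafilter_le_nhds (U.map fun n => ces B n σ)
    (by
      rw [le_principal_iff]
      exact Filter.mem_map.mpr (Filter.univ_mem' fun n a b => density_entry (hg n).1 a b))
  have hy' : Tendsto (fun n => ces B n σ) U (𝓝 y) := hy
  have e : y = ρ := by
    have hsmul : ∀ n, LB B (ces B n σ) - ces B n σ
        = ((n : ℂ) + 1)⁻¹ • (((LB B) ^ (n + 1)) σ - σ) := by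
      intro n
      rw [ces_apply, map_smul, map_sum, ← smul_sub, ← Finset.sum_sub_distrib]
      congr 1
      have : ∀ m, LB B (((LB B) ^ m) σ) = ((LB B) ^ (m + 1)) σ := by
        intro m; rw [pow_succ', Module.End.mul_apply]
      simp only [this]
      rw [Finset.sum_range_sub (fun m => ((LB B) ^ m) σ)]
      simp
    have hcont : Continuous (LB B) := by
      change Continuous fun σ => ∑ i, B i * σ * (B i)ᴴ
      fun_prop
    have ht : Tendsto (fun n => LB B (ces B n σ) - ces B n σ) U (𝓝 (LB B y - y)) :=
      ((hcont.tendsto y).comp hy').sub hy'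
    have ht0 : Tendsto (fun n => LB B (ces B n σ) - ces B n σ) U (𝓝 0) := by
      refine Tendsto.mono_left ?_ hU
      refine tendsto_pi_nhds.mpr fun a => tendsto_pi_nhds.mpr fun b => ?_
      refine squeeze_zero_norm (a := fun n : ℕ => ((n : ℝ) + 1)⁻¹ * 2) ?_ ?_
      · intro n
        rw [hsmul]
        simp only [Matrix.smul_apply, Matrix.sub_apply, smul_eq_mul, norm_mul]
        have e1 : ‖((n : ℂ) + 1)⁻¹‖ = ((n : ℝ) + 1)⁻¹ := by
          rw [norm_inv]; congr 1
          have : ((n : ℂ) + 1) = ((n + 1 : ℕ) : ℂ) := by push_cast; rfl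
          rw [this, Complex.norm_natCast]; push_cast; rfl
        rw [e1]
        gcongr
        refine (norm_sub_le _ _).trans ?_
        linarith [density_entry (h.pow_good σ h1 h2 (n+1)).1 a b, density_entry h1 a b]
      · have := (tendsto_one_div_add_atTop_nhds_zero_nat (𝕜 := ℝ)).mul_const 2
        simpa using this
    have e1 : LB B y = y := sub_eq_zero.mp (tendsto_nhds_unique ht ht0)
    refine h.uniq y ⟨psd_of_tendsto (fun n => (hg n).1.1) hy', ?_⟩ ?_ e1
    · have : Tendsto (fun n => (ces B n σ).trace) U (𝓝 y.trace) :=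
        ((by fun_prop : Continuous fun m : Matrix (Fin k) (Fin k) ℂ => m.trace).tendsto y).comp hy'
      simp only [(hg _).1.2] at this
      exact (tendsto_nhds_unique this tendsto_const_nhds)
    · rw [← e1]; exact h.LB_supp y
  rwa [e] at hy'

lemma Blk.ces_tendsto' (h : Blk B P ρ) (U : Ultrafilter ℕ) (hU : (U : Filter ℕ) ≤ atTop)
    (σ : Matrix (Fin k) (Fin k) ℂ) (h1 : σ.PosSemidef) (h2 : P * σ * P = σ) :
    Tendsto (fun n => ces B n σ) U (𝓝 (σ.trace • ρ)) := by
  by_cases h0 : σ.trace = 0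
  · rw [h1.trace_eq_zero_iff] at h0
    subst h0
    simp
  · have hinv : 0 ≤ (σ.trace)⁻¹ := by
      have h3 := h1.trace_nonneg
      obtain ⟨hr, hi⟩ := Complex.nonneg_iff.mp h3
      have hr' : σ.trace = (σ.trace.re : ℂ) := Complex.ext rfl (by simp [← hi])
      rw [hr', ← Complex.ofReal_inv]
      exact_mod_cast inv_nonneg.mpr hr
    have := h.ces_tendsto U hU ((σ.trace)⁻¹ • σ)
      ⟨h1.smul hinv, by rw [trace_smul, smul_eq_mul, inv_mul_cancel₀ h0]⟩
      (by rw [Matrix.mul_smul, Matrix.smul_mul, h2])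
    have := this.const_smul σ.trace
    simpa [smul_smul, h0] using this

lemma Blk.fix (h : Blk B P ρ) (σ) (hσ : LB B σ = σ) : σ = σ.trace • ρ := by
  have hs : P * σ * P = σ := by rw [← hσ]; exact h.LB_supp σ
  obtain ⟨U, hU⟩ := Filter.exists_ultrafilter_le (atTop : Filter ℕ)
  let Y : ℂ → Matrix (Fin k) (Fin k) ℂ := fun z => (σ + z • P) * (σ + z • P)ᴴ
  have hPs : P * σ = σ := by
    conv_lhs => rw [← hs]
    rw [Matrix.mul_assoc, ← Matrix.mul_assoc P P, h.idem, ← Matrix.mul_assoc, hs]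
  have hsP : σ * P = σ := by
    conv_lhs => rw [← hs]
    rw [Matrix.mul_assoc, h.idem, hs]
  have hsP' : P * σᴴ = σᴴ := by
    have := congrArg conjTranspose hsP
    rwa [conjTranspose_mul, h.sa] at this
  have hPs' : σᴴ * P = σᴴ := by
    have := congrArg conjTranspose hPs
    rwa [conjTranspose_mul, h.sa] at this
  have hY1 : ∀ z, (Y z).PosSemidef := fun z => posSemidef_self_mul_conjTranspose _
  have hY2 : ∀ z, P * Y z * P = Y z := by
    intro z
    have e1 : P * (σ + z • P) = σ + z • P := by
      rw [mul_add, hPs, Matrix.mul_smul, h.idem]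
    have e2 : (σ + z • P)ᴴ * P = (σ + z • P)ᴴ := by
      have := congrArg conjTranspose e1
      rwa [conjTranspose_mul, h.sa] at this
    simp only [Y]
    rw [← Matrix.mul_assoc, e1, Matrix.mul_assoc, e2]
  have hdec : σ = (1/4 : ℂ) • (Y 1 + Complex.I • Y Complex.I + (-1 : ℂ) • Y (-1)
      + (-Complex.I) • Y (-Complex.I)) := by
    simp only [Y, conjTranspose_add, conjTranspose_smul, h.sa, mul_add, add_mul,
      Matrix.mul_smul, Matrix.smul_mul, hsP, hsP', h.idem, smul_add, smul_smul]
    simp only [star_one, star_neg, RCLike.star_def, Complex.conj_I]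
    ext a b
    simp only [Matrix.add_apply, Matrix.smul_apply, smul_eq_mul]
    have hI := Complex.I_mul_I
    ring_nf
    simp only [Complex.I_sq]
    ring
  have hfix : ∀ n, ces B n σ = σ := by
    intro n
    have hn : ((n : ℂ) + 1) ≠ 0 := by exact_mod_cast Nat.succ_ne_zero n
    have hp : ∀ m, ((LB B) ^ m) σ = σ := by
      intro m
      induction m with
      | zero => simp
      | succ m ih => rw [pow_succ, Module.End.mul_apply, hσ, ih]
    rw [ces_apply]
    simp only [hp, Finset.sum_const, Finset.card_range]
    rw [← Nat.cast_smul_eq_nsmul ℂ, smul_smul]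
    push_cast
    rw [inv_mul_cancel₀ hn, one_smul]
  have T : ∀ z, Tendsto (fun n => ces B n (Y z)) U (𝓝 ((Y z).trace • ρ)) :=
    fun z => h.ces_tendsto' U hU _ (hY1 z) (hY2 z)
  have hlim : Tendsto (fun n => ces B n σ) U (𝓝 (σ.trace • ρ)) := by
    have h1 := (((T 1).add ((T Complex.I).const_smul Complex.I)).add
      ((T (-1)).const_smul (-1 : ℂ))).add ((T (-Complex.I)).const_smul (-Complex.I))
    have h2 := h1.const_smul (1/4 : ℂ)
    have e1 : (fun n => ces B n σ) = fun n => (1/4 : ℂ) • (ces B n (Y 1) + Complex.I • ces B n (Y Complex.I) + (-1 : ℂ) • ces B n (Y (-1))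
      + (-Complex.I) • ces B n (Y (-Complex.I))) := by
      funext n
      conv_lhs => rw [hdec]
      simp only [map_add, map_smul]
    have e2 : σ.trace = (1/4 : ℂ) * ((Y 1).trace + Complex.I * (Y Complex.I).trace + (-1 : ℂ) * (Y (-1)).trace
      + (-Complex.I) * (Y (-Complex.I)).trace) := by
      conv_lhs => rw [hdec]
      simp only [trace_add, trace_smul, smul_eq_mul]
    rw [e1, e2]
    simpa only [add_smul, mul_smul, smul_eq_mul] using h2
  simp only [hfix] at hlim
  exact tendsto_nhds_unique tendsto_const_nhds hlim

lemma Blk.poisson (h : Blk B P ρ) (C : Matrix (Fin k) (Fin k) ℂ) (hC : P * C * P = C)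
    (h0 : (ρ * C).trace = 0) : ∃ M, M - LA B M = C ∧ P * M * P = M := by
  have : C ∈ LinearMap.range (LinearMap.id - LA B) := by
    by_contra hn
    obtain ⟨f, hf, hker⟩ := Submodule.exists_le_ker_of_notMem hn
    let σ : Matrix (Fin k) (Fin k) ℂ := fun a b => f (Matrix.single b a 1)
    have hfσ : ∀ M, f M = (σ * M).trace := by
      intro M
      conv_lhs => rw [Matrix.matrix_eq_sum_single M]
      simp only [map_sum, Matrix.trace, Matrix.diag, σ]
      rw [Finset.sum_comm]
      refine Finset.sum_congr rfl fun a _ => Finset.sum_congr rfl fun b _ => ?_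
      have : Matrix.single b a (M b a) = (M b a) • Matrix.single b a (1:ℂ) := by
        simp [Matrix.smul_single]
      rw [this, map_smul, smul_eq_mul, mul_comm]
    have hσ : LB B σ = σ := by
      refine Matrix.ext_iff_trace_mul_right.mpr ?_
      intro M
      rw [trace_dual, ← hfσ, ← hfσ]
      have := hker ⟨M, rfl⟩
      rw [LinearMap.mem_ker] at this
      simp only [LinearMap.sub_apply, LinearMap.id_apply, map_sub] at this
      exact (sub_eq_zero.mp this).symm
    apply hf
    rw [hfσ, h.fix σ hσ, Matrix.smul_mul, trace_smul, h0, smul_zero]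
  obtain ⟨M, hM⟩ := this
  simp only [LinearMap.sub_apply, LinearMap.id_apply] at hM
  refine ⟨M, hM, ?_⟩
  have : M = C + LA B M := by rw [← hM]; abel
  rw [this, mul_add, add_mul, hC, h.LA_supp]

end QT
namespace QT

open scoped Topology

section expand

attribute [local instance] Matrix.normedAddCommGroup Matrix.normedSpace

variable {k : ℕ} {ι : Type} [Fintype ι]
variable {B : ι → Matrix (Fin k) (Fin k) ℂ} {P ρ : Matrix (Fin k) (Fin k) ℂ}

/-- The twisted Heisenberg map. -/
def Dt (B : ι → Matrix (Fin k) (Fin k) ℂ) (w : ι → ℝ) (t : ℝ) (V : Matrix (Fin k) (Fin k) ℂ) :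
    Matrix (Fin k) (Fin k) ℂ :=
  ∑ i, Complex.exp (Complex.I * ((t * w i : ℝ) : ℂ)) • ((B i)ᴴ * V * B i)

/-- The limiting variance. -/
def cc (B : ι → Matrix (Fin k) (Fin k) ℂ) (ρ : Matrix (Fin k) (Fin k) ℂ) (w : ι → ℝ)
    (L : Matrix (Fin k) (Fin k) ℂ) : ℂ :=
  ∑ i, ((w i : ℂ) ^ 2 * (B i * ρ * (B i)ᴴ).trace + 2 * (w i : ℂ) * (B i * ρ * (B i)ᴴ * L).trace)

lemma exp_rem (x : ℝ) : ‖Complex.exp (Complex.I * (x : ℂ)) - (1 + Complex.I * x - (x : ℂ) ^ 2 / 2)‖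
    ≤ |x| ^ 3 * Real.exp |x| := by
  have h := Complex.norm_exp_sub_sum_le_norm_mul_exp (Complex.I * x) 3
  simp only [norm_mul, Complex.norm_I, one_mul, Complex.norm_real, Real.norm_eq_abs] at h
  refine le_trans (le_of_eq ?_) h
  congr 1
  simp only [Finset.sum_range_succ, Finset.sum_range_zero, Nat.factorial]
  have hh : (Complex.I * (x : ℂ)) ^ 2 = - (x : ℂ) ^ 2 := by
    rw [mul_pow, Complex.I_sq]; ring
  rw [hh]
  push_cast
  ring

lemma expand_alg (w : ι → ℝ) (L M : Matrix (Fin k) (Fin k) ℂ) (c : ℂ) (t : ℝ)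
    (hPP : ∑ i, (B i)ᴴ * P * B i = P)
    (hPB : ∀ i, (B i)ᴴ * P * B i = (B i)ᴴ * B i)
    (hL : L - ∑ i, (B i)ᴴ * L * B i = ∑ i, (w i : ℂ) • ((B i)ᴴ * B i))
    (hM : M - ∑ i, (B i)ᴴ * M * B i = (c / 2) • P - (1/2 : ℂ) • (∑ i, (w i : ℂ) ^ 2 • ((B i)ᴴ * B i))
      - ∑ i, (w i : ℂ) • ((B i)ᴴ * L * B i)) :
    Dt B w t (P + (Complex.I * t) • L + ((t : ℂ) ^ 2) • M)
      - (1 - c * t ^ 2 / 2) • (P + (Complex.I * t) • L + ((t : ℂ) ^ 2) • M)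
    = (∑ i, (Complex.exp (Complex.I * ((t * w i : ℝ) : ℂ)) -
        (1 + Complex.I * ((t * w i : ℝ) : ℂ) - ((t * w i : ℝ) : ℂ) ^ 2 / 2)) •
          ((B i)ᴴ * P * B i + (Complex.I * t) • ((B i)ᴴ * L * B i)
            + ((t : ℂ) ^ 2) • ((B i)ᴴ * M * B i)))
      + ((t : ℂ) ^ 3) • (Complex.I • (∑ i, (w i : ℂ) • ((B i)ᴴ * M * B i))
        - (Complex.I / 2) • (∑ i, (w i : ℂ) ^ 2 • ((B i)ᴴ * L * B i)) + (c * Complex.I / 2) • L)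
      + ((t : ℂ) ^ 4) • ((c / 2) • M - (1/2 : ℂ) • (∑ i, (w i : ℂ) ^ 2 • ((B i)ᴴ * M * B i))) := by
  simp only [Dt, mul_add, add_mul, Matrix.mul_smul, Matrix.smul_mul]
  simp only [sub_smul (Complex.exp _), Finset.sum_sub_distrib]
  rw [← sub_eq_zero]
  have key : (∑ i, (1 + Complex.I * ((t * w i : ℝ) : ℂ) - ((t * w i : ℝ) : ℂ) ^ 2 / 2) •
          ((B i)ᴴ * P * B i + (Complex.I * t) • ((B i)ᴴ * L * B i)
            + ((t : ℂ) ^ 2) • ((B i)ᴴ * M * B i)))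
      = (∑ i, (B i)ᴴ * P * B i) + (Complex.I * t) • (∑ i, (B i)ᴴ * L * B i)
        + ((t : ℂ) ^ 2) • (∑ i, (B i)ᴴ * M * B i)
        + (Complex.I * t) • (∑ i, (w i : ℂ) • ((B i)ᴴ * P * B i))
        - ((t : ℂ) ^ 2) • (∑ i, (w i : ℂ) • ((B i)ᴴ * L * B i))
        + (Complex.I * (t : ℂ) ^ 3) • (∑ i, (w i : ℂ) • ((B i)ᴴ * M * B i))
        - ((t : ℂ) ^ 2 / 2) • (∑ i, (w i : ℂ) ^ 2 • ((B i)ᴴ * P * B i))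
        - (Complex.I * (t : ℂ) ^ 3 / 2) • (∑ i, (w i : ℂ) ^ 2 • ((B i)ᴴ * L * B i))
        - ((t : ℂ) ^ 4 / 2) • (∑ i, (w i : ℂ) ^ 2 • ((B i)ᴴ * M * B i)) := by
    simp only [Finset.smul_sum, ← Finset.sum_add_distrib, ← Finset.sum_sub_distrib]
    refine Finset.sum_congr rfl fun i _ => ?_
    push_cast
    have hI := Complex.I_mul_I
    generalize (B i)ᴴ * P * B i = X1
    generalize (B i)ᴴ * L * B i = X2
    generalize (B i)ᴴ * M * B i = X3
    ext a b
    simp only [Matrix.add_apply, Matrix.sub_apply, Matrix.smul_apply, smul_eq_mul]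
    ring_nf
    simp only [Complex.I_sq]
    ring
  rw [key]
  simp only [hPP]
  have hS1 : ∑ i, (w i : ℂ) • ((B i)ᴴ * P * B i) = L - ∑ i, (B i)ᴴ * L * B i := by
    rw [hL]; simp only [hPB]
  have hS2 : ∑ i, (w i : ℂ) ^ 2 • ((B i)ᴴ * P * B i) = (2 : ℂ) • ((c / 2) • P
      - ∑ i, (w i : ℂ) • ((B i)ᴴ * L * B i) - (M - ∑ i, (B i)ᴴ * M * B i)) := by
    rw [hM]
    simp only [hPB]
    module
  rw [hS1, hS2]
  module

lemma Blk.sumP (h : Blk B P ρ) : ∑ i, (B i)ᴴ * P * B i = P := by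
  rw [← h.sum]
  refine Finset.sum_congr rfl fun i _ => ?_
  rw [h.sum, h.PBH]

lemma expand_bound (w : ι → ℝ) (L M : Matrix (Fin k) (Fin k) ℂ) (c : ℂ)
    (hPP : ∑ i, (B i)ᴴ * P * B i = P)
    (hPB : ∀ i, (B i)ᴴ * P * B i = (B i)ᴴ * B i)
    (hL : L - ∑ i, (B i)ᴴ * L * B i = ∑ i, (w i : ℂ) • ((B i)ᴴ * B i))
    (hM : M - ∑ i, (B i)ᴴ * M * B i = (c / 2) • P - (1/2 : ℂ) • (∑ i, (w i : ℂ) ^ 2 • ((B i)ᴴ * B i))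
      - ∑ i, (w i : ℂ) • ((B i)ᴴ * L * B i)) :
    ∃ K : ℝ, 0 ≤ K ∧ ∀ t : ℝ, |t| ≤ 1 →
    ‖Dt B w t (P + (Complex.I * t) • L + ((t : ℂ) ^ 2) • M)
      - (1 - c * t ^ 2 / 2) • (P + (Complex.I * t) • L + ((t : ℂ) ^ 2) • M)‖ ≤ K * |t| ^ 3 := by
  refine ⟨(∑ i, (|w i| ^ 3 * Real.exp |w i|) * (‖(B i)ᴴ * P * B i‖ + ‖(B i)ᴴ * L * B i‖ +
      ‖(B i)ᴴ * M * B i‖)) + ‖(Complex.I • (∑ i, (w i : ℂ) • ((B i)ᴴ * M * B i))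
        - (Complex.I / 2) • (∑ i, (w i : ℂ) ^ 2 • ((B i)ᴴ * L * B i)) + (c * Complex.I / 2) • L)‖
      + ‖((c / 2) • M - (1/2 : ℂ) • (∑ i, (w i : ℂ) ^ 2 • ((B i)ᴴ * M * B i)))‖, by positivity, ?_⟩
  intro t ht
  rw [expand_alg w L M c t hPP hPB hL hM, add_mul, add_mul]
  have hta : ‖(t : ℂ)‖ = |t| := by rw [Complex.norm_real, Real.norm_eq_abs]
  have h0 : 0 ≤ |t| := abs_nonneg t
  refine (norm_add_le _ _).trans (add_le_add ((norm_add_le _ _).trans (add_le_add ?_ ?_)) ?_)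
  · rw [Finset.sum_mul]
    refine (norm_sum_le _ _).trans (Finset.sum_le_sum fun i _ => ?_)
    rw [norm_smul]
    have h1 : ‖(B i)ᴴ * P * B i + (Complex.I * t) • ((B i)ᴴ * L * B i)
            + ((t : ℂ) ^ 2) • ((B i)ᴴ * M * B i)‖ ≤ (‖(B i)ᴴ * P * B i‖ + ‖(B i)ᴴ * L * B i‖ +
      ‖(B i)ᴴ * M * B i‖) := by
      refine (norm_add_le _ _).trans (add_le_add ((norm_add_le _ _).trans (add_le_add le_rfl ?_)) ?_)
      · rw [norm_smul, norm_mul, Complex.norm_I, one_mul, hta]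
        exact mul_le_of_le_one_left (norm_nonneg _) ht
      · rw [norm_smul, norm_pow, hta]
        exact mul_le_of_le_one_left (norm_nonneg _) (pow_le_one₀ h0 ht)
    have h2 := exp_rem (t * w i)
    have h3 : |t * w i| ^ 3 * Real.exp |t * w i| ≤ |t| ^ 3 * (|w i| ^ 3 * Real.exp |w i|) := by
      rw [abs_mul, mul_pow, mul_assoc]
      have : |t| * |w i| ≤ |w i| := mul_le_of_le_one_left (abs_nonneg _) ht
      gcongr
    calc _ ≤ (|t| ^ 3 * (|w i| ^ 3 * Real.exp |w i|)) * (‖(B i)ᴴ * P * B i‖ + ‖(B i)ᴴ * L * B i‖ +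
      ‖(B i)ᴴ * M * B i‖) := by
          gcongr
          exact h2.trans h3
      _ = _ := by ring
  · rw [norm_smul, norm_pow, hta, mul_comm]
  · rw [norm_smul, norm_pow, hta, mul_comm]
    exact mul_le_mul_of_nonneg_left (pow_le_pow_of_le_one h0 ht (by norm_num : 3 ≤ 4)) (norm_nonneg _)

lemma Blk.cc_eq (w : ι → ℝ) (L : Matrix (Fin k) (Fin k) ℂ) :
    cc B ρ w L = (ρ * (∑ i, (w i : ℂ) ^ 2 • ((B i)ᴴ * B i))).trace
      + 2 * (ρ * (∑ i, (w i : ℂ) • ((B i)ᴴ * L * B i))).trace := by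
  simp only [cc, Finset.mul_sum, trace_sum, Matrix.mul_smul, trace_smul, smul_eq_mul]
  rw [← Finset.sum_add_distrib]
  refine Finset.sum_congr rfl fun i _ => ?_
  rw [← Matrix.mul_assoc ρ, Matrix.trace_mul_comm (ρ * _), ← Matrix.mul_assoc]
  have : (ρ * ((B i)ᴴ * L * B i)).trace = (B i * ρ * (B i)ᴴ * L).trace := by
    rw [← Matrix.mul_assoc, Matrix.trace_mul_comm (ρ * _)]
    simp only [Matrix.mul_assoc]
  rw [this]
  ring

lemma Blk.asym (h : Blk B P ρ) (w : ι → ℝ) (L : Matrix (Fin k) (Fin k) ℂ) (hLP : P * L * P = L)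
    (hL : L - LA B L = ∑ i, (w i : ℂ) • ((B i)ᴴ * B i))
    (t : ℕ → ℝ) (τ : ℝ) (ht : Tendsto t atTop (𝓝 0))
    (hτ : Tendsto (fun n : ℕ => (n : ℝ) * t n ^ 2) atTop (𝓝 τ))
    (φ : ℕ → ℕ → Matrix (Fin k) (Fin k) ℂ →ₗ[ℂ] ℂ) (ψ : Matrix (Fin k) (Fin k) ℂ →ₗ[ℂ] ℂ)
    (K0 : ℝ) (hφ0 : ∀ n, φ n 0 = ψ) (hb : ∀ n m V, ‖φ n m V‖ ≤ K0 * ‖V‖)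
    (hrec : ∀ n m V, P * V * P = V → φ n (m + 1) V = φ n m (Dt B w (t n) V)) :
    Tendsto (fun n => φ n n P) atTop (𝓝 (ψ P * Complex.exp (-(cc B ρ w L * τ / 2)))) := by
  set c := cc B ρ w L with hc
  have hρP : (ρ * P).trace = 1 := by
    have h1 : ρ * P = ρ := by
      conv_lhs => rw [← h.supp]
      rw [Matrix.mul_assoc, h.idem, h.supp]
    rw [h1, h.dens.2]
  have hsand : ∀ i X, P * ((B i)ᴴ * X * B i) * P = (B i)ᴴ * X * B i := by
    intro i X
    rw [← Matrix.mul_assoc, ← Matrix.mul_assoc, h.BHP, Matrix.mul_assoc _ _ P, h.BP]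
  have hsand1 : ∀ i, P * ((B i)ᴴ * B i) * P = (B i)ᴴ * B i := by
    intro i
    have := hsand i 1
    rwa [Matrix.mul_one] at this
  have hPPP : P * P * P = P := by rw [h.idem, h.idem]
  obtain ⟨M, hM, hMP⟩ := h.poisson ((c / 2) • P - (1/2 : ℂ) • (∑ i, (w i : ℂ) ^ 2 • ((B i)ᴴ * B i))
      - ∑ i, (w i : ℂ) • ((B i)ᴴ * L * B i))
    (by
      simp only [mul_sub, sub_mul, Matrix.mul_smul, Matrix.smul_mul, Finset.mul_sum, Finset.sum_mul,
        hsand, hsand1, hPPP])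
    (by
      rw [mul_sub, mul_sub, trace_sub, trace_sub, Matrix.mul_smul, Matrix.mul_smul, trace_smul,
        trace_smul, hρP, hc, Blk.cc_eq]
      simp only [smul_eq_mul]
      ring)
  have hPB : ∀ i, (B i)ᴴ * P * B i = (B i)ᴴ * B i := fun i => by rw [h.PBH]
  obtain ⟨K, hK, hbound⟩ := expand_bound w L M c h.sumP hPB hL hM
  let V : ℕ → Matrix (Fin k) (Fin k) ℂ := fun n =>
    P + (Complex.I * t n) • L + ((t n : ℂ) ^ 2) • M
  let a : ℕ → ℂ := fun n => 1 - c * t n ^ 2 / 2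
  have hVP : ∀ n, P * V n * P = V n := by
    intro n
    simp only [V, mul_add, add_mul, Matrix.mul_smul, Matrix.smul_mul, hPPP, hLP, hMP]
  have hK0 : ∀ n m V W, ‖φ n m V - φ n m W‖ ≤ K0 * ‖V - W‖ := by
    intro n m V W; rw [← map_sub]; exact hb _ _ _
  have hstep : ∀ n, |t n| ≤ 1 → ∀ m, ‖φ n (m+1) (V n) - a n * φ n m (V n)‖ ≤ |K0| * (K * |t n| ^ 3) := by
    intro n hn m
    rw [hrec n m _ (hVP n), ← smul_eq_mul, ← map_smul]
    refine (hK0 _ _ _ _).trans ?_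
    exact mul_le_mul (le_abs_self _) (hbound (t n) hn) (norm_nonneg _) (abs_nonneg _)
  have hacc : ∀ n, |t n| ≤ 1 → ∀ m, ‖φ n m (V n) - a n ^ m * ψ (V n)‖
      ≤ m * (|K0| * (K * |t n| ^ 3)) * (1 + ‖c‖ * t n ^ 2 / 2) ^ m := by
    intro n hn m
    have hca : ‖a n‖ ≤ 1 + ‖c‖ * t n ^ 2 / 2 := by
      refine (norm_sub_le _ _).trans ?_
      rw [norm_one, norm_div, norm_mul, norm_pow, Complex.norm_real, Real.norm_eq_abs, sq_abs]
      norm_num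
    set q := 1 + ‖c‖ * t n ^ 2 / 2 with hq
    have hq1 : 1 ≤ q := by rw [hq]; have : 0 ≤ ‖c‖ * t n ^ 2 / 2 := by positivity
                           linarith
    set E := |K0| * (K * |t n| ^ 3) with hE
    have hE0 : 0 ≤ E := by positivity
    induction m with
    | zero => simp [hφ0]
    | succ m ih =>
      have e : φ n (m+1) (V n) - a n ^ (m+1) * ψ (V n) = (φ n (m+1) (V n) - a n * φ n m (V n))
          + a n * (φ n m (V n) - a n ^ m * ψ (V n)) := by ring
      rw [e]
      refine (norm_add_le _ _).trans ?_
      rw [norm_mul]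
      have h1 := hstep n hn m
      have h2 : ‖a n‖ * ‖φ n m (V n) - a n ^ m * ψ (V n)‖ ≤ q * (m * E * q ^ m) :=
        mul_le_mul hca ih (norm_nonneg _) (by linarith)
      have h3 : E ≤ E * q ^ (m+1) := le_mul_of_one_le_right hE0 (one_le_pow₀ hq1)
      push_cast
      calc _ ≤ E + q * (m * E * q ^ m) := add_le_add h1 h2
        _ ≤ E * q ^ (m+1) + q * (m * E * q ^ m) := by linarith
        _ = _ := by ring
  -- limits
  have hψc : Continuous ψ := LinearMap.continuous_of_finiteDimensional ψ
  have htc : Tendsto (fun n => (t n : ℂ)) atTop (𝓝 0) := by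
    have := (Complex.continuous_ofReal.tendsto 0).comp ht
    simpa [Function.comp_def] using this
  have hV : Tendsto V atTop (𝓝 P) := by
    have h1 := ((tendsto_const_nhds (x := P)).add ((htc.const_mul Complex.I).smul_const L)).add
      ((htc.pow 2).smul_const M)
    simpa using h1
  have hψV : Tendsto (fun n => ψ (V n)) atTop (𝓝 (ψ P)) := (hψc.tendsto P).comp hV
  have hτc : Tendsto (fun n : ℕ => (n : ℂ) * (t n : ℂ) ^ 2) atTop (𝓝 (τ : ℂ)) := by
    have := (Complex.continuous_ofReal.tendsto τ).comp hτ
    refine this.congr fun n => ?_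
    simp
  have hapow : Tendsto (fun n => a n ^ n) atTop (𝓝 (Complex.exp (-(c * τ / 2)))) := by
    have := Complex.tendsto_one_add_pow_exp_of_tendsto (g := fun n => -(c * t n ^ 2 / 2))
      (t := -(c * τ / 2)) (by
        have := (hτc.const_mul (-(c/2)))
        refine (this.congr fun n => ?_).trans_eq ?_
        · ring
        · congr 1; ring)
    refine this.congr fun n => ?_
    simp only [a]; ring
  have hqpow : Tendsto (fun n : ℕ => (1 + ‖c‖ * t n ^ 2 / 2) ^ n) atTop (𝓝 (Real.exp (‖c‖ * τ / 2))) := by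
    refine Real.tendsto_one_add_pow_exp_of_tendsto ?_
    have := (hτ.const_mul (‖c‖/2))
    refine (this.congr fun n => ?_).trans_eq ?_
    · ring
    · congr 1; ring
  have herr : Tendsto (fun n : ℕ => (n : ℝ) * (|K0| * (K * |t n| ^ 3)) * (1 + ‖c‖ * t n ^ 2 / 2) ^ n)
      atTop (𝓝 0) := by
    have h1 : Tendsto (fun n => |t n|) atTop (𝓝 0) := by simpa using ht.abs
    have h2 := (((hτ.mul h1).mul_const (|K0| * K))).mul hqpow
    simp only [mul_zero, zero_mul] at h2
    refine h2.congr fun n => ?_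
    have : |t n| ^ 3 = t n ^ 2 * |t n| := by rw [← sq_abs]; ring
    rw [this]; ring
  have hsmall : ∀ᶠ n in atTop, |t n| ≤ 1 := by
    have h1 : Tendsto (fun n => |t n|) atTop (𝓝 0) := by simpa using ht.abs
    exact h1.eventually_le_const one_pos
  have hdiff : Tendsto (fun n => φ n n (V n) - a n ^ n * ψ (V n)) atTop (𝓝 0) := by
    refine squeeze_zero_norm' ?_ herr
    filter_upwards [hsmall] with n hn using hacc n hn n
  have hdiff2 : Tendsto (fun n => φ n n P - φ n n (V n)) atTop (𝓝 0) := by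
    refine squeeze_zero_norm (a := fun n => K0 * ‖P - V n‖) (fun n => hK0 _ _ _ _) ?_
    have := ((tendsto_const_nhds (x := P)).sub hV).norm.const_mul K0
    simpa using this
  have hmain := (hdiff2.add hdiff).add (hapow.mul hψV)
  refine (hmain.congr fun n => ?_).trans_eq ?_
  · ring
  · congr 1; ring

end expand

end QT
namespace QT

open scoped Topology

section prob

attribute [local instance] Matrix.normedAddCommGroup Matrix.normedSpace

lemma dir_inj {d : ℕ} {i i' : Fin (2 * d)} (h : dir d i = dir d i') : i = i' := by
  have hi := i.isLt
  have hi' := i'.isLt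
  apply Fin.ext
  by_cases h1 : (i : ℕ) < d
  · have := congrFun h ⟨i, h1⟩
    simp only [dir, h1, if_true] at this
    split_ifs at this <;> omega
  · have := congrFun h ⟨(i : ℕ) - d, by omega⟩
    simp only [dir, h1, if_false, if_true] at this
    split_ifs at this <;> omega

variable {k d : ℕ} {Ω : Type} {mΩ : MeasurableSpace Ω}
    {A : Fin (2 * d) → Matrix (Fin k) (Fin k) ℂ}
    {μ : Measure Ω} {ℱ : Filtration ℕ mΩ}
    {ρ : ℕ → Ω → Matrix (Fin k) (Fin k) ℂ}
    {X : ℕ → Ω → Fin d → ℤ}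

lemma meas_lin (f : Matrix (Fin k) (Fin k) ℂ →ₗ[ℂ] ℂ) : Measurable f := by
  have : (f : Matrix (Fin k) (Fin k) ℂ → ℂ) =
      fun m => ∑ a, ∑ b, m a b * f (Matrix.single a b 1) := by
    funext m
    conv_lhs => rw [Matrix.matrix_eq_sum_single m]
    simp only [map_sum]
    refine Finset.sum_congr rfl fun a _ => Finset.sum_congr rfl fun b _ => ?_
    have : Matrix.single a b (m a b) = (m a b) • Matrix.single a b (1:ℂ) := by
      simp [Matrix.smul_single]
    rw [this, map_smul, smul_eq_mul]
  rw [this]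
  refine Finset.measurable_sum _ fun a _ => Finset.measurable_sum _ fun b _ => ?_
  exact ((measurable_pi_apply b).comp (measurable_pi_apply a)).mul_const _

/-- the functional `m ↦ Tr (C m D)` -/
def trl (C D : Matrix (Fin k) (Fin k) ℂ) : Matrix (Fin k) (Fin k) ℂ →ₗ[ℂ] ℂ where
  toFun m := (C * m * D).trace
  map_add' x y := by simp [mul_add, add_mul]
  map_smul' c x := by simp

lemma meas_tr (C D : Matrix (Fin k) (Fin k) ℂ) :
    Measurable fun m : Matrix (Fin k) (Fin k) ℂ => (C * m * D).trace := meas_lin (trl C D)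

lemma trace_bound {T V : Matrix (Fin k) (Fin k) ℂ} (hT : T.PosSemidef) :
    ‖(T * V).trace‖ ≤ T.trace.re * ((k : ℝ) * k * ‖V‖) := by
  simp only [Matrix.trace, Matrix.diag, Matrix.mul_apply]
  have h0 : 0 ≤ T.trace.re := (Complex.nonneg_iff.mp hT.trace_nonneg).1
  calc _ ≤ ∑ a : Fin k, ∑ b : Fin k, T.trace.re * ‖V‖ := by
        refine (norm_sum_le _ _).trans (Finset.sum_le_sum fun a _ => ?_)
        refine (norm_sum_le _ _).trans (Finset.sum_le_sum fun b _ => ?_)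
        rw [norm_mul]
        exact mul_le_mul (psd_entry T hT a b) (Matrix.norm_entry_le_entrywise_sup_norm V)
          (norm_nonneg _) h0
    _ = _ := by simp [Matrix.trace]; ring

lemma density_trace_bound {T V : Matrix (Fin k) (Fin k) ℂ} (hT : IsDensity T) :
    ‖(T * V).trace‖ ≤ (k : ℝ) * k * ‖V‖ := by
  have := trace_bound (V := V) hT.1
  rwa [hT.2, Complex.one_re, one_mul] at this

/-- step indicator -/
def ind (X : ℕ → Ω → Fin d → ℤ) (n : ℕ) (i : Fin (2 * d)) (ω : Ω) : ℝ :=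
  if X (n + 1) ω = X n ω + dir d i then (1 : ℝ) else 0

lemma meas_ind (hQT : IsQTraj A μ ℱ ρ X) (n : ℕ) (i) : Measurable[ℱ (n+1)] (ind X n i) := by
  have h1 : Measurable[ℱ (n+1)] (X (n+1)) := hQT.adapted_X (n+1)
  have h2 : Measurable[ℱ (n+1)] (X n) := (hQT.adapted_X n).mono (ℱ.mono (Nat.le_succ n)) le_rfl
  unfold ind
  refine Measurable.ite ?_ measurable_const measurable_const
  exact measurableSet_eq_fun h1 (h2.add_const _)

lemma ind_bound (n : ℕ) (i : Fin (2 * d)) (ω : Ω) : ‖ind X n i ω‖ ≤ 1 := by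
  unfold ind; split_ifs <;> simp

lemma ind_of (n : ℕ) (i i' : Fin (2 * d)) (ω : Ω) (h : X (n+1) ω = X n ω + dir d i) :
    ind X n i' ω = if i' = i then 1 else 0 := by
  unfold ind
  by_cases e : i' = i
  · subst e; simp [h]
  · rw [if_neg e, if_neg]
    intro h'
    rw [h] at h'
    exact e (dir_inj (add_left_cancel h')).symm

variable [IsProbabilityMeasure μ]

lemma int_ind (hQT : IsQTraj A μ ℱ ρ X) (n : ℕ) (i) : Integrable (ind X n i) μ :=
  Integrable.of_bound (((meas_ind hQT n i).mono (ℱ.le _) le_rfl).aestronglyMeasurable) 1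
    (Eventually.of_forall fun ω => ind_bound n i ω)

lemma one_step_aux (hQT : IsQTraj A μ ℱ ρ X) (n : ℕ) (i : Fin (2 * d)) (G : Ω → ℂ)
    (hG : Measurable[ℱ n] G) (C : ℝ) (hb : ∀ᵐ ω ∂μ, ‖G ω‖ ≤ C) :
    ∫ ω, ind X n i ω • G ω ∂μ = ∫ ω, (((A i * ρ n ω * (A i)ᴴ).trace).re : ℝ) • G ω ∂μ := by
  have hGm : Measurable G := hG.mono (ℱ.le _) le_rfl
  have hGs : StronglyMeasurable[ℱ n] G := hG.stronglyMeasurable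
  have hint : Integrable (ind X n i • G) μ := by
    refine Integrable.of_bound ((((meas_ind hQT n i).mono (ℱ.le _) le_rfl).smul hGm).aestronglyMeasurable) C ?_
    filter_upwards [hb] with ω hω
    simp only [Pi.smul_apply', norm_smul]
    calc _ ≤ 1 * ‖G ω‖ := by gcongr; exact ind_bound n i ω
      _ ≤ C := by rw [one_mul]; exact hω
  have h1 := condExp_smul_of_aestronglyMeasurable_right (μ := μ) (m := ℱ n)
    (int_ind hQT n i) hint hGs.aestronglyMeasurable
  have h2 : ∫ ω, (ind X n i • G) ω ∂μ = ∫ ω, (μ[ind X n i • G | ℱ n]) ω ∂μ :=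
    (integral_condExp (ℱ.le n)).symm
  have h3 := hQT.prob n i
  change (∫ ω, (ind X n i • G) ω ∂μ) = _
  rw [h2]
  refine integral_congr_ae ?_
  filter_upwards [h1, h3] with ω e1 e3
  rw [e1]
  simp only [Pi.smul_apply']
  congr 1

lemma trace_real {T : Matrix (Fin k) (Fin k) ℂ} (hT : T.PosSemidef) :
    ((T.trace.re : ℝ) : ℂ) = T.trace :=
  Complex.ext rfl (by simp [← (Complex.nonneg_iff.mp hT.trace_nonneg).2])

lemma one_step (hQT : IsQTraj A μ ℱ ρ X) (n : ℕ) (i : Fin (2 * d)) (g : Ω → ℂ)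
    (hg : Measurable[ℱ n] g) (hb : ∀ ω, ‖g ω‖ ≤ 1) (V : Matrix (Fin k) (Fin k) ℂ) :
    ∫ ω, ind X n i ω • (g ω * (ρ (n+1) ω * V).trace) ∂μ
      = ∫ ω, g ω * (ρ n ω * ((A i)ᴴ * V * A i)).trace ∂μ := by
  let T : Ω → Matrix (Fin k) (Fin k) ℂ := fun ω => A i * ρ n ω * (A i)ᴴ
  let G : Ω → ℂ := fun ω => g ω * ((T ω).trace⁻¹ * (T ω * V).trace)
  have hT1 : Measurable[ℱ n] fun ω => (T ω).trace := (meas_tr _ _).comp (hQT.adapted_ρ n)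
  have hT2 : Measurable[ℱ n] fun ω => (T ω * V).trace := by
    have := (meas_tr (A i) ((A i)ᴴ * V)).comp (hQT.adapted_ρ n)
    convert this using 2
    simp [T, Matrix.mul_assoc]
  have hG : Measurable[ℱ n] G := hg.mul (hT1.inv.mul hT2)
  have hTp : ∀ᵐ ω ∂μ, (T ω).PosSemidef := by
    filter_upwards [hQT.density n] with ω hω using hω.1.mul_mul_conjTranspose_same _
  have hGb : ∀ᵐ ω ∂μ, ‖G ω‖ ≤ (k : ℝ) * k * ‖V‖ := by
    filter_upwards [hTp] with ω hω
    simp only [G, norm_mul, norm_inv]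
    have h1 := trace_bound (V := V) hω
    have h0 : 0 ≤ (T ω).trace.re := (Complex.nonneg_iff.mp hω.trace_nonneg).1
    have h2 : ‖(T ω).trace‖ = (T ω).trace.re := by
      rw [← trace_real hω, Complex.norm_real, Real.norm_of_nonneg h0, Complex.ofReal_re]
    rw [h2]
    have h3 : (T ω).trace.re⁻¹ * ‖(T ω * V).trace‖ ≤ (k : ℝ) * k * ‖V‖ := by
      rcases h0.eq_or_lt with h | h
      · rw [← h]; simp; positivity
      · rw [inv_mul_le_iff₀ h]; exact h1
    calc _ ≤ 1 * ((k : ℝ) * k * ‖V‖) := by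
          gcongr; exact hb ω
      _ = _ := one_mul _
  have hL : ∫ ω, ind X n i ω • (g ω * (ρ (n+1) ω * V).trace) ∂μ = ∫ ω, ind X n i ω • G ω ∂μ := by
    refine integral_congr_ae ?_
    filter_upwards [hQT.update n i] with ω hω
    by_cases hs : X (n + 1) ω = X n ω + dir d i
    · rw [hω hs]
      simp only [G, T, Matrix.smul_mul, trace_smul, smul_eq_mul]
    · simp [ind, hs]
  rw [hL, one_step_aux hQT n i G hG _ hGb]
  refine integral_congr_ae ?_
  filter_upwards [hTp] with ω hω
  rw [Complex.real_smul, trace_real hω]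
  have e : (ρ n ω * ((A i)ᴴ * V * A i)).trace = (T ω * V).trace := by
    rw [← Matrix.mul_assoc, Matrix.trace_mul_comm]
    simp only [T, Matrix.mul_assoc]
  rw [e]
  by_cases h0 : (T ω).trace = 0
  · have h1 : T ω = 0 := (hω.trace_eq_zero_iff).mp h0
    simp [G, h1]
  · change (T ω).trace * (g ω * ((T ω).trace⁻¹ * (T ω * V).trace)) = _
    field_simp

lemma step_ae (hA : ∑ j, (A j)ᴴ * A j = 1) (hQT : IsQTraj A μ ℱ ρ X) :
    ∀ᵐ ω ∂μ, ∀ n, ∃ i, X (n+1) ω = X n ω + dir d i := by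
  rw [ae_all_iff]
  intro n
  have h1 : ∫ ω, (∑ i, ind X n i ω) ∂μ = 1 := by
    rw [integral_finsetSum _ fun i _ => int_ind hQT n i]
    have h2 : ∀ i, ∫ ω, ind X n i ω ∂μ = ∫ ω, ((A i * ρ n ω * (A i)ᴴ).trace).re ∂μ := by
      intro i
      rw [← integral_condExp (ℱ.le n)]
      exact integral_congr_ae (hQT.prob n i)
    simp only [h2]
    rw [← integral_finsetSum]
    · have : ∀ᵐ ω ∂μ, ∑ i, ((A i * ρ n ω * (A i)ᴴ).trace).re = 1 := by
        filter_upwards [hQT.density n] with ω hω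
        rw [← Complex.re_sum]
        have : ∑ i, (A i * ρ n ω * (A i)ᴴ).trace = (ρ n ω).trace := by
          have e : ∀ i, (A i * ρ n ω * (A i)ᴴ).trace = (ρ n ω * ((A i)ᴴ * A i)).trace := by
            intro i
            rw [Matrix.mul_assoc, Matrix.trace_mul_comm, Matrix.mul_assoc]
          simp only [e]
          rw [← trace_sum, ← Finset.mul_sum, hA, Matrix.mul_one]
        rw [this, hω.2, Complex.one_re]
      rw [integral_congr_ae this]
      simp
    · intro i _
      refine (integrable_condExp (μ := μ) (m := ℱ n) (f := ind X n i)).congr (hQT.prob n i)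
  have hle : ∀ ω, ∑ i, ind X n i ω ≤ 1 := by
    intro ω
    by_cases hs : ∃ i, X (n+1) ω = X n ω + dir d i
    · obtain ⟨i, hi⟩ := hs
      simp [ind_of n i _ ω hi]
    · push Not at hs
      simp [ind, hs]
  have hint : Integrable (fun ω => 1 - ∑ i, ind X n i ω) μ :=
    (integrable_const 1).sub (integrable_finsetSum _ fun i _ => int_ind hQT n i)
  have h0 : ∫ ω, (1 - ∑ i, ind X n i ω) ∂μ = 0 := by
    rw [integral_sub (integrable_const 1) (integrable_finsetSum _ fun i _ => int_ind hQT n i), h1]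
    simp
  rw [integral_eq_zero_iff_of_nonneg (fun ω => by simpa using hle ω) hint] at h0
  filter_upwards [h0] with ω hω
  by_contra hs
  push Not at hs
  simp [ind, hs] at hω

/-- the weighted additive functional -/
def SS (X : ℕ → Ω → Fin d → ℤ) (w : Fin (2 * d) → ℝ) (n : ℕ) (ω : Ω) : ℝ :=
  ∑ m ∈ Finset.range n, ∑ i, w i * ind X m i ω

lemma meas_SS (hQT : IsQTraj A μ ℱ ρ X) (w) (n : ℕ) : Measurable[ℱ n] (SS X w n) := by
  unfold SS
  refine Finset.measurable_sum _ fun m hm => Finset.measurable_sum _ fun i _ => ?_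
  refine Measurable.const_mul ?_ _
  exact (meas_ind hQT m i).mono (ℱ.mono (Finset.mem_range.mp hm)) le_rfl

lemma meas_exp (hQT : IsQTraj A μ ℱ ρ X) (w) (t : ℝ) (n : ℕ) :
    Measurable[ℱ n] fun ω => Complex.exp (Complex.I * ((t * SS X w n ω : ℝ) : ℂ)) := by
  have := meas_SS hQT w n
  have h2 : Measurable fun x : ℝ => Complex.exp (Complex.I * ((t * x : ℝ) : ℂ)) := by fun_prop
  exact h2.comp this

lemma norm_expI (x : ℝ) : ‖Complex.exp (Complex.I * (x : ℂ))‖ = 1 := by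
  rw [mul_comm]; exact Complex.norm_exp_ofReal_mul_I x

lemma meas_trρ (hQT : IsQTraj A μ ℱ ρ X) (n : ℕ) (V : Matrix (Fin k) (Fin k) ℂ) :
    Measurable[ℱ n] fun ω => (ρ n ω * V).trace := by
  have := (meas_tr 1 V).comp (hQT.adapted_ρ n)
  simpa [Function.comp_def] using this

lemma int_phi (hQT : IsQTraj A μ ℱ ρ X) (w) (t : ℝ) (n : ℕ) (V : Matrix (Fin k) (Fin k) ℂ) :
    Integrable (fun ω => Complex.exp (Complex.I * ((t * SS X w n ω : ℝ) : ℂ)) *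
      (ρ n ω * V).trace) μ := by
  refine Integrable.of_bound (((meas_exp hQT w t n).mul (meas_trρ hQT n V)).mono (ℱ.le n)
    le_rfl).aestronglyMeasurable ((k : ℝ) * k * ‖V‖) ?_
  filter_upwards [hQT.density n] with ω hω
  rw [norm_mul, norm_expI, one_mul]
  exact density_trace_bound hω

/-- twisted expectation -/
def phi (hQT : IsQTraj A μ ℱ ρ X) (w : Fin (2 * d) → ℝ) (t : ℝ) (n : ℕ) :
    Matrix (Fin k) (Fin k) ℂ →ₗ[ℂ] ℂ where
  toFun V := ∫ ω, Complex.exp (Complex.I * ((t * SS X w n ω : ℝ) : ℂ)) * (ρ n ω * V).trace ∂μ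
  map_add' x y := by
    rw [← integral_add (int_phi hQT w t n x) (int_phi hQT w t n y)]
    simp only [mul_add, trace_add]
  map_smul' c x := by
    simp only [RingHom.id_apply, Matrix.mul_smul, trace_smul, smul_eq_mul]
    rw [← integral_const_mul]
    congr 1; funext ω; ring

lemma phi_apply (hQT : IsQTraj A μ ℱ ρ X) (w : Fin (2 * d) → ℝ) (t : ℝ) (n : ℕ) (V) :
    phi hQT w t n V =
      ∫ ω, Complex.exp (Complex.I * ((t * SS X w n ω : ℝ) : ℂ)) * (ρ n ω * V).trace ∂μ := rfl

lemma phi_bound (hQT : IsQTraj A μ ℱ ρ X) (w : Fin (2 * d) → ℝ) (t : ℝ) (n : ℕ) (V) :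
    ‖phi hQT w t n V‖ ≤ ((k : ℝ) * k) * ‖V‖ := by
  rw [phi_apply]
  have := norm_integral_le_of_norm_le_const (μ := μ) (C := (k : ℝ) * k * ‖V‖)
    (f := fun ω => Complex.exp (Complex.I * ((t * SS X w n ω : ℝ) : ℂ)) * (ρ n ω * V).trace) (by
      filter_upwards [hQT.density n] with ω hω
      rw [norm_mul, norm_expI, one_mul]
      exact density_trace_bound hω)
  simpa using this

lemma SS_succ (w : Fin (2 * d) → ℝ) (n : ℕ) (ω : Ω) (i) (h : X (n+1) ω = X n ω + dir d i) :
    SS X w (n+1) ω = SS X w n ω + w i := by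
  unfold SS
  rw [Finset.sum_range_succ]
  simp [ind_of n i _ ω h]

lemma phi_succ (hA : ∑ j, (A j)ᴴ * A j = 1) (hQT : IsQTraj A μ ℱ ρ X) (w : Fin (2 * d) → ℝ)
    (t : ℝ) (n : ℕ) (V) : phi hQT w t (n+1) V = phi hQT w t n (Dt A w t V) := by
  let g : Ω → ℂ := fun ω => Complex.exp (Complex.I * ((t * SS X w n ω : ℝ) : ℂ))
  have hg : Measurable[ℱ n] g := meas_exp hQT w t n
  have hgb : ∀ ω, ‖g ω‖ ≤ 1 := fun ω => (norm_expI _).le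
  have h1 : phi hQT w t (n+1) V = ∫ ω, ∑ i, Complex.exp (Complex.I * ((t * w i : ℝ) : ℂ)) *
      (ind X n i ω • (g ω * (ρ (n+1) ω * V).trace)) ∂μ := by
    rw [phi_apply]
    refine integral_congr_ae ?_
    filter_upwards [step_ae hA hQT] with ω hω
    obtain ⟨i, hi⟩ := hω n
    simp only [ind_of n i _ ω hi, SS_succ w n ω i hi]
    rw [Finset.sum_eq_single i]
    · simp only [if_true, one_smul, g]
      rw [← mul_assoc, ← Complex.exp_add]
      congr 2
      push_cast; ring
    · intro b _ hb; simp [hb]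
    · simp
  rw [h1, integral_finsetSum]
  · unfold Dt
    rw [map_sum]
    refine Finset.sum_congr rfl fun i _ => ?_
    rw [integral_const_mul, one_step hQT n i g hg hgb V, map_smul, phi_apply, smul_eq_mul]
  · intro i _
    refine Integrable.const_mul ?_ _
    refine Integrable.of_bound (C := (k : ℝ) * k * ‖V‖) ?_ ?_
    · refine Measurable.aestronglyMeasurable ?_
      refine (((meas_ind hQT n i).mono (ℱ.le _) le_rfl).smul ?_)
      exact (hg.mono (ℱ.le _) le_rfl).mul ((meas_trρ hQT (n+1) V).mono (ℱ.le _) le_rfl)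
    · filter_upwards [hQT.density (n+1)] with ω hω
      rw [norm_smul, norm_mul]
      calc _ ≤ 1 * (1 * ((k : ℝ) * k * ‖V‖)) := by
            gcongr
            · exact ind_bound n i ω
            · exact hgb ω
            · exact density_trace_bound hω
        _ = _ := by ring

lemma phi_zero (hQT : IsQTraj A μ ℱ ρ X) (w : Fin (2 * d) → ℝ) (t : ℝ)
    (ρ₀ : Matrix (Fin k) (Fin k) ℂ) (hinit : ∀ ω, ρ 0 ω = ρ₀) :
    phi hQT w t 0 = trl ρ₀ 1 := by
  refine LinearMap.ext fun V => ?_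
  rw [phi_apply]
  simp [SS, hinit, trl]

end prob

end QT
namespace QT

open scoped Topology

section blocks

variable {k d : ℕ} {Ω : Type} {mΩ : MeasurableSpace Ω}
    {A : Fin (2 * d) → Matrix (Fin k) (Fin k) ℂ}
    {μ : Measure Ω} {ℱ : Filtration ℕ mΩ}
    {ρ : ℕ → Ω → Matrix (Fin k) (Fin k) ℂ}
    {X : ℕ → Ω → Fin d → ℤ}

lemma mkBlk (hA : ∑ j, (A j)ᴴ * A j = 1) {P R : Matrix (Fin k) (Fin k) ℂ}
    (hsa : Pᴴ = P) (hidem : P * P = P) (hcomm : ∀ i, P * A i = A i * P)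
    (hR : IsDensity R ∧ P * R * P = R)
    (hinv : (∑ i, (A i * P) * R * (A i * P)ᴴ) = R)
    (huniq : ∀ σ, IsDensity σ → P * σ * P = σ →
      (∑ i, (A i * P) * σ * (A i * P)ᴴ) = σ → σ = R) :
    Blk (fun i => A i * P) P R where
  sa := hsa
  idem := hidem
  PB i := by rw [← mul_assoc, hcomm, mul_assoc, hidem]
  BP i := by rw [mul_assoc, hidem]
  sum := by
    have : ∀ i, (A i * P)ᴴ * (A i * P) = P * ((A i)ᴴ * A i) * P := by
      intro i; rw [conjTranspose_mul, hsa]; simp only [mul_assoc]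
    simp only [this, ← Finset.sum_mul, ← Finset.mul_sum, hA, mul_one, hidem]
  dens := hR.1
  supp := hR.2
  inv := hinv
  uniq := huniq

lemma Dt_block {P V : Matrix (Fin k) (Fin k) ℂ} (hsa : Pᴴ = P)
    (hcomm : ∀ i, P * A i = A i * P) (hV : P * V * P = V) (w : Fin (2 * d) → ℝ) (t : ℝ) :
    Dt A w t V = Dt (fun i => A i * P) w t V := by
  unfold Dt
  refine Finset.sum_congr rfl fun i _ => ?_
  congr 1
  have h2 : (A i)ᴴ * P = P * (A i)ᴴ := by
    have := congrArg conjTranspose (hcomm i)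
    simpa [conjTranspose_mul, hsa] using this
  calc (A i)ᴴ * V * A i = (A i)ᴴ * (P * V * P) * A i := by rw [hV]
    _ = ((A i)ᴴ * P) * V * (P * A i) := by simp only [mul_assoc]
    _ = (P * (A i)ᴴ) * V * (A i * P) := by rw [h2, hcomm]
    _ = _ := by rw [conjTranspose_mul, hsa]

lemma tr_proj {T P : Matrix (Fin k) (Fin k) ℂ} (hT : IsDensity T) (hsa : Pᴴ = P)
    (hidem : P * P = P) :
    (T * P).trace = (((P * T).trace.re : ℝ) : ℂ) ∧ 0 ≤ (P * T).trace.re ∧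
      (P * T).trace.re ≤ 1 := by
  have aux : ∀ Q : Matrix (Fin k) (Fin k) ℂ, Qᴴ = Q → Q * Q = Q → 0 ≤ (Q * T).trace := by
    intro Q h1 h2
    have h := hT.1.conjTranspose_mul_mul_same Q
    have h3 := h.trace_nonneg
    rwa [h1, Matrix.trace_mul_comm, ← mul_assoc, h2] at h3
  have h1 := Complex.nonneg_iff.mp (aux P hsa hidem)
  have h2 := Complex.nonneg_iff.mp (aux (1 - P) (by simp [hsa])
    (by simp [sub_mul, mul_sub, hidem]))
  rw [sub_mul, one_mul, Matrix.trace_sub, hT.2] at h2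
  refine ⟨?_, h1.1, ?_⟩
  · rw [Matrix.trace_mul_comm]
    exact Complex.ext rfl (by simp [← h1.2])
  · have := h2.1
    simp at this
    linarith

lemma key [IsProbabilityMeasure μ] (hA : ∑ j, (A j)ᴴ * A j = 1) (hQT : IsQTraj A μ ℱ ρ X)
    {P R ρ₀ : Matrix (Fin k) (Fin k) ℂ} (h : Blk (fun i => A i * P) P R)
    (hcomm : ∀ i, P * A i = A i * P) (hinit : ∀ ω, ρ 0 ω = ρ₀)
    (w : Fin (2 * d) → ℝ) (L : Matrix (Fin k) (Fin k) ℂ) (hLP : P * L * P = L)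
    (hL : L - LA (fun i => A i * P) L = ∑ i, (w i : ℂ) • ((A i * P)ᴴ * (A i * P)))
    (t : ℕ → ℝ) (τ : ℝ) (ht : Tendsto t atTop (𝓝 0))
    (hτ : Tendsto (fun n : ℕ => (n : ℝ) * t n ^ 2) atTop (𝓝 τ)) :
    Tendsto (fun n => ∫ ω, Complex.exp (Complex.I * ((t n * SS X w n ω : ℝ) : ℂ)) *
      (ρ n ω * P).trace ∂μ) atTop
      (𝓝 ((ρ₀ * P).trace * Complex.exp (-(cc (fun i => A i * P) R w L * τ / 2)))) := by
  have := h.asym w L hLP hL t τ ht hτ (fun n m => phi hQT w (t n) m) (trl ρ₀ 1) ((k : ℝ) * k)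
    (fun n => phi_zero hQT w (t n) ρ₀ hinit) (fun n m V => phi_bound hQT w (t n) m V)
    (fun n m V hV => by rw [phi_succ hA hQT, Dt_block h.sa hcomm hV])
  simpa [trl, phi_apply] using this

lemma mean_const [IsProbabilityMeasure μ] (hA : ∑ j, (A j)ᴴ * A j = 1) (hQT : IsQTraj A μ ℱ ρ X)
    {P R ρ₀ : Matrix (Fin k) (Fin k) ℂ} (h : Blk (fun i => A i * P) P R)
    (hcomm : ∀ i, P * A i = A i * P) (hinit : ∀ ω, ρ 0 ω = ρ₀) (n : ℕ) :
    ∫ ω, (ρ n ω * P).trace ∂μ = (ρ₀ * P).trace := by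
  have key : ∀ n, phi hQT 0 0 n P = (ρ₀ * P).trace := by
    intro n
    induction n with
    | zero => rw [phi_zero hQT 0 0 ρ₀ hinit]; simp [trl]
    | succ n ih =>
      rw [phi_succ hA hQT, Dt_block h.sa hcomm (by rw [h.idem, h.idem])]
      rw [← ih]
      congr 1
      unfold Dt
      rw [← h.sum]
      refine Finset.sum_congr rfl fun i _ => ?_
      simp only [Pi.zero_apply, mul_zero, Complex.ofReal_zero, Complex.exp_zero, one_smul]
      rw [h.sum, mul_assoc, ← mul_assoc P, hcomm, mul_assoc, h.idem]
  have := key n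
  rw [phi_apply] at this
  simpa using this

lemma pp_meas (hQT : IsQTraj A μ ℱ ρ X) (P : Matrix (Fin k) (Fin k) ℂ) (n : ℕ) :
    Measurable fun ω => (P * ρ n ω).trace.re := by
  have h1 : Measurable (ρ n) := (hQT.adapted_ρ n).mono (ℱ.le n) le_rfl
  have := Complex.measurable_re.comp ((meas_tr P 1).comp h1)
  simpa [Function.comp_def] using this

lemma mean_re [IsProbabilityMeasure μ] (hA : ∑ j, (A j)ᴴ * A j = 1) (hQT : IsQTraj A μ ℱ ρ X)
    {P R ρ₀ : Matrix (Fin k) (Fin k) ℂ} (h : Blk (fun i => A i * P) P R)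
    (hcomm : ∀ i, P * A i = A i * P) (hinit : ∀ ω, ρ 0 ω = ρ₀) (n : ℕ) :
    ∫ ω, (P * ρ n ω).trace.re ∂μ = (P * ρ₀).trace.re := by
  have h1 := mean_const hA hQT h hcomm hinit n
  have h2 : ∫ ω, (ρ n ω * P).trace ∂μ = ∫ ω, (((P * ρ n ω).trace.re : ℝ) : ℂ) ∂μ := by
    refine integral_congr_ae ?_
    filter_upwards [hQT.density n] with ω hω
    exact (tr_proj hω h.sa h.idem).1
  rw [h2, integral_complex_ofReal] at h1
  have := congrArg Complex.re h1
  rw [Complex.ofReal_re, Matrix.trace_mul_comm] at this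
  exact this

end blocks

end QT
namespace QT

open scoped Topology

section zeroone

variable {k d : ℕ} {Ω : Type} {mΩ : MeasurableSpace Ω}
    {A : Fin (2 * d) → Matrix (Fin k) (Fin k) ℂ}
    {μ : Measure Ω} {ℱ : Filtration ℕ mΩ}
    {ρ : ℕ → Ω → Matrix (Fin k) (Fin k) ℂ}
    {X : ℕ → Ω → Fin d → ℤ}

lemma poisson_i {P R : Matrix (Fin k) (Fin k) ℂ} (h : Blk (fun i => A i * P) P R)
    (i : Fin (2 * d)) :
    ∃ L : Matrix (Fin k) (Fin k) ℂ, P * L * P = L ∧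
      L - LA (fun i => A i * P) L =
        ∑ a, (((if a = i then 1 else 0) - ((A i * R * (A i)ᴴ).trace).re : ℝ) : ℂ) •
          ((A a * P)ᴴ * (A a * P)) := by
  have hBR : ∀ a, (A a * P) * R * (A a * P)ᴴ = A a * R * (A a)ᴴ := by
    intro a
    rw [conjTranspose_mul, h.sa]
    calc _ = A a * (P * R * P) * (A a)ᴴ := by simp only [mul_assoc]
      _ = _ := by rw [h.supp]
  have htr : ∀ a, (R * ((A a * P)ᴴ * (A a * P))).trace = (A a * R * (A a)ᴴ).trace := by
    intro a
    rw [← mul_assoc, Matrix.trace_mul_comm, ← mul_assoc, hBR]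
  have hreal : ((((A i * R * (A i)ᴴ).trace).re : ℝ) : ℂ) = (A i * R * (A i)ᴴ).trace :=
    trace_real (h.dens.1.mul_mul_conjTranspose_same (A i))
  have hs : ∑ a, (A a * R * (A a)ᴴ).trace = 1 := by
    have h1 := congrArg Matrix.trace h.inv
    rw [LB_apply, Matrix.trace_sum, h.dens.2] at h1
    rw [← h1]
    exact Finset.sum_congr rfl fun a _ => by rw [hBR]
  obtain ⟨L, h1, h2⟩ := h.poisson
    (∑ a, (((if a = i then 1 else 0) - ((A i * R * (A i)ᴴ).trace).re : ℝ) : ℂ) •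
          ((A a * P)ᴴ * (A a * P))) (by
      rw [Finset.mul_sum, Finset.sum_mul]
      refine Finset.sum_congr rfl fun a _ => ?_
      rw [mul_smul_comm, smul_mul_assoc]
      congr 1
      rw [conjTranspose_mul, h.sa]
      calc _ = (P * P) * ((A a)ᴴ * (A a)) * (P * P) := by simp only [mul_assoc]
        _ = _ := by rw [h.idem]; simp only [mul_assoc]) (by
      rw [Finset.mul_sum, Matrix.trace_sum]
      simp only [mul_smul_comm, Matrix.trace_smul, htr, smul_eq_mul]
      push_cast
      rw [hreal]
      simp only [sub_mul, Finset.sum_sub_distrib, ← Finset.mul_sum, hs,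
        apply_ite Complex.ofReal]
      simp)
  exact ⟨L, h2, h1⟩

lemma SS_bound (w : Fin (2 * d) → ℝ) (K : ℝ) (hw : ∀ i, |w i| ≤ K) (ω : Ω)
    (hω : ∀ n, ∃ i, X (n+1) ω = X n ω + dir d i) (n : ℕ) : |SS X w n ω| ≤ K * n := by
  induction n with
  | zero => simp [SS]
  | succ n ih =>
    obtain ⟨i, hi⟩ := hω n
    rw [SS_succ w n ω i hi]
    have := abs_add_le (SS X w n ω) (w i)
    have := hw i
    push_cast
    linarith

lemma SS_sub (w w' : Fin (2 * d) → ℝ) (c : ℝ) (hw : ∀ i, w i - w' i = c) (ω : Ω)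
    (hω : ∀ n, ∃ i, X (n+1) ω = X n ω + dir d i) (n : ℕ) :
    SS X w n ω - SS X w' n ω = c * n := by
  induction n with
  | zero => simp [SS]
  | succ n ih =>
    obtain ⟨i, hi⟩ := hω n
    rw [SS_succ w n ω i hi, SS_succ w' n ω i hi]
    have := hw i
    push_cast
    linarith

lemma sqlim [IsProbabilityMeasure μ] (hA : ∑ j, (A j)ᴴ * A j = 1) (hQT : IsQTraj A μ ℱ ρ X)
    {P R ρ₀ : Matrix (Fin k) (Fin k) ℂ} (h : Blk (fun i => A i * P) P R)
    (hcomm : ∀ i, P * A i = A i * P) (hinit : ∀ ω, ρ 0 ω = ρ₀)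
    (hρ₀ : IsDensity ρ₀)
    (w : Fin (2 * d) → ℝ) (L : Matrix (Fin k) (Fin k) ℂ) (hLP : P * L * P = L)
    (hL : L - LA (fun i => A i * P) L = ∑ i, (w i : ℂ) • ((A i * P)ᴴ * (A i * P)))
    (K : ℝ) (hK : 0 < K) (hwK : ∀ i, |w i| ≤ K) :
    Tendsto (fun n : ℕ => ∫ ω, (P * ρ n ω).trace.re * ((K * n)⁻¹ * SS X w n ω) ^ 2 ∂μ)
      atTop (𝓝 0) := by
  have hn : Tendsto (fun n : ℕ => ((n : ℝ))⁻¹) atTop (𝓝 0) := tendsto_inv_atTop_nhds_zero_nat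
  have ht : Tendsto (fun n : ℕ => (K * n : ℝ)⁻¹) atTop (𝓝 0) := by
    have := hn.mul_const K⁻¹
    simpa [mul_inv] using this
  have hτ : Tendsto (fun n : ℕ => (n : ℝ) * ((K * n : ℝ)⁻¹) ^ 2) atTop (𝓝 0) := by
    have := hn.const_mul (K⁻¹ ^ 2)
    rw [mul_zero] at this
    refine this.congr fun n => ?_
    rcases Nat.eq_zero_or_pos n with rfl | hn
    · simp
    · have : (n : ℝ) ≠ 0 := by positivity
      field_simp
  have h1 := key hA hQT h hcomm hinit w L hLP hL _ 0 ht hτ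
  have hm := mean_re hA hQT h hcomm hinit
  have h0 := tr_proj hρ₀ h.sa h.idem
  simp only [Complex.ofReal_zero, mul_zero, zero_div, neg_zero, Complex.exp_zero, mul_one] at h1
  rw [h0.1] at h1
  have h2 := (Complex.continuous_re.tendsto _).comp h1
  rw [Complex.ofReal_re] at h2
  have hcm : ∀ n : ℕ, Measurable (SS X w n) := fun n => (meas_SS hQT w n).mono (ℱ.le n) le_rfl
  have hpi : ∀ n, Integrable (fun ω => (P * ρ n ω).trace.re) μ := fun n =>
    Integrable.of_bound (pp_meas hQT P n).aestronglyMeasurable 1 (by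
      filter_upwards [hQT.density n] with ω hω
      have := tr_proj hω h.sa h.idem
      rw [Real.norm_eq_abs, abs_of_nonneg this.2.1]; exact this.2.2)
  have hci : ∀ n : ℕ, Integrable (fun ω => (P * ρ n ω).trace.re *
      Real.cos ((K * n)⁻¹ * SS X w n ω)) μ := fun n => by
    refine (hpi n).mul_bdd (c := 1) ?_ ?_
    · exact (Real.measurable_cos.comp ((hcm n).const_mul _)).aestronglyMeasurable
    · exact Eventually.of_forall fun ω => Real.abs_cos_le_one _
  have h3 : Tendsto (fun n : ℕ => ∫ ω, (P * ρ n ω).trace.re *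
      Real.cos ((K * n)⁻¹ * SS X w n ω) ∂μ) atTop (𝓝 (P * ρ₀).trace.re) := by
    refine h2.congr fun n => ?_
    simp only [Function.comp_apply]
    have := (integral_re (int_phi hQT w ((K * n : ℝ)⁻¹) n P))
    rw [← RCLike.re_eq_complex_re, ← this]
    refine integral_congr_ae ?_
    filter_upwards [hQT.density n] with ω hω
    rw [(tr_proj hω h.sa h.idem).1, mul_comm Complex.I, RCLike.re_eq_complex_re,
      Complex.re_mul_ofReal, Complex.exp_ofReal_mul_I_re, mul_comm]
  have h4 : Tendsto (fun n : ℕ => Real.pi ^ 2 / 2 * ∫ ω, ((P * ρ n ω).trace.re - (P * ρ n ω).trace.re *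
      Real.cos ((K * n)⁻¹ * SS X w n ω)) ∂μ) atTop (𝓝 0) := by
    have := ((tendsto_const_nhds (x := (P * ρ₀).trace.re)).sub h3).const_mul (Real.pi ^ 2 / 2)
    rw [sub_self, mul_zero] at this
    refine this.congr fun n => ?_
    rw [integral_sub (hpi n) (hci n), hm n]
  refine squeeze_zero' (Eventually.of_forall fun n => ?_) (Eventually.of_forall fun n => ?_) h4
  · refine integral_nonneg_of_ae ?_
    filter_upwards [hQT.density n] with ω hω
    exact mul_nonneg (tr_proj hω h.sa h.idem).2.1 (sq_nonneg _)
  · rw [← integral_const_mul]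
    refine integral_mono_of_nonneg ?_ (((hpi n).sub (hci n)).const_mul _) ?_
    · filter_upwards [hQT.density n] with ω hω
      exact mul_nonneg (tr_proj hω h.sa h.idem).2.1 (sq_nonneg _)
    · filter_upwards [hQT.density n, step_ae hA hQT] with ω hω hst
      have hp := (tr_proj hω h.sa h.idem).2.1
      have hb := SS_bound w K hwK ω hst n
      have hb2 : |(K * n : ℝ)⁻¹ * SS X w n ω| ≤ 1 := by
        rcases Nat.eq_zero_or_pos n with rfl | hn
        · simp
        · have : 0 < K * n := by positivity
          rw [abs_mul, abs_of_pos (inv_pos.mpr this), inv_mul_le_iff₀ this]; linarith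
      have hc := Real.cos_le_one_sub_mul_cos_sq (hb2.trans (by linarith [Real.pi_gt_three]))
      set x := (K * n : ℝ)⁻¹ * SS X w n ω
      have hpi2 : 0 < Real.pi ^ 2 := by positivity
      have : x ^ 2 ≤ Real.pi ^ 2 / 2 * (1 - Real.cos x) := by
        have : Real.pi ^ 2 / 2 * (2 / Real.pi ^ 2 * x ^ 2) ≤ Real.pi ^ 2 / 2 * (1 - Real.cos x) := by
          gcongr; linarith
        calc x ^ 2 = Real.pi ^ 2 / 2 * (2 / Real.pi ^ 2 * x ^ 2) := by field_simp
          _ ≤ _ := this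
      calc _ ≤ (P * ρ n ω).trace.re * (Real.pi ^ 2 / 2 * (1 - Real.cos x)) := by gcongr
        _ = _ := by ring

lemma cross [IsProbabilityMeasure μ] (hA : ∑ j, (A j)ᴴ * A j = 1) (hQT : IsQTraj A μ ℱ ρ X)
    {P P' R R' ρ₀ : Matrix (Fin k) (Fin k) ℂ} (h : Blk (fun i => A i * P) P R)
    (h' : Blk (fun i => A i * P') P' R')
    (hcomm : ∀ i, P * A i = A i * P) (hcomm' : ∀ i, P' * A i = A i * P')
    (hinit : ∀ ω, ρ 0 ω = ρ₀)
    (hρ₀ : IsDensity ρ₀)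
    (hm : (fun i : Fin (2 * d) => ((A i * R * (A i)ᴴ).trace).re) ≠
        (fun i : Fin (2 * d) => ((A i * R' * (A i)ᴴ).trace).re)) :
    Tendsto (fun n : ℕ => ∫ ω, (P * ρ n ω).trace.re * (P' * ρ n ω).trace.re ∂μ)
      atTop (𝓝 0) := by
  obtain ⟨i, hi⟩ := Function.ne_iff.mp hm
  obtain ⟨L, hLP, hL⟩ := poisson_i h i
  obtain ⟨L', hLP', hL'⟩ := poisson_i h' i
  set m := ((A i * R * (A i)ᴴ).trace).re with hmd
  set m' := ((A i * R' * (A i)ᴴ).trace).re with hmd'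
  have hmm : 0 < (m' - m) ^ 2 := by
    have : m' - m ≠ 0 := sub_ne_zero.mpr (Ne.symm hi)
    positivity
  set w : Fin (2 * d) → ℝ := fun a => (if a = i then 1 else 0) - m with hw
  set w' : Fin (2 * d) → ℝ := fun a => (if a = i then 1 else 0) - m' with hw'
  set K : ℝ := 1 + |m| + |m'|
  have hK : 0 < K := by positivity
  have hb : ∀ (x : ℝ) (a : Fin (2 * d)), |(if a = i then (1:ℝ) else 0) - x| ≤ 1 + |x| := by
    intro x a
    refine (abs_sub _ _).trans ?_
    gcongr
    split_ifs <;> simp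
  have s1 := sqlim hA hQT h hcomm hinit hρ₀ w L hLP hL K hK (fun a =>
    (hb m a).trans (by have := abs_nonneg m'; simp only [K]; linarith))
  have s2 := sqlim hA hQT h' hcomm' hinit hρ₀ w' L' hLP' hL' K hK (fun a =>
    (hb m' a).trans (by have := abs_nonneg m; simp only [K]; linarith))
  have s3 := (s1.add s2).const_mul (2 * K ^ 2 / (m' - m) ^ 2)
  rw [add_zero, mul_zero] at s3
  have hint : ∀ {Q R : Matrix (Fin k) (Fin k) ℂ} (v : Fin (2 * d) → ℝ) (_ : ∀ a, |v a| ≤ K)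
      (_ : Blk (fun i => A i * Q) Q R) (n : ℕ), Integrable (fun ω => (Q * ρ n ω).trace.re *
      ((K * n)⁻¹ * SS X v n ω) ^ 2) μ := by
    intro Q R v hv hQ n
    refine Integrable.of_bound ((pp_meas hQT Q n).mul ((((meas_SS hQT v n).mono (ℱ.le n)
      le_rfl).const_mul _).pow_const 2)).aestronglyMeasurable 1 ?_
    filter_upwards [hQT.density n, step_ae hA hQT] with ω hω hst
    have hp := (tr_proj hω hQ.sa hQ.idem)
    have hb := SS_bound v K hv ω hst n
    have hb2 : |(K * n : ℝ)⁻¹ * SS X v n ω| ≤ 1 := by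
      rcases Nat.eq_zero_or_pos n with rfl | hn
      · simp
      · have : 0 < K * n := by positivity
        rw [abs_mul, abs_of_pos (inv_pos.mpr this), inv_mul_le_iff₀ this]; linarith
    rw [Real.norm_eq_abs, abs_of_nonneg (mul_nonneg hp.2.1 (sq_nonneg _))]
    have : ((K * n : ℝ)⁻¹ * SS X v n ω) ^ 2 ≤ 1 := (sq_le_one_iff_abs_le_one _).mpr hb2
    exact mul_le_one₀ hp.2.2 (sq_nonneg _) this
  refine squeeze_zero' (Eventually.of_forall fun n => ?_) ?_ s3
  · refine integral_nonneg_of_ae ?_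
    filter_upwards [hQT.density n] with ω hω
    exact mul_nonneg (tr_proj hω h.sa h.idem).2.1 (tr_proj hω h'.sa h'.idem).2.1
  · filter_upwards [eventually_gt_atTop 0] with n hn
    have i1 := hint w (fun a =>
      (hb m a).trans (by have := abs_nonneg m'; simp only [K]; linarith)) h n
    have i2 := hint w' (fun a =>
      (hb m' a).trans (by have := abs_nonneg m; simp only [K]; linarith)) h' n
    rw [← integral_add i1 i2, ← integral_const_mul]
    refine integral_mono_of_nonneg ?_ ((i1.add i2).const_mul _) ?_
    · filter_upwards [hQT.density n] with ω hω
      exact mul_nonneg (tr_proj hω h.sa h.idem).2.1 (tr_proj hω h'.sa h'.idem).2.1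
    · filter_upwards [hQT.density n, step_ae hA hQT] with ω hω hst
      obtain ⟨-, hp0, hp1⟩ := tr_proj hω h.sa h.idem
      obtain ⟨-, hq0, hq1⟩ := tr_proj hω h'.sa h'.idem
      have hd := SS_sub w w' (m' - m) (fun a => by simp only [hw, hw']; ring) ω hst n
      set p := (P * ρ n ω).trace.re
      set q := (P' * ρ n ω).trace.re
      have hn' : (0:ℝ) < n := by exact_mod_cast hn
      set x := (K * n : ℝ)⁻¹ * SS X w n ω with hx
      set y := (K * n : ℝ)⁻¹ * SS X w' n ω with hy
      have hxy : (m' - m) = K * (x - y) := by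
        rw [hx, hy, ← mul_sub, hd]; field_simp
      have e1 : (x - y) ^ 2 ≤ 2 * (x ^ 2 + y ^ 2) := by nlinarith [sq_nonneg (x + y)]
      have e2 : p * q * (x - y) ^ 2 ≤ 2 * (p * x ^ 2 + q * y ^ 2) := by
        have a1 : p * q ≤ p := mul_le_of_le_one_right hp0 hq1
        have a2 : p * q ≤ q := mul_le_of_le_one_left hq0 hp1
        have a3 := mul_le_mul_of_nonneg_left e1 (mul_nonneg hp0 hq0)
        have a4 := mul_le_mul_of_nonneg_right a1 (sq_nonneg x)
        have a5 := mul_le_mul_of_nonneg_right a2 (sq_nonneg y)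
        linarith
      change p * q ≤ 2 * K ^ 2 / (m' - m) ^ 2 * (p * x ^ 2 + q * y ^ 2)
      rw [div_mul_eq_mul_div, le_div_iff₀ hmm, hxy, mul_pow]
      have := mul_le_mul_of_nonneg_left e2 (sq_nonneg K)
      linarith

end zeroone

end QT
namespace QT

open scoped Topology

section zo

variable {k d : ℕ} {Ω : Type} {mΩ : MeasurableSpace Ω}
    {A : Fin (2 * d) → Matrix (Fin k) (Fin k) ℂ}
    {μ : Measure Ω} {ℱ : Filtration ℕ mΩ}
    {ρ : ℕ → Ω → Matrix (Fin k) (Fin k) ℂ}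
    {X : ℕ → Ω → Fin d → ℤ}

lemma zo [IsProbabilityMeasure μ] {N : ℕ} (hA : ∑ j, (A j)ᴴ * A j = 1)
    (hQT : IsQTraj A μ ℱ ρ X) {ρ₀ : Matrix (Fin k) (Fin k) ℂ}
    (P R : Fin N → Matrix (Fin k) (Fin k) ℂ) (h : ∀ j, Blk (fun i => A i * P j) (P j) (R j))
    (hsum : ∑ j, P j = 1)
    (hcomm : ∀ i j, P j * A i = A i * P j)
    (hinit : ∀ ω, ρ 0 ω = ρ₀) (hρ₀ : IsDensity ρ₀)
    (hm : ∀ j j', j ≠ j' →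
      (fun i : Fin (2 * d) => ((A i * R j * (A i)ᴴ).trace).re) ≠
        (fun i : Fin (2 * d) => ((A i * R j' * (A i)ᴴ).trace).re))
    (j : Fin N) (pinf : Ω → ℝ)
    (has : ∀ᵐ ω ∂μ, Tendsto (fun n => ((P j * ρ n ω).trace).re) atTop (𝓝 (pinf ω))) :
    AEMeasurable pinf μ ∧ (∀ᵐ ω ∂μ, pinf ω = 0 ∨ pinf ω = 1) ∧
      ∫ ω, pinf ω ∂μ = (P j * ρ₀).trace.re := by
  have hdens : ∀ᵐ ω ∂μ, ∀ n, IsDensity (ρ n ω) := ae_all_iff.mpr hQT.density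
  have hpm : AEMeasurable pinf μ :=
    aemeasurable_of_tendsto_metrizable_ae' (fun n => (pp_meas hQT (P j) n).aemeasurable) has
  have hp01 : ∀ᵐ ω ∂μ, 0 ≤ pinf ω ∧ pinf ω ≤ 1 := by
    filter_upwards [hdens, has] with ω h1 h2
    exact ⟨ge_of_tendsto' h2 fun n => (tr_proj (h1 n) (h j).sa (h j).idem).2.1,
      le_of_tendsto' h2 fun n => (tr_proj (h1 n) (h j).sa (h j).idem).2.2⟩
  have hbd : ∀ (Q S : Matrix (Fin k) (Fin k) ℂ) (_ : Blk (fun i => A i * Q) Q S) (n : ℕ),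
      ∀ᵐ ω ∂μ, ‖(Q * ρ n ω).trace.re‖ ≤ 1 := by
    intro Q S hQ n
    filter_upwards [hdens] with ω h1
    have := tr_proj (h1 n) hQ.sa hQ.idem
    rw [Real.norm_eq_abs, abs_of_nonneg this.2.1]; exact this.2.2
  have hmean : ∫ ω, pinf ω ∂μ = (P j * ρ₀).trace.re := by
    have h1 := tendsto_integral_of_dominated_convergence (μ := μ) (fun _ => (1:ℝ))
      (fun n => (pp_meas hQT (P j) n).aestronglyMeasurable) (integrable_const _)
      (hbd _ _ (h j)) has
    simp only [mean_re hA hQT (h j) (fun i => hcomm i j) hinit] at h1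
    exact tendsto_nhds_unique h1 tendsto_const_nhds
  refine ⟨hpm, ?_, hmean⟩
  have t1 : Tendsto (fun n => ∫ ω, (P j * ρ n ω).trace.re * (1 - (P j * ρ n ω).trace.re) ∂μ)
      atTop (𝓝 (∫ ω, pinf ω * (1 - pinf ω) ∂μ)) := by
    refine tendsto_integral_of_dominated_convergence (μ := μ) (fun _ => (1:ℝ)) (fun n => ?_)
      (integrable_const _) (fun n => ?_) ?_
    · have := pp_meas hQT (P j) n
      exact (this.mul (this.const_sub 1)).aestronglyMeasurable
    · filter_upwards [hdens] with ω h1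
      obtain ⟨-, h2, h3⟩ := tr_proj (h1 n) (h j).sa (h j).idem
      rw [Real.norm_eq_abs, abs_le]
      constructor <;> nlinarith
    · filter_upwards [has] with ω h1
      exact h1.mul (h1.const_sub 1)
  have t2 : Tendsto (fun n => ∫ ω, (P j * ρ n ω).trace.re * (1 - (P j * ρ n ω).trace.re) ∂μ)
      atTop (𝓝 0) := by
    have t3 : Tendsto (fun n => ∑ j' ∈ Finset.univ.erase j,
        ∫ ω, (P j * ρ n ω).trace.re * (P j' * ρ n ω).trace.re ∂μ) atTop
        (𝓝 (∑ j' ∈ Finset.univ.erase j, 0)) := by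
      refine tendsto_finsetSum _ fun j' hj' => ?_
      exact cross hA hQT (h j) (h j') (fun i => hcomm i j) (fun i => hcomm i j') hinit hρ₀
        (hm j j' (Finset.ne_of_mem_erase hj').symm)
    rw [Finset.sum_const_zero] at t3
    refine t3.congr fun n => ?_
    rw [← integral_finsetSum]
    · refine integral_congr_ae ?_
      filter_upwards [hdens] with ω h1
      rw [← Finset.mul_sum]
      congr 1
      have e1 : ∑ j', (P j' * ρ n ω).trace.re = 1 := by
        rw [← Complex.re_sum, ← Matrix.trace_sum, ← Finset.sum_mul, hsum, one_mul, (h1 n).2]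
        simp
      rw [← e1, ← Finset.add_sum_erase _ _ (Finset.mem_univ j)]
      ring
    · intro j' _
      refine Integrable.of_bound ((pp_meas hQT (P j) n).mul
        (pp_meas hQT (P j') n)).aestronglyMeasurable 1 ?_
      filter_upwards [hbd _ _ (h j) n, hbd _ _ (h j') n] with ω a b
      rw [norm_mul]
      exact mul_le_one₀ a (norm_nonneg _) b
  have t4 := tendsto_nhds_unique t1 t2
  rw [integral_eq_zero_iff_of_nonneg_ae] at t4
  · filter_upwards [t4] with ω hω
    rcases mul_eq_zero.mp hω with h1 | h1
    · exact Or.inl h1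
    · right; linarith
  · filter_upwards [hp01] with ω hω
    exact mul_nonneg hω.1 (by linarith [hω.2])
  · refine Integrable.of_bound ((hpm.mul (hpm.const_sub 1)).aestronglyMeasurable) 1 ?_
    filter_upwards [hp01] with ω hω
    rw [Real.norm_eq_abs, abs_le]
    constructor <;> nlinarith

end zo

section alg

variable {k d : ℕ}

lemma dirR_eq (i : Fin (2 * d)) (r : Fin d) :
    dirR d i r = (if i = lo r then 1 else 0) - (if i = hi r then 1 else 0) := by
  have h1 := i.isLt
  have h2 := r.isLt
  simp only [dirR, dir, lo, hi, Fin.ext_iff]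
  split_ifs <;> first | omega | simp

lemma sum_dirR (f : Fin (2 * d) → ℝ) (r : Fin d) :
    ∑ i, dirR d i r * f i = f (lo r) - f (hi r) := by
  simp [dirR_eq, sub_mul, Finset.sum_sub_distrib]

lemma sum_dirR2 (f : Fin (2 * d) → ℝ) (r s : Fin d) :
    ∑ i, dirR d i r * dirR d i s * f i = if r = s then f (lo r) + f (hi r) else 0 := by
  have : ∀ i, dirR d i r * dirR d i s * f i = dirR d i r * (dirR d i s * f i) := fun i => by ring
  simp only [this]
  rw [sum_dirR]
  have h1 := r.isLt
  have h2 := s.isLt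
  simp only [dirR_eq, lo, hi, Fin.ext_iff]
  split_ifs <;> first | omega | ring

lemma quad_alg {ι : Type} [Fintype ι] (D : ι → Fin d → ℝ) (q : ι → ℝ) (τ : ι → Fin d → ℝ)
    (m u l : Fin d → ℝ) (hq : ∑ i, q i = 1) (hm : ∀ r, m r = ∑ i, q i * D i r)
    (hu : ∀ s, u s = ∑ i, τ i s) :
    ∑ i, ((∑ r, l r * (D i r - m r)) ^ 2 * q i
        + 2 * (∑ r, l r * (D i r - m r)) * (∑ s, l s * τ i s))
      = ∑ r, ∑ s, l r * ((∑ i, D i r * D i s * q i) - m r * m s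
          + ((∑ i, D i r * τ i s) + (∑ i, D i s * τ i r)) - (m r * u s + m s * u r)) * l s := by
  set a : ι → ℝ := fun i => ∑ r, l r * D i r with ha
  set M := ∑ r, l r * m r with hM
  set U := ∑ r, l r * u r with hU
  have hw : ∀ i, ∑ r, l r * (D i r - m r) = a i - M := by
    intro i; simp only [mul_sub, Finset.sum_sub_distrib, ha, hM]
  have e1 : ∑ i, a i * q i = M := by
    simp only [ha, hM, hm, Finset.sum_mul, Finset.mul_sum]
    rw [Finset.sum_comm]
    exact Finset.sum_congr rfl fun r _ => Finset.sum_congr rfl fun i _ => by ring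
  have e2 : ∑ i, ∑ s, l s * τ i s = U := by
    simp only [hU, hu, Finset.mul_sum]
    rw [Finset.sum_comm]
  have gen : ∀ f : ι → Fin d → Fin d → ℝ,
      ∑ i, ∑ r, ∑ s, f i r s = ∑ r, ∑ s, ∑ i, f i r s := by
    intro f
    rw [Finset.sum_comm]
    exact Finset.sum_congr rfl fun r _ => Finset.sum_comm
  have s1 : ∑ r, ∑ s, l r * (∑ i, D i r * D i s * q i) * l s = ∑ i, a i ^ 2 * q i := by
    simp only [ha, sq, Finset.mul_sum, Finset.sum_mul]
    rw [gen]
    exact Finset.sum_congr rfl fun r _ => Finset.sum_congr rfl fun s _ =>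
      Finset.sum_congr rfl fun i _ => by ring
  have s2 : ∑ r, ∑ s, l r * (m r * m s) * l s = M * M := by
    simp only [hM, Finset.sum_mul_sum]
    exact Finset.sum_congr rfl fun r _ => Finset.sum_congr rfl fun s _ => by ring
  have s3 : ∑ r, ∑ s, l r * (m r * u s) * l s = M * U := by
    simp only [hM, hU, Finset.sum_mul_sum]
    exact Finset.sum_congr rfl fun r _ => Finset.sum_congr rfl fun s _ => by ring
  have s3' : ∑ r, ∑ s, l r * (m s * u r) * l s = M * U := by
    rw [Finset.sum_comm]
    simp only [hM, hU, Finset.sum_mul_sum]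
    exact Finset.sum_congr rfl fun r _ => Finset.sum_congr rfl fun s _ => by ring
  have s4 : ∑ r, ∑ s, l r * (∑ i, D i r * τ i s) * l s = ∑ i, a i * ∑ s, l s * τ i s := by
    simp only [ha, Finset.sum_mul_sum]
    rw [gen]
    simp only [Finset.mul_sum, Finset.sum_mul]
    exact Finset.sum_congr rfl fun r _ => Finset.sum_congr rfl fun s _ =>
      Finset.sum_congr rfl fun i _ => by ring
  have s4' : ∑ r, ∑ s, l r * (∑ i, D i s * τ i r) * l s = ∑ i, a i * ∑ s, l s * τ i s := by
    rw [← s4, Finset.sum_comm]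
    exact Finset.sum_congr rfl fun r _ => Finset.sum_congr rfl fun s _ => by ring
  have L : ∑ i, ((a i - M) ^ 2 * q i + 2 * (a i - M) * (∑ s, l s * τ i s))
      = (∑ i, a i ^ 2 * q i) - 2 * M * (∑ i, a i * q i) + M * M * (∑ i, q i)
        + 2 * (∑ i, a i * ∑ s, l s * τ i s) - 2 * M * ∑ i, ∑ s, l s * τ i s := by
    simp only [Finset.mul_sum (s := (Finset.univ : Finset ι)), ← Finset.sum_sub_distrib,
      ← Finset.sum_add_distrib]
    exact Finset.sum_congr rfl fun i _ => by ring
  simp only [hw]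
  rw [L, e1, e2, hq]
  have Rr : ∑ r, ∑ s, l r * ((∑ i, D i r * D i s * q i) - m r * m s
          + ((∑ i, D i r * τ i s) + (∑ i, D i s * τ i r)) - (m r * u s + m s * u r)) * l s
      = (∑ r, ∑ s, l r * (∑ i, D i r * D i s * q i) * l s) - (∑ r, ∑ s, l r * (m r * m s) * l s)
        + (∑ r, ∑ s, l r * (∑ i, D i r * τ i s) * l s)
        + (∑ r, ∑ s, l r * (∑ i, D i s * τ i r) * l s)
        - (∑ r, ∑ s, l r * (m r * u s) * l s) - (∑ r, ∑ s, l r * (m s * u r) * l s) := by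
    simp only [← Finset.sum_sub_distrib, ← Finset.sum_add_distrib]
    exact Finset.sum_congr rfl fun r _ => Finset.sum_congr rfl fun s _ => by
      rw [Finset.sum_add_distrib]; ring
  rw [Rr, s1, s2, s3, s3', s4, s4']
  ring

end alg

end QT
namespace QT

open scoped Topology

section clt

variable {k d : ℕ}
    {A : Fin (2 * d) → Matrix (Fin k) (Fin k) ℂ}

lemma blk_BR {P R : Matrix (Fin k) (Fin k) ℂ} (h : Blk (fun i => A i * P) P R) (a) :
    (A a * P) * R * (A a * P)ᴴ = A a * R * (A a)ᴴ := by
  rw [conjTranspose_mul, h.sa]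
  calc _ = A a * (P * R * P) * (A a)ᴴ := by simp only [mul_assoc]
    _ = _ := by rw [h.supp]

lemma mvec_eq {P R : Matrix (Fin k) (Fin k) ℂ} (h : Blk (fun i => A i * P) P R) :
    mvec (fun i => A i * P) R = mvec A R := by
  funext r
  simp only [mvec, blk_BR h]

/-- Hermitian part of a matrix. -/
def herm (M : Matrix (Fin k) (Fin k) ℂ) : Matrix (Fin k) (Fin k) ℂ := (1/2 : ℂ) • (M + Mᴴ)

lemma trace_herm {T M : Matrix (Fin k) (Fin k) ℂ} (hT : T.PosSemidef) :
    (T * herm M).trace = (((T * M).trace.re : ℝ) : ℂ) := by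
  have h1 : (T * Mᴴ).trace = star (T * M).trace := by
    rw [← Matrix.trace_conjTranspose, conjTranspose_mul, hT.1.eq, Matrix.trace_mul_comm]
  rw [herm, mul_smul_comm, Matrix.trace_smul, mul_add, Matrix.trace_add, h1]
  apply Complex.ext
  · simp; ring
  · simp

lemma LA_conj {B : Fin (2 * d) → Matrix (Fin k) (Fin k) ℂ} (M : Matrix (Fin k) (Fin k) ℂ) :
    LA B Mᴴ = (LA B M)ᴴ := by
  simp only [LA_apply, conjTranspose_sum, conjTranspose_mul, conjTranspose_conjTranspose,
    mul_assoc]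

/-- combination of hermitianized solutions -/
def Lcomb (Lr : Fin d → Matrix (Fin k) (Fin k) ℂ) (l : Fin d → ℝ) : Matrix (Fin k) (Fin k) ℂ :=
  ∑ r, (l r : ℂ) • herm (Lr r)

/-- step weights -/
def wgt (l m : Fin d → ℝ) (i : Fin (2 * d)) : ℝ := ∑ r, l r * (dirR d i r - m r)

lemma Lcomb_supp {P : Matrix (Fin k) (Fin k) ℂ} (hsa : Pᴴ = P)
    (Lr : Fin d → Matrix (Fin k) (Fin k) ℂ) (hLrsupp : ∀ r, P * Lr r * P = Lr r)
    (l : Fin d → ℝ) : P * Lcomb Lr l * P = Lcomb Lr l := by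
  have h2 : ∀ r, P * (Lr r)ᴴ * P = (Lr r)ᴴ := by
    intro r
    have := congrArg conjTranspose (hLrsupp r)
    simpa [conjTranspose_mul, hsa, mul_assoc] using this
  simp only [Lcomb, herm, Finset.mul_sum, Finset.sum_mul, mul_smul_comm, smul_mul_assoc, mul_add,
    add_mul, hLrsupp, h2]

lemma Lcomb_poisson {P R : Matrix (Fin k) (Fin k) ℂ} (h : Blk (fun i => A i * P) P R)
    (Lr : Fin d → Matrix (Fin k) (Fin k) ℂ) (m l : Fin d → ℝ)
    (hLr : ∀ r : Fin d,
      Lr r - (∑ i, (A i * P)ᴴ * Lr r * (A i * P)) =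
        (∑ i, dirR d i r • ((A i * P)ᴴ * (A i * P))) - m r • P) :
    Lcomb Lr l - LA (fun i => A i * P) (Lcomb Lr l) =
      ∑ i, (wgt l m i : ℂ) • ((A i * P)ᴴ * (A i * P)) := by
  have g1 : ∀ r, Lr r - LA (fun i => A i * P) (Lr r) =
      ∑ i, (((dirR d i r - m r : ℝ)) : ℂ) • ((A i * P)ᴴ * (A i * P)) := by
    intro r
    rw [LA_apply, hLr]
    have : (m r) • P = ∑ i, (m r) • ((A i * P)ᴴ * (A i * P)) := by
      rw [← Finset.smul_sum]; congr 1; exact h.sum.symm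
    rw [this, ← Finset.sum_sub_distrib]
    refine Finset.sum_congr rfl fun i _ => ?_
    rw [← sub_smul]
    exact (Complex.coe_smul _ _).symm
  have g2 : ∀ r, (Lr r)ᴴ - LA (fun i => A i * P) (Lr r)ᴴ =
      ∑ i, (((dirR d i r - m r : ℝ)) : ℂ) • ((A i * P)ᴴ * (A i * P)) := by
    intro r
    have := congrArg conjTranspose (g1 r)
    rw [conjTranspose_sub, ← LA_conj, conjTranspose_sum] at this
    rw [this]
    refine Finset.sum_congr rfl fun i _ => ?_
    rw [conjTranspose_smul, conjTranspose_mul, conjTranspose_conjTranspose]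
    congr 1
    exact Complex.conj_ofReal _
  have g3 : ∀ r, herm (Lr r) - LA (fun i => A i * P) (herm (Lr r)) =
      ∑ i, (((dirR d i r - m r : ℝ)) : ℂ) • ((A i * P)ᴴ * (A i * P)) := by
    intro r
    have e : herm (Lr r) - LA (fun i => A i * P) (herm (Lr r)) = (1/2 : ℂ) •
        ((Lr r - LA (fun i => A i * P) (Lr r)) + ((Lr r)ᴴ - LA (fun i => A i * P) (Lr r)ᴴ)) := by
      simp only [herm, map_smul, map_add]
      rw [← smul_sub]
      congr 1
      abel
    rw [e, g1, g2, ← two_smul ℂ, smul_smul]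
    norm_num
  simp only [Lcomb, map_sum, map_smul]
  rw [← Finset.sum_sub_distrib]
  simp only [← smul_sub, g3, Finset.smul_sum, smul_smul]
  rw [Finset.sum_comm]
  refine Finset.sum_congr rfl fun i _ => ?_
  rw [← Finset.sum_smul]
  congr 1
  simp [wgt]

lemma cc_comb {P R : Matrix (Fin k) (Fin k) ℂ} (h : Blk (fun i => A i * P) P R)
    (Lr : Fin d → Matrix (Fin k) (Fin k) ℂ) (l : Fin d → ℝ) :
    cc (fun i => A i * P) R (wgt l (mvec A R)) (Lcomb Lr l) =
      ((∑ r, ∑ s, l r * Cmat (fun i => A i * P) R Lr r s * l s : ℝ) : ℂ) := by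
  rw [← mvec_eq h]
  set B : Fin (2 * d) → Matrix (Fin k) (Fin k) ℂ := fun i => A i * P with hB
  have hpsd : ∀ i, (B i * R * (B i)ᴴ).PosSemidef := fun i =>
    h.dens.1.mul_mul_conjTranspose_same (B i)
  have hs : ∑ i, B i * R * (B i)ᴴ = R := h.inv
  have alg := quad_alg (fun i => dirR d i) (fun i => (B i * R * (B i)ᴴ).trace.re)
    (fun i s => (B i * R * (B i)ᴴ * Lr s).trace.re) (mvec B R) (fun s => (R * Lr s).trace.re) l
    (by rw [← Complex.re_sum, ← Matrix.trace_sum, hs, h.dens.2]; simp)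
    (fun r => rfl)
    (fun s => by rw [← Complex.re_sum, ← Matrix.trace_sum, ← Finset.sum_mul, hs])
  have e : ∀ r s, Cmat B R Lr r s = (∑ i, dirR d i r * dirR d i s * (B i * R * (B i)ᴴ).trace.re)
      - mvec B R r * mvec B R s
      + ((∑ i, dirR d i r * (B i * R * (B i)ᴴ * Lr s).trace.re)
        + (∑ i, dirR d i s * (B i * R * (B i)ᴴ * Lr r).trace.re))
      - (mvec B R r * (R * Lr s).trace.re + mvec B R s * (R * Lr r).trace.re) := by
    intro r s
    rw [sum_dirR2 (fun i => (B i * R * (B i)ᴴ).trace.re),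
      sum_dirR (fun i => (B i * R * (B i)ᴴ * Lr s).trace.re),
      sum_dirR (fun i => (B i * R * (B i)ᴴ * Lr r).trace.re)]
    unfold Cmat
    ring
  simp only [e]
  rw [← alg, cc, Complex.ofReal_sum]
  refine Finset.sum_congr rfl fun i _ => ?_
  have e3 : (B i * R * (B i)ᴴ * Lcomb Lr l).trace =
      ((∑ s, l s * (B i * R * (B i)ᴴ * Lr s).trace.re : ℝ) : ℂ) := by
    simp only [Lcomb, Finset.mul_sum, mul_smul_comm, Matrix.trace_sum, Matrix.trace_smul,
      trace_herm (hpsd i)]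
    push_cast
    rfl
  rw [e3]
  simp only [wgt]
  push_cast
  rw [trace_real (hpsd i)]

lemma SS_wgt {Ω : Type} {X : ℕ → Ω → Fin d → ℤ} (l m : Fin d → ℝ) (ω : Ω)
    (hω : ∀ n, ∃ i, X (n+1) ω = X n ω + dir d i) (n : ℕ) :
    SS X (wgt l m) n ω = ∑ r, l r * ((X n ω r : ℝ) - X 0 ω r - n * m r) := by
  induction n with
  | zero => simp [SS]
  | succ n ih =>
    obtain ⟨i, hi⟩ := hω n
    rw [SS_succ _ n ω i hi, ih, wgt, ← Finset.sum_add_distrib]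
    refine Finset.sum_congr rfl fun r _ => ?_
    rw [hi]
    simp only [Pi.add_apply, dirR]
    push_cast
    ring

variable {Ω : Type} {mΩ : MeasurableSpace Ω}
    {μ : Measure Ω} {ℱ : Filtration ℕ mΩ}
    {ρ : ℕ → Ω → Matrix (Fin k) (Fin k) ℂ}
    {X : ℕ → Ω → Fin d → ℤ}

lemma meas_Z (hQT : IsQTraj A μ ℱ ρ X) (m : Fin d → ℝ) (n : ℕ) :
    Measurable fun ω => (fun r => ((X n ω r : ℝ) - n * m r) / Real.sqrt n : Fin d → ℝ) := by
  have h1 : Measurable (X n) := (hQT.adapted_X n).mono (ℱ.le n) le_rfl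
  refine measurable_pi_lambda _ fun r => ?_
  have h2 : Measurable fun ω => X n ω r := (measurable_pi_apply r).comp h1
  have h3 : Measurable fun ω => (X n ω r : ℝ) := (measurable_from_top (f := fun z : ℤ => (z:ℝ))).comp h2
  exact (h3.sub_const _).div_const _

lemma clt_lim [IsProbabilityMeasure μ] (hA : ∑ j, (A j)ᴴ * A j = 1) (hQT : IsQTraj A μ ℱ ρ X)
    {P R ρ₀ : Matrix (Fin k) (Fin k) ℂ} (h : Blk (fun i => A i * P) P R)
    (hcomm : ∀ i, P * A i = A i * P) (hinit : ∀ ω, ρ 0 ω = ρ₀) (hρ₀ : IsDensity ρ₀)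
    (Lr : Fin d → Matrix (Fin k) (Fin k) ℂ) (l : Fin d → ℝ)
    (hLrsupp : ∀ r, P * Lr r * P = Lr r)
    (hLr : ∀ r : Fin d,
      Lr r - (∑ i, (A i * P)ᴴ * Lr r * (A i * P)) =
        (∑ i, dirR d i r • ((A i * P)ᴴ * (A i * P))) - mvec A R r • P)
    (pinf : Ω → ℝ) (hpm : AEMeasurable pinf μ)
    (has : ∀ᵐ ω ∂μ, Tendsto (fun n => ((P * ρ n ω).trace).re) atTop (𝓝 (pinf ω))) :
    Tendsto (fun n : ℕ => ∫ ω, (pinf ω : ℂ) * Complex.exp (Complex.I *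
        ((∑ r, l r * (((X n ω r : ℝ) - n * mvec A R r) / Real.sqrt n) : ℝ) : ℂ)) ∂μ) atTop
      (𝓝 ((P * ρ₀).trace.re * Complex.exp (-(((∑ r, ∑ s, l r *
        Cmat (fun i => A i * P) R Lr r s * l s) / 2 : ℝ) : ℂ)))) := by
  have hdens : ∀ᵐ ω ∂μ, ∀ n, IsDensity (ρ n ω) := ae_all_iff.mpr hQT.density
  have hn : Tendsto (fun n : ℕ => (Real.sqrt n)⁻¹) atTop (𝓝 0) :=
    tendsto_inv_atTop_zero.comp (Real.tendsto_sqrt_atTop.comp tendsto_natCast_atTop_atTop)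
  have hτ : Tendsto (fun n : ℕ => (n : ℝ) * ((Real.sqrt n)⁻¹) ^ 2) atTop (𝓝 1) := by
    refine tendsto_const_nhds.congr' ?_
    filter_upwards [eventually_gt_atTop 0] with n hn
    have : (n : ℝ) ≠ 0 := by positivity
    rw [inv_pow, Real.sq_sqrt (Nat.cast_nonneg n), mul_inv_cancel₀ this]
  have h1 := key hA hQT h hcomm hinit _ _ (Lcomb_supp h.sa Lr hLrsupp l)
    (Lcomb_poisson h Lr (mvec A R) l hLr) _ 1 hn hτ
  rw [cc_comb h, (tr_proj hρ₀ h.sa h.idem).1] at h1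
  set w := wgt l (mvec A R) with hw
  let c : Ω → ℝ := fun ω => ∑ r, l r * (X 0 ω r : ℝ)
  have hZm : ∀ n : ℕ, Measurable fun ω => Complex.exp (Complex.I *
        ((∑ r, l r * (((X n ω r : ℝ) - n * mvec A R r) / Real.sqrt n) : ℝ) : ℂ)) := by
    intro n
    have h2 : Measurable fun x : Fin d → ℝ =>
      Complex.exp (Complex.I * ((∑ r, l r * x r : ℝ) : ℂ)) := by fun_prop
    exact h2.comp (meas_Z hQT (mvec A R) n)
  have hp01 : ∀ᵐ ω ∂μ, 0 ≤ pinf ω ∧ pinf ω ≤ 1 := by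
    filter_upwards [hdens, has] with ω h1 h2
    exact ⟨ge_of_tendsto' h2 fun n => (tr_proj (h1 n) h.sa h.idem).2.1,
      le_of_tendsto' h2 fun n => (tr_proj (h1 n) h.sa h.idem).2.2⟩
  have hI : ∀ n : ℕ, Integrable (fun ω => (pinf ω : ℂ) * Complex.exp (Complex.I *
        ((∑ r, l r * (((X n ω r : ℝ) - n * mvec A R r) / Real.sqrt n) : ℝ) : ℂ))) μ := by
    intro n
    refine Integrable.of_bound ((Complex.measurable_ofReal.comp_aemeasurable hpm).mul
      (hZm n).aemeasurable).aestronglyMeasurable 1 ?_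
    filter_upwards [hp01] with ω hω
    rw [norm_mul, norm_expI, mul_one, Complex.norm_real, Real.norm_eq_abs, abs_of_nonneg hω.1]
    exact hω.2
  have h3 : Tendsto (fun n : ℕ => ∫ ω, ((pinf ω : ℂ) * Complex.exp (Complex.I *
        ((∑ r, l r * (((X n ω r : ℝ) - n * mvec A R r) / Real.sqrt n) : ℝ) : ℂ))
        - Complex.exp (Complex.I * (((Real.sqrt n)⁻¹ * SS X w n ω : ℝ) : ℂ)) *
      (ρ n ω * P).trace) ∂μ) atTop (𝓝 (∫ _, (0:ℂ) ∂μ)) := by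
    refine tendsto_integral_of_dominated_convergence (fun _ => (2:ℝ)) (fun n => ?_)
      (integrable_const _) (fun n => ?_) ?_
    · exact ((hI n).sub (int_phi hQT w ((Real.sqrt n)⁻¹) n P)).aestronglyMeasurable
    · filter_upwards [hp01, hdens] with ω hω hd
      obtain ⟨a1, a2, a3⟩ := tr_proj (hd n) h.sa h.idem
      refine (norm_sub_le _ _).trans ?_
      rw [norm_mul, norm_mul, norm_expI, norm_expI, a1, Complex.norm_real, Complex.norm_real,
        Real.norm_eq_abs, Real.norm_eq_abs, abs_of_nonneg hω.1, abs_of_nonneg a2]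
      linarith [hω.2]
    · filter_upwards [has, hdens, step_ae hA hQT] with ω hω hd hst
      have e1 : ∀ n : ℕ, (∑ r, l r * (((X n ω r : ℝ) - n * mvec A R r) / Real.sqrt n))
          = (Real.sqrt n)⁻¹ * SS X w n ω + (Real.sqrt n)⁻¹ * c ω := by
        intro n
        rw [SS_wgt l _ ω hst, ← mul_add]
        simp only [c]
        rw [← Finset.sum_add_distrib, Finset.mul_sum]
        refine Finset.sum_congr rfl fun r _ => ?_
        rw [div_eq_mul_inv]; ring
      have e2 : ∀ n : ℕ, (pinf ω : ℂ) * Complex.exp (Complex.I *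
          ((∑ r, l r * (((X n ω r : ℝ) - n * mvec A R r) / Real.sqrt n) : ℝ) : ℂ))
          - Complex.exp (Complex.I * (((Real.sqrt n)⁻¹ * SS X w n ω : ℝ) : ℂ)) *
            (ρ n ω * P).trace =
          Complex.exp (Complex.I * (((Real.sqrt n)⁻¹ * SS X w n ω : ℝ) : ℂ)) *
          ((pinf ω : ℂ) * Complex.exp (Complex.I * (((Real.sqrt n)⁻¹ * c ω : ℝ) : ℂ))
            - (((P * ρ n ω).trace.re : ℝ) : ℂ)) := by
        intro n
        rw [e1, (tr_proj (hd n) h.sa h.idem).1, Complex.ofReal_add, mul_add, Complex.exp_add]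
        ring
      have e3 : Tendsto (fun n : ℕ => (pinf ω : ℂ) *
          Complex.exp (Complex.I * (((Real.sqrt n)⁻¹ * c ω : ℝ) : ℂ))
            - (((P * ρ n ω).trace.re : ℝ) : ℂ)) atTop (𝓝 0) := by
        have a1 : Tendsto (fun n : ℕ => (((P * ρ n ω).trace.re : ℝ) : ℂ)) atTop (𝓝 (pinf ω : ℂ)) :=
          (Complex.continuous_ofReal.tendsto _).comp hω
        have a2 : Tendsto (fun n : ℕ => (Real.sqrt n)⁻¹ * c ω) atTop (𝓝 0) := by
          simpa using hn.mul_const (c ω)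
        have a3 : Continuous fun x : ℝ => Complex.exp (Complex.I * (x : ℂ)) := by fun_prop
        have a4 := (a3.tendsto 0).comp a2
        have a5 := (a4.const_mul (pinf ω : ℂ)).sub a1
        simpa [Function.comp_def] using a5
      rw [tendsto_zero_iff_norm_tendsto_zero] at e3 ⊢
      refine e3.congr fun n => ?_
      rw [e2, norm_mul, norm_expI, one_mul]
  have h4 := h3.add h1
  rw [integral_zero, zero_add] at h4
  have e5 : (-(((∑ r, ∑ s, l r * Cmat (fun i => A i * P) R Lr r s * l s) / 2 : ℝ) : ℂ)) =
      -(((∑ r, ∑ s, l r * Cmat (fun i => A i * P) R Lr r s * l s : ℝ) : ℂ) * ((1:ℝ):ℂ) / 2) := by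
    rw [Complex.ofReal_div]; simp
  rw [e5]
  refine h4.congr fun n => ?_
  rw [integral_sub (hI n) (int_phi hQT w ((Real.sqrt n)⁻¹) n P)]
  ring

end clt

end QT
namespace QT

open scoped Topology

lemma levy {d : ℕ} {Ω : Type} {mΩ : MeasurableSpace Ω} (κ : Measure Ω) [IsProbabilityMeasure κ]
    (Z : ℕ → Ω → Fin d → ℝ) (hZ : ∀ n, Measurable (Z n)) (C : Fin d → Fin d → ℝ)
    (hsym : ∀ r s, C r s = C s r)
    (hlim : ∀ l : Fin d → ℝ, Tendsto (fun n => ∫ ω, Complex.exp (Complex.I *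
      ((∑ r, l r * Z n ω r : ℝ) : ℂ)) ∂κ) atTop
      (𝓝 (Complex.exp (-(((∑ r, ∑ s, l r * C r s * l s) / 2 : ℝ) : ℂ))))) :
    ∃ ν : Measure (Fin d → ℝ), IsProbabilityMeasure ν ∧
      (∀ l : Fin d → ℝ,
        ∫ x, Complex.exp (Complex.I * ((∑ r, l r * x r : ℝ) : ℂ)) ∂ν =
          Complex.exp (-(((∑ r, ∑ s, l r * C r s * l s) / 2 : ℝ) : ℂ))) ∧
      ∀ f : BoundedContinuousFunction (Fin d → ℝ) ℝ,
        Tendsto (fun n : ℕ => ∫ ω, f (Z n ω) ∂κ) atTop (𝓝 (∫ x, f x ∂ν)) := by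
  have hquad : ∀ l : Fin d → ℝ, l ⬝ᵥ (Matrix.of C) *ᵥ l = ∑ r, ∑ s, l r * C r s * l s := by
    intro l
    simp only [dotProduct, mulVec, Finset.mul_sum, Matrix.of_apply, mul_assoc]
  have hnn : ∀ l : Fin d → ℝ, 0 ≤ ∑ r, ∑ s, l r * C r s * l s := by
    intro l
    have h1 := le_of_tendsto' (hlim l).norm (b := 1) fun n => by
      refine (norm_integral_le_of_norm_le_const (C := 1)
        (Eventually.of_forall fun ω => (norm_expI _).le)).trans ?_
      simp
    rw [Complex.norm_exp] at h1
    have h2 := Real.exp_le_one_iff.mp h1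
    rw [Complex.neg_re, Complex.ofReal_re] at h2
    linarith
  have hpsd : (Matrix.of C).PosSemidef := by
    refine Matrix.PosSemidef.of_dotProduct_mulVec_nonneg ?_ ?_
    · ext r s; simp [hsym r s]
    · intro l
      have := hquad l
      simp only [star_trivial]
      rw [this]; exact hnn l
  let G : Measure (EuclideanSpace ℝ (Fin d)) := ProbabilityTheory.multivariateGaussian 0 (Matrix.of C)
  have hofm : Measurable (WithLp.ofLp : EuclideanSpace ℝ (Fin d) → Fin d → ℝ) := by fun_prop
  have htom : Measurable (WithLp.toLp 2 : (Fin d → ℝ) → EuclideanSpace ℝ (Fin d)) := by fun_prop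
  have hZ' : ∀ n, Measurable fun ω => (WithLp.toLp 2 (Z n ω) : EuclideanSpace ℝ (Fin d)) :=
    fun n => htom.comp (hZ n)
  let κs : ℕ → ProbabilityMeasure (EuclideanSpace ℝ (Fin d)) := fun n =>
    ⟨κ.map (fun ω => WithLp.toLp 2 (Z n ω)), Measure.isProbabilityMeasure_map (hZ' n).aemeasurable⟩
  let GP : ProbabilityMeasure (EuclideanSpace ℝ (Fin d)) := ⟨G, inferInstance⟩
  have hinner : ∀ x t : EuclideanSpace ℝ (Fin d), inner ℝ x t = ∑ r, t r * x r := by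
    intro x t
    simp [PiLp.inner_apply]
  have hG : ∀ t : EuclideanSpace ℝ (Fin d), charFun G t =
      Complex.exp (-(((∑ r, ∑ s, t r * C r s * t s) / 2 : ℝ) : ℂ)) := by
    intro t
    rw [ProbabilityTheory.charFun_multivariateGaussian hpsd, hquad]
    congr 1
    simp
  have hconv : Tendsto κs atTop (𝓝 GP) := by
    refine ProbabilityMeasure.tendsto_of_tendsto_charFun fun t => ?_
    change Tendsto (fun n => charFun (κ.map (fun ω => WithLp.toLp 2 (Z n ω))) t) atTop
      (𝓝 (charFun G t))
    rw [hG]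
    refine (hlim t).congr fun n => ?_
    rw [charFun_apply, integral_map (hZ' n).aemeasurable (by fun_prop)]
    refine integral_congr_ae (Eventually.of_forall fun ω => ?_)
    simp only [hinner]
    rw [mul_comm]
  refine ⟨G.map WithLp.ofLp, Measure.isProbabilityMeasure_map hofm.aemeasurable, fun l => ?_,
    fun f => ?_⟩
  · have hmf : Measurable fun x : Fin d → ℝ =>
        Complex.exp (Complex.I * ((∑ r, l r * x r : ℝ) : ℂ)) := by fun_prop
    rw [integral_map hofm.aemeasurable hmf.aestronglyMeasurable]
    have := hG (WithLp.toLp 2 l)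
    rw [charFun_apply] at this
    rw [← this]
    refine integral_congr_ae (Eventually.of_forall fun x => ?_)
    simp only [hinner]
    rw [mul_comm]
  · rw [integral_map hofm.aemeasurable f.continuous.aestronglyMeasurable]
    have h1 := ProbabilityMeasure.tendsto_iff_forall_integral_tendsto.mp hconv
      (f.compContinuous ⟨WithLp.ofLp, by fun_prop⟩)
    refine h1.congr fun n => ?_
    change ∫ x, f (WithLp.ofLp x) ∂(κ.map (fun ω => WithLp.toLp 2 (Z n ω))) = _
    rw [integral_map (hZ' n).aemeasurable (by
      exact (f.continuous.comp (by fun_prop)).aestronglyMeasurable)]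

lemma Cmat_symm {k d : ℕ} (A : Fin (2 * d) → Matrix (Fin k) (Fin k) ℂ)
    (R : Matrix (Fin k) (Fin k) ℂ) (LL : Fin d → Matrix (Fin k) (Fin k) ℂ) (r s : Fin d) :
    Cmat A R LL r s = Cmat A R LL s r := by
  unfold Cmat
  by_cases h : r = s
  · subst h; rfl
  · rw [if_neg h, if_neg (Ne.symm h)]; ring

end QT

/-- (Conditional CLT in the block-diagonal case.) Under (H1'), (H2),
(H3), conditionally on `{p_∞^{(j)} = 1}` the process `(X_n − n m^{(j)})/√n` converges in
distribution to the Gaussian `N(0, C^{(j)})` on `ℝ^d` (characterized by its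
characteristic function), `C^{(j)}` being the covariance matrix of the main CLT computed
for the family `(A_i^{(j)}) = (A_i P_j)` with invariant state `ρ_∞^{(j)}`. -/
theorem stmt18 {k d N : ℕ} (hd : 1 ≤ d)
    (A : Fin (2 * d) → Matrix (Fin k) (Fin k) ℂ)
    (hA : ∑ j, (A j)ᴴ * A j = 1)
    (P : Fin N → Matrix (Fin k) (Fin k) ℂ)
    (hsa : ∀ j, (P j)ᴴ = P j) (hidem : ∀ j, P j * P j = P j)
    (horth : ∀ j j', j ≠ j' → P j * P j' = 0)
    (hsum : ∑ j, P j = 1)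
    (hcomm : ∀ (i : Fin (2 * d)) (j : Fin N), P j * A i = A i * P j)
    (ρinfj : Fin N → Matrix (Fin k) (Fin k) ℂ)
    (hρinfj : ∀ j, IsDensity (ρinfj j) ∧ P j * ρinfj j * P j = ρinfj j)
    (hinvj : ∀ j, (∑ i, (A i * P j) * ρinfj j * (A i * P j)ᴴ) = ρinfj j)
    (huniqj : ∀ j σ, IsDensity σ → P j * σ * P j = σ →
      (∑ i, (A i * P j) * σ * (A i * P j)ᴴ) = σ → σ = ρinfj j)
    (hm : ∀ j j', j ≠ j' →
      (fun i : Fin (2 * d) => ((A i * ρinfj j * (A i)ᴴ).trace).re) ≠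
        (fun i : Fin (2 * d) => ((A i * ρinfj j' * (A i)ᴴ).trace).re))
    {Ω : Type} {mΩ : MeasurableSpace Ω} (μ : Measure Ω) [IsProbabilityMeasure μ]
    (ℱ : Filtration ℕ mΩ)
    (ρ : ℕ → Ω → Matrix (Fin k) (Fin k) ℂ) (X : ℕ → Ω → Fin d → ℤ)
    (hQT : IsQTraj A μ ℱ ρ X)
    (ρ₀ : Matrix (Fin k) (Fin k) ℂ) (hρ₀ : IsDensity ρ₀)
    (hinit : ∀ ω, ρ 0 ω = ρ₀)
    (j : Fin N) (hp₀ : 0 < ((P j * ρ₀).trace).re)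
    (pinf : Ω → ℝ)
    (has : ∀ᵐ ω ∂μ, Tendsto (fun n => ((P j * ρ n ω).trace).re) atTop (nhds (pinf ω)))
    -- the solutions `L_r^{(j)}` of the Poisson-type equation on `E_j`
    (Lr : Fin d → Matrix (Fin k) (Fin k) ℂ)
    (hLrsupp : ∀ r, P j * Lr r * P j = Lr r)
    (hLr : ∀ r : Fin d,
      Lr r - (∑ i, (A i * P j)ᴴ * Lr r * (A i * P j)) =
        (∑ i, dirR d i r • ((A i * P j)ᴴ * (A i * P j))) -
          (mvec A (ρinfj j) r) • P j) :
    ∃ ν : Measure (Fin d → ℝ), IsProbabilityMeasure ν ∧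
      (∀ l : Fin d → ℝ,
        ∫ x, Complex.exp (Complex.I * ((∑ r, l r * x r : ℝ) : ℂ)) ∂ν =
          Complex.exp
            (-(((∑ r, ∑ s, l r * Cmat (fun i => A i * P j) (ρinfj j) Lr r s * l s) / 2 :
              ℝ) : ℂ))) ∧
      ∀ f : BoundedContinuousFunction (Fin d → ℝ) ℝ,
        Tendsto
          (fun n : ℕ =>
            ∫ ω, f (fun r => ((X n ω r : ℝ) - n * mvec A (ρinfj j) r) / Real.sqrt n)
              ∂(ProbabilityTheory.cond μ {ω | pinf ω = 1}))
          atTop (nhds (∫ x, f x ∂ν)) := by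
  have hB : ∀ j, QT.Blk (fun i => A i * P j) (P j) (ρinfj j) := fun j =>
    QT.mkBlk hA (hsa j) (hidem j) (fun i => hcomm i j) (hρinfj j) (hinvj j) (huniqj j)
  obtain ⟨hpm, h01, hmean⟩ := QT.zo hA hQT P ρinfj hB hsum hcomm hinit hρ₀ hm j pinf has
  set s : Set Ω := {ω | pinf ω = 1} with hs
  have hsm : NullMeasurableSet s μ := hpm.nullMeasurable (measurableSet_singleton (1:ℝ))
  have hind : ∀ F : Ω → ℂ, ∫ ω in s, F ω ∂μ = ∫ ω, (pinf ω : ℂ) * F ω ∂μ := by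
    intro F
    rw [← integral_indicator₀ hsm]
    refine integral_congr_ae ?_
    filter_upwards [h01] with ω hω
    rcases hω with h | h
    · rw [Set.indicator_of_notMem (by simp [hs, h])]; simp [h]
    · rw [Set.indicator_of_mem (by simp [hs, h])]; simp [h]
  have hmus : μ.real s = ((P j * ρ₀).trace).re := by
    have h1 := hind (fun _ => 1)
    simp only [mul_one] at h1
    rw [integral_complex_ofReal, hmean, setIntegral_const] at h1
    have := congrArg Complex.re h1
    simpa using this
  have hne : μ s ≠ 0 := by
    intro h0
    rw [measureReal_def, h0] at hmus
    simp at hmus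
    linarith
  haveI : IsProbabilityMeasure (ProbabilityTheory.cond μ s) :=
    ProbabilityTheory.cond_isProbabilityMeasure hne
  refine QT.levy (ProbabilityTheory.cond μ s)
    (fun n ω r => ((X n ω r : ℝ) - n * mvec A (ρinfj j) r) / Real.sqrt n)
    (fun n => QT.meas_Z hQT _ n) (Cmat (fun i => A i * P j) (ρinfj j) Lr)
    (QT.Cmat_symm _ _ _) (fun l => ?_)
  have h1 := QT.clt_lim hA hQT (hB j) (fun i => hcomm i j) hinit hρ₀ Lr l hLrsupp hLr pinf hpm has
  have h2 := h1.const_mul ((((P j * ρ₀).trace.re)⁻¹ : ℝ) : ℂ)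
  rw [← mul_assoc, ← Complex.ofReal_mul, inv_mul_cancel₀ hp₀.ne', Complex.ofReal_one,
    one_mul] at h2
  refine h2.congr fun n => ?_
  rw [ProbabilityTheory.cond, integral_smul_measure, hind, ← hmus, measureReal_def,
    ENNReal.toReal_inv, Complex.real_smul]
end
end
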